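/- There are no rational numbers x, y satisfying y^2 = 84x^5 + 21, and there are no rational numbers x, y satisfying y^2 = 28x^5 + 15309 (note 15309 = 3^7 · 7). -/

import Mathlib

open NumberField


theorem mult_dvd_of_mul_eq {R : Type*} [CommRing R] [IsDomain R] [UniqueFactorizationMonoid R]
    {Q x y c w : R} (hQ : Prime Q) (hx : x ≠ 0) (hy : y ≠ 0) (hw : w ≠ 0) (hc0 : c ≠ 0)
    (h : x * y = c * w ^ 5) (hc : ¬ Q ∣ c) (hxy : Q ∣ x → Q ∣ y → False) :
    5 ∣ multiplicity Q x := by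
  by_cases h1 : Q ∣ x
  · have h2 : ¬ Q ∣ y := fun h2 => hxy h1 h2
    have f : ∀ z : R, z ≠ 0 → FiniteMultiplicity Q z := fun z hz =>
      FiniteMultiplicity.of_prime_left hQ hz
    have e1 : multiplicity Q (x * y) = multiplicity Q x + multiplicity Q y :=
      multiplicity_mul hQ (f _ (mul_ne_zero hx hy))
    have e2 : multiplicity Q (c * w ^ 5) = multiplicity Q c + multiplicity Q (w ^ 5) :=
      multiplicity_mul hQ (f _ (mul_ne_zero hc0 (pow_ne_zero _ hw)))
    have e3 : multiplicity Q (w ^ 5) = 5 * multiplicity Q w :=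
      (f _ hw).multiplicity_pow hQ
    rw [multiplicity_eq_zero.2 h2] at e1
    rw [multiplicity_eq_zero.2 hc] at e2
    rw [h] at e1
    exact ⟨multiplicity Q w, by omega⟩
  · rw [multiplicity_eq_zero.2 h1]; exact dvd_zero _

theorem selmer_decomp {R : Type*} [CommRing R] [IsDomain R] [UniqueFactorizationMonoid R]
    {ι : Type*} [Fintype ι] [DecidableEq ι] (g : ι → R) (x : R) (hx : x ≠ 0)
    (h : ∀ Q, Prime Q → (∀ i, ¬ Associated Q (g i)) → 5 ∣ multiplicity Q x) :
    ∃ (u : Rˣ) (e : ι → ℕ) (μ : R), x = u * (∏ i, g i ^ e i) * μ ^ 5 := by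
  revert hx h
  refine (wellFounded_dvdNotUnit (α := R)).induction
    (C := fun x => x ≠ 0 → (∀ Q, Prime Q → (∀ i, ¬ Associated Q (g i)) → 5 ∣ multiplicity Q x) →
      ∃ (u : Rˣ) (e : ι → ℕ) (μ : R), x = u * (∏ i, g i ^ e i) * μ ^ 5) x ?_
  intro x ih hx h
  have f : ∀ Q, Prime Q → ∀ z : R, z ≠ 0 → FiniteMultiplicity Q z := fun Q hQ z hz =>
      FiniteMultiplicity.of_prime_left hQ hz
  by_cases hu : IsUnit x
  · obtain ⟨u, rfl⟩ := hu
    exact ⟨u, 0, 1, by simp⟩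
  obtain ⟨P, hPi, hPx⟩ := WfDvdMonoid.exists_irreducible_factor hu hx
  have hP : Prime P := UniqueFactorizationMonoid.irreducible_iff_prime.1 hPi
  by_cases hS : ∃ i, Associated P (g i)
  · obtain ⟨i, hi⟩ := hS
    obtain ⟨y, rfl⟩ := (hi.dvd_iff_dvd_left).1 hPx
    have hgp : Prime (g i) := hi.prime hP
    have hy : y ≠ 0 := right_ne_zero_of_mul hx
    obtain ⟨u, e, μ, he⟩ := ih y ⟨hy, g i, hgp.not_unit, mul_comm _ _⟩ hy (by
      intro Q hQ hQi
      have := h Q hQ hQi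
      rw [multiplicity_mul hQ (f Q hQ _ hx)] at this
      have h0 : ¬ Q ∣ g i := fun hd => hQi i (hQ.associated_of_dvd hgp hd)
      rw [multiplicity_eq_zero.2 h0] at this
      simpa using this)
    refine ⟨u, Function.update e i (e i + 1), μ, ?_⟩
    have : (∏ j, g j ^ (Function.update e i (e i + 1)) j) = g i * ∏ j, g j ^ e j := by
      rw [← Finset.mul_prod_erase _ _ (Finset.mem_univ i),
        ← Finset.mul_prod_erase _ (fun j => g j ^ e j) (Finset.mem_univ i)]
      rw [Function.update_self, pow_succ']
      rw [mul_assoc]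
      congr 2
      apply Finset.prod_congr rfl
      intro j hj
      rw [Function.update_of_ne (Finset.ne_of_mem_erase hj)]
    rw [this, he]; ring
  · push Not at hS
    have h5 := h P hP hS
    have hpos : multiplicity P x ≠ 0 := by
      intro h0
      exact (multiplicity_eq_zero.1 h0) hPx
    have h5' : P ^ 5 ∣ x := by
      refine (pow_dvd_pow P (?_ : 5 ≤ multiplicity P x)).trans (pow_multiplicity_dvd P x)
      omega
    obtain ⟨y, rfl⟩ := h5'
    have hy : y ≠ 0 := right_ne_zero_of_mul hx
    obtain ⟨u, e, μ, he⟩ := ih y ⟨hy, P ^ 5, fun hu' => hP.not_unit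
        ((isUnit_pow_iff (by norm_num)).1 hu'), mul_comm _ _⟩ hy (by
      intro Q hQ hQi
      have := h Q hQ hQi
      rw [multiplicity_mul hQ (f Q hQ _ hx), (f Q hQ _ hP.ne_zero).multiplicity_pow hQ] at this
      omega)
    exact ⟨u, e, P * μ, by rw [he]; ring⟩

/-- units of finite order are fifth powers -/
theorem torsion_fifth {F : Type*} [Field F] [NumberField F] (h4 : ¬ 4 ∣ Module.finrank ℚ F)
    (x : (𝓞 F)ˣ) (hx : x ∈ Units.torsion F) : ∃ w : (𝓞 F)ˣ, x = w ^ 5 := by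
  have hfo : IsOfFinOrder x := hx
  have hn := hfo.orderOf_pos
  by_cases h5 : 5 ∣ orderOf x
  · exfalso
    obtain ⟨k, hk⟩ := h5
    have hk0 : k ≠ 0 := by rintro rfl; omega
    have ho : orderOf (x ^ k) = 5 := by
      rw [orderOf_pow_of_dvd hk0 ⟨5, by rw [hk]; ring⟩, hk]
      exact Nat.mul_div_cancel _ (Nat.pos_of_ne_zero hk0)
    have hp : IsPrimitiveRoot (x ^ k) 5 := ho ▸ IsPrimitiveRoot.orderOf _
    have hp2 : IsPrimitiveRoot (((x ^ k : (𝓞 F)ˣ) : 𝓞 F) : F) 5 :=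
      (IsPrimitiveRoot.coe_units_iff.2 hp).map_of_injective (f := algebraMap (𝓞 F) F)
        (RingOfIntegers.coe_injective)
    apply h4
    have hc := Polynomial.cyclotomic_eq_minpoly_rat hp2 (by norm_num)
    have hd : (minpoly ℚ (((x ^ k : (𝓞 F)ˣ) : 𝓞 F) : F)).natDegree = 4 := by
      rw [← hc, Polynomial.natDegree_cyclotomic]; decide
    rw [← hd, ← IntermediateField.adjoin.finrank (IsIntegral.of_finite ℚ _)]
    exact ⟨_, (Module.finrank_mul_finrank ℚ _ F).symm⟩
  · have hcop : Nat.Coprime 5 (orderOf x) := (Nat.Prime.coprime_iff_not_dvd (by norm_num)).2 h5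
    obtain ⟨m, hm⟩ := exists_pow_eq_self_of_coprime hcop
    exact ⟨x ^ m, by rw [← pow_mul, mul_comm, pow_mul]; exact hm.symm⟩


theorem unit_decomp {F : Type*} [Field F] [NumberField F] (h4 : ¬ 4 ∣ Module.finrank ℚ F)
    {r : ℕ} (hr : Units.rank F ≤ r) (v : Fin r → (𝓞 F)ˣ)
    (hind : ∀ (e : Fin r → ℕ) (w : (𝓞 F)ˣ), ∏ i, v i ^ e i = w ^ 5 → ∀ i, 5 ∣ e i)
    (u : (𝓞 F)ˣ) : ∃ (e : Fin r → ℕ) (w : (𝓞 F)ˣ), (∀ i, e i < 5) ∧ u = (∏ i, v i ^ e i) * w ^ 5 := by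
  have : Fact (Nat.Prime 5) := ⟨by norm_num⟩
  have hall := fun x : (𝓞 F)ˣ => Units.exist_unique_eq_mul_prod F x
  choose g hg hguniq using hall
  have hadd : ∀ x y, (g (x * y)).2 = (g x).2 + (g y).2 := by
    intro x y
    have := hguniq (x * y) ((g x).1 * (g y).1, (g x).2 + (g y).2) (by
      show x * y = ((g x).1 * (g y).1 : Units.torsion F) * ∏ i, (Units.fundSystem F i) ^ ((g x).2 i + (g y).2 i)
      conv_lhs => rw [hg x, hg y]
      simp only [zpow_add, Finset.prod_mul_distrib, Subgroup.coe_mul]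
      exact mul_mul_mul_comm _ _ _ _)
    rw [← this]
  let L : Additive (𝓞 F)ˣ →+ (Fin (Units.rank F) → ZMod 5) :=
    AddMonoidHom.mk' (fun x i => (((g x.toMul).2 i : ℤ) : ZMod 5)) (by
      intro a b
      ext i
      simp [hadd])
  have hker : ∀ x : (𝓞 F)ˣ, L (Additive.ofMul x) = 0 → ∃ w : (𝓞 F)ˣ, x = w ^ 5 := by
    intro x hx
    have hxe := hg x
    rcases hgx : g x with ⟨ζ, f⟩
    rw [hgx] at hxe
    replace hxe : x = ζ * ∏ i, (Units.fundSystem F i) ^ (f i) := hxe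
    have h5 : ∀ i, (5 : ℤ) ∣ f i := by
      intro i
      have h1 := congrFun hx i
      have h2 : (((g x).2 i : ℤ) : ZMod 5) = 0 := h1
      rw [hgx] at h2
      exact (ZMod.intCast_zmod_eq_zero_iff_dvd _ 5).1 h2
    choose k hk using h5
    obtain ⟨z, hz⟩ := torsion_fifth h4 (ζ : (𝓞 F)ˣ) ζ.2
    refine ⟨z * ∏ i, Units.fundSystem F i ^ k i, ?_⟩
    rw [hxe, mul_pow, ← hz, ← Finset.prod_pow]
    congr 1
    apply Finset.prod_congr rfl
    intro i _
    show _ ^ f i = _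
    rw [hk i, mul_comm, zpow_mul]; norm_cast
  have hLprod : ∀ c : Fin r → ZMod 5, L (Additive.ofMul (∏ i, v i ^ (c i).val)) =
      ∑ i, c i • L (Additive.ofMul (v i)) := by
    intro c
    rw [ofMul_prod, map_sum]
    apply Finset.sum_congr rfl
    intro i _
    rw [ofMul_pow, map_nsmul, ← Nat.cast_smul_eq_nsmul (ZMod 5), ZMod.natCast_zmod_val]
  have hli : LinearIndependent (ZMod 5) (fun i => L (Additive.ofMul (v i))) := by
    rw [Fintype.linearIndependent_iff]
    intro c hc i
    rw [← hLprod] at hc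
    obtain ⟨w, hw⟩ := hker _ hc
    have := hind _ w hw i
    rw [← ZMod.val_eq_zero]
    have := ZMod.val_lt (c i)
    omega
  have hspan : Submodule.span (ZMod 5) (Set.range (fun i => L (Additive.ofMul (v i)))) = ⊤ := by
    have h1 := hli.fintype_card_le_finrank
    simp at h1
    apply hli.span_eq_top_of_card_eq_finrank'
    simp; omega
  have hu : L (Additive.ofMul u) ∈ Submodule.span (ZMod 5) (Set.range (fun i => L (Additive.ofMul (v i)))) := by
    rw [hspan]; trivial
  rw [Submodule.mem_span_range_iff_exists_fun] at hu
  obtain ⟨c, hc⟩ := hu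
  rw [← hLprod] at hc
  obtain ⟨w, hw⟩ := hker (u / ∏ i, v i ^ (c i).val) (by rw [ofMul_div, map_sub, hc, sub_self])
  refine ⟨fun i => (c i).val, w, fun i => ZMod.val_lt _, ?_⟩
  rw [← hw]; simp


theorem discr_le_of_basis {F : Type*} [Field F] [NumberField F] {n : ℕ} (b : Module.Basis (Fin n) ℚ F)
    (hb : ∀ i, IsIntegral ℤ (b i)) : |(discr F : ℚ)| ≤ |Algebra.discr ℚ b| := by
  classical
  let e := (integralBasis F).indexEquiv b
  have h1 : Algebra.discr ℚ (b ∘ e) = Algebra.discr ℚ b := by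
    have := Algebra.discr_reindex ℚ b e.symm
    simpa using this
  have h2 := (integralBasis F).toMatrix_map_vecMul (b ∘ e)
  have h3 := Algebra.discr_of_matrix_vecMul (integralBasis F) ((integralBasis F).toMatrix (b ∘ e))
  rw [h2, h1, ← coe_discr] at h3
  have h4 : ∃ P : Matrix _ _ ℤ, (integralBasis F).toMatrix (b ∘ e) = P.map (Int.castRingHom ℚ) := by
    refine ⟨Matrix.of fun i j => (RingOfIntegers.basis F).repr ⟨b (e j), hb _⟩ i, ?_⟩
    ext i j
    have := integralBasis_repr_apply F ⟨b (e j), hb _⟩ i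
    simp only [Module.Basis.toMatrix_apply, Matrix.map_apply, Matrix.of_apply, Function.comp]
    exact this
  obtain ⟨P, hP⟩ := h4
  have h5 : ((integralBasis F).toMatrix (b ∘ e)).det = ((P.det : ℤ) : ℚ) := by
    rw [hP]
    exact (RingHom.map_det _ _).symm
  rw [h5] at h3
  have h6 : Algebra.discr ℚ b ≠ 0 := Algebra.discr_not_zero_of_basis ℚ b
  have h7 : P.det ≠ 0 := by
    intro h0
    rw [h0] at h3
    apply h6; rw [h3]; simp
  rw [h3, abs_mul]
  have h8 : (1 : ℚ) ≤ |((P.det : ℤ) : ℚ) ^ 2| := by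
    have : (1 : ℤ) ≤ |P.det ^ 2| := Int.one_le_abs (pow_ne_zero _ h7)
    exact_mod_cast this
  nlinarith [abs_nonneg ((discr F : ℤ) : ℚ)]

/-- a residue field of prime cardinality makes every element an integer -/
theorem exists_nat_mod {R : Type*} [CommRing R] [IsDedekindDomain R] [Module.Free ℤ R] [Module.Finite ℤ R]
    (P : Ideal R) {p : ℕ} (hp : p.Prime) (hN : Ideal.absNorm P = p) (x : R) :
    ∃ r : ℕ, r < p ∧ x - (r : R) ∈ P := by
  have : Fact p.Prime := ⟨hp⟩
  have hc : Nat.card (R ⧸ P) = p := by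
    rw [← hN, Ideal.absNorm_apply, Submodule.cardQuot_apply]
  have : Finite (R ⧸ P) := Nat.finite_of_card_ne_zero (by rw [hc]; exact hp.ne_zero)
  have hpm : ((p : ℕ) : R ⧸ P) = 0 := by
    have := Ideal.absNorm_mem P
    rw [hN] at this
    have h := Ideal.Quotient.eq_zero_iff_mem.2 this
    simpa using h
  have hnt : Nontrivial (R ⧸ P) := by
    rw [← Finite.one_lt_card_iff_nontrivial, hc]; exact hp.one_lt
  have hch : CharP (R ⧸ P) p := by
    have h1 : ringChar (R ⧸ P) ∣ p := ringChar.dvd hpm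
    rcases (Nat.dvd_prime hp).1 h1 with h | h
    · exfalso
      have := CharP.ringChar_ne_one (R := R ⧸ P)
      exact this h
    · rw [← h]; exact ringChar.charP _
  let φ := ZMod.castHom (dvd_refl p) (R ⧸ P)
  have hinj : Function.Injective φ := φ.injective
  have hsurj : Function.Surjective φ := by
    have : Function.Bijective φ := by
      rw [Nat.bijective_iff_injective_and_card]
      exact ⟨hinj, by rw [hc, Nat.card_zmod]⟩
    exact this.2
  obtain ⟨z, hz⟩ := hsurj (Ideal.Quotient.mk P x)
  refine ⟨z.val, ZMod.val_lt z, ?_⟩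
  rw [← Ideal.Quotient.eq_zero_iff_mem, map_sub, ← hz, map_natCast]
  have h9 : φ z = ((z.val : ℕ) : R ⧸ P) := by
    rw [← map_natCast φ z.val, ZMod.natCast_zmod_val]
  rw [h9, sub_self]

theorem principal_of_prime_norm {F : Type*} [Field F] [NumberField F] (P : Ideal (𝓞 F)) (hP : P.IsPrime)
    (g : 𝓞 F) (hg : g ∈ P) (hN : (Algebra.norm ℤ g).natAbs.Prime) : P.IsPrincipal := by
  have h1 : (Ideal.span {g}).IsPrime := by
    apply Ideal.isPrime_of_irreducible_absNorm
    rw [Ideal.absNorm_span_singleton]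
    exact hN
  have h0 : g ≠ 0 := by
    rintro rfl
    simp at hN
    exact Nat.not_prime_zero hN
  have h2 : (Ideal.span {g}).IsMaximal := h1.isMaximal (by simpa using h0)
  have h3 : Ideal.span {g} = P := h2.eq_of_le hP.ne_top ((Ideal.span_singleton_le_iff_mem _).2 hg)
  rw [← h3]
  exact ⟨⟨g, rfl⟩⟩

theorem principal_of_norm_eq {F : Type*} [Field F] [NumberField F] (P : Ideal (𝓞 F))
    (g : 𝓞 F) (hg : g ∈ P) (h0 : g ≠ 0) (hN : (Algebra.norm ℤ g).natAbs = Ideal.absNorm P) :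
    P.IsPrincipal := by
  have h3 : Ideal.span {g} = P := by
    have hd : P ∣ Ideal.span {g} := Ideal.dvd_span_singleton.2 hg
    obtain ⟨J, hJ⟩ := hd
    have h1 : Ideal.absNorm (Ideal.span {g}) = Ideal.absNorm P * Ideal.absNorm J := by
      rw [hJ, map_mul]
    rw [Ideal.absNorm_span_singleton, hN] at h1
    have h2 : Ideal.absNorm P ≠ 0 := by
      rw [← hN, Int.natAbs_ne_zero]
      exact Algebra.norm_ne_zero_iff.2 h0
    have h3 : Ideal.absNorm J = 1 := by
      have : Ideal.absNorm P * Ideal.absNorm J = Ideal.absNorm P * 1 := by omega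
      exact Nat.eq_of_mul_eq_mul_left (Nat.pos_of_ne_zero h2) this
    rw [hJ, Ideal.absNorm_eq_one_iff.1 h3, Ideal.mul_top]
  rw [← h3]
  exact ⟨⟨g, rfl⟩⟩


theorem quad_leftMul {F : Type*} [Field F] [NumberField F] (b : Module.Basis (Fin 2) ℚ F) (ω : F) (k : ℤ)
    (hω : ω ^ 2 = ω + k) (hb0 : b 0 = 1) (hb1 : b 1 = ω) (x y : ℚ) :
    Algebra.leftMulMatrix b ((x : F) + y * ω) = !![x, k * y; y, x + y] := by
  have e0 : (x : F) + y * ω = x • b 0 + y • b 1 := by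
    rw [hb0, hb1, Algebra.smul_def, Algebra.smul_def]; simp
  have e1 : ((x : F) + y * ω) * ω = (k * y) • b 0 + (x + y) • b 1 := by
    rw [hb0, hb1, Algebra.smul_def, Algebra.smul_def]; simp
    linear_combination (y : F) * hω
  have key : ∀ c d : ℚ, b.repr (c • b 0 + d • b 1) = Finsupp.single 0 c + Finsupp.single 1 d := by
    intro c d
    rw [map_add, map_smul, map_smul, b.repr_self, b.repr_self]; simp
  ext i j
  rw [Algebra.leftMulMatrix_eq_repr_mul]
  fin_cases j
  · show (b.repr (_ * b 0)) i = _
    rw [hb0, mul_one, e0, key]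
    fin_cases i <;> simp
  · show (b.repr (_ * b 1)) i = _
    rw [hb1, e1, key]
    fin_cases i <;> simp

theorem quad_trace {F : Type*} [Field F] [NumberField F] (b : Module.Basis (Fin 2) ℚ F) (ω : F) (k : ℤ)
    (hω : ω ^ 2 = ω + k) (hb0 : b 0 = 1) (hb1 : b 1 = ω) (x y : ℚ) :
    Algebra.trace ℚ F ((x : F) + y * ω) = 2 * x + y := by
  rw [Algebra.trace_eq_matrix_trace b, quad_leftMul b ω k hω hb0 hb1, Matrix.trace_fin_two]
  simp; ring

theorem quad_discr {F : Type*} [Field F] [NumberField F] (b : Module.Basis (Fin 2) ℚ F) (ω : F) (k : ℤ)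
    (hω : ω ^ 2 = ω + k) (hb0 : b 0 = 1) (hb1 : b 1 = ω) :
    Algebra.discr ℚ b = 1 + 4 * k := by
  have t := quad_trace b ω k hω hb0 hb1
  have t00 : Algebra.trace ℚ F (1 * 1) = 2 := by
    have := t 1 0; simpa using this
  have t01 : Algebra.trace ℚ F (1 * ω) = 1 := by
    have := t 0 1; simpa using this
  have t10 : Algebra.trace ℚ F (ω * 1) = 1 := by
    have := t 0 1; simpa using this
  have t11 : Algebra.trace ℚ F (ω * ω) = 1 + 2 * k := by
    have e : ω * ω = ((k : ℚ) : F) + ((1 : ℚ) : F) * ω := by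
      push_cast; linear_combination hω
    rw [e, t]; ring
  rw [Algebra.discr_def, Matrix.det_fin_two]
  simp only [Algebra.traceMatrix_apply, Algebra.traceForm_apply, hb0, hb1, t00, t01, t10, t11]
  ring

theorem quad_pid {F : Type*} [Field F] [NumberField F] (b : Module.Basis (Fin 2) ℚ F) (ω : F) (k : ℤ)
    (hω : ω ^ 2 = ω + k) (hb0 : b 0 = 1) (hb1 : b 1 = ω) (hintg : IsIntegral ℤ ω)
    (hk0 : 0 < k) (hk : k ≤ 5) (hodd : Odd k) : IsPrincipalIdealRing (𝓞 F) := by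
  have hfin : Module.finrank ℚ F = 2 := by
    rw [Module.finrank_eq_card_basis b]; simp
  have hd : |(discr F : ℝ)| ≤ 21 := by
    have h1 := discr_le_of_basis b (by
      intro i; fin_cases i
      · simpa [hb0] using isIntegral_one
      · simpa [hb1] using hintg)
    rw [quad_discr b ω k hω hb0 hb1] at h1
    have h2 : |(1 + 4 * k : ℚ)| ≤ 21 := by
      rw [abs_le]
      have a1 : (0 : ℚ) < k := by exact_mod_cast hk0
      have a2 : (k : ℚ) ≤ 5 := by exact_mod_cast hk
      constructor <;> linarith
    exact_mod_cast h1.trans h2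
  have hr2 : InfinitePlace.nrComplexPlaces F ≤ 1 := by
    have := InfinitePlace.card_add_two_mul_card_eq_rank F
    omega
  apply RingOfIntegers.isPrincipalIdealRing_of_isPrincipal_of_norm_le_of_isPrime
  intro I hI hIn
  have hlt : (Ideal.absNorm (I : Ideal (𝓞 F)) : ℝ) < 3 := by
    refine lt_of_le_of_lt hIn ?_
    have h1 : (4 / Real.pi) ^ InfinitePlace.nrComplexPlaces F ≤ 4 / 3.14 := by
      have h3 : (4 / Real.pi) ≤ 4 / 3.14 := by
        apply div_le_div_of_nonneg_left <;> linarith [Real.pi_gt_d2]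
      have h4 : 1 ≤ 4 / Real.pi := by
        rw [le_div_iff₀ Real.pi_pos]; linarith [Real.pi_lt_d2]
      calc _ ≤ (4 / Real.pi) ^ 1 := pow_le_pow_right₀ h4 hr2
        _ ≤ _ := by rw [pow_one]; exact h3
    have h2 : √|(discr F : ℝ)| ≤ 4.6 := by
      rw [Real.sqrt_le_left (by norm_num)]; exact hd.trans (by norm_num)
    rw [hfin]
    have h5 : ((Nat.factorial 2 : ℕ) : ℝ) / ((2 : ℕ) : ℝ) ^ 2 * √|(discr F : ℝ)| ≤ 2.3 := by
      norm_num [Nat.factorial]; norm_num at h2; linarith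
    calc _ ≤ (4 / 3.14 : ℝ) * 2.3 := by
          apply mul_le_mul h1 h5 (by positivity) (by norm_num)
      _ < 3 := by norm_num
  have hlt' : Ideal.absNorm (I : Ideal (𝓞 F)) < 3 := by exact_mod_cast hlt
  have hne0 := Ideal.absNorm_ne_zero_of_nonZeroDivisors I
  have hne1 : Ideal.absNorm (I : Ideal (𝓞 F)) ≠ 1 := fun h => hI.ne_top (Ideal.absNorm_eq_one_iff.1 h)
  have h2 : Ideal.absNorm (I : Ideal (𝓞 F)) = 2 := by omega
  exfalso
  let W : 𝓞 F := ⟨ω, hintg⟩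
  have hW : W ^ 2 = W + k := by
    apply FaithfulSMul.algebraMap_injective (𝓞 F) F
    rw [map_pow, map_add, map_intCast]; exact hω
  obtain ⟨r, hr, hmem⟩ := exists_nat_mod (I : Ideal (𝓞 F)) Nat.prime_two h2 W
  have h2m : ((2 : ℕ) : 𝓞 F) ∈ (I : Ideal (𝓞 F)) := by
    have := Ideal.absNorm_mem (I : Ideal (𝓞 F))
    rwa [h2] at this
  apply hI.ne_top
  rw [Ideal.eq_top_iff_one]
  obtain ⟨j, hj⟩ := hodd
  have hj' : (k : 𝓞 F) = 2 * j + 1 := by rw [hj]; push_cast; ring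
  have hprod : (W - r) * (W + r - 1) ∈ (I : Ideal (𝓞 F)) := Ideal.mul_mem_right _ _ hmem
  have : (1 : 𝓞 F) = (W - r) * (W + r - 1) - ((2 : ℕ) : 𝓞 F) * j + (r : 𝓞 F) * (r - 1) := by
    push_cast
    linear_combination - hW - hj'
  rw [this]
  refine Ideal.add_mem _ (Ideal.sub_mem _ hprod (Ideal.mul_mem_right _ _ h2m)) ?_
  interval_cases r <;> simp

theorem quad_rank {F : Type*} [Field F] [NumberField F] (b : Module.Basis (Fin 2) ℚ F) :
    Units.rank F ≤ 1 := by
  have hfin : Module.finrank ℚ F = 2 := by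
    rw [Module.finrank_eq_card_basis b]; simp
  have h1 := InfinitePlace.card_add_two_mul_card_eq_rank F
  have h2 := InfinitePlace.card_eq_nrRealPlaces_add_nrComplexPlaces F
  unfold Units.rank
  omega

theorem quad_exists (k : ℤ) (hk : ∀ x : ℚ, x ^ 2 ≠ x + k) :
    ∃ (F : Type) (_ : Field F) (_ : NumberField F) (b : Module.Basis (Fin 2) ℚ F) (ω : F),
      ω ^ 2 = ω + k ∧ b 0 = 1 ∧ b 1 = ω ∧ IsIntegral ℤ ω := by
  let f : Polynomial ℚ := .X ^ 2 - .X - .C (k : ℚ)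
  have hdeg : f.natDegree = 2 := by simp only [f]; compute_degree!
  have hmon : f.Monic := by simp only [f]; monicity!
  have hirr : Irreducible f := by
    rw [Polynomial.irreducible_iff_roots_eq_zero_of_degree_le_three (by omega) (by omega)]
    rw [Multiset.eq_zero_iff_forall_notMem]
    intro x hx
    have := Polynomial.isRoot_of_mem_roots hx
    simp [f] at this
    exact hk x (by linarith)
  have : Fact (Irreducible f) := ⟨hirr⟩
  let pb := AdjoinRoot.powerBasis hirr.ne_zero
  have hfd : FiniteDimensional ℚ (AdjoinRoot f) := pb.finite
  have hnf : NumberField (AdjoinRoot f) := { to_charZero := charZero_of_injective_algebraMap (algebraMap ℚ _).injective, to_finiteDimensional := hfd }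
  have hdim : pb.dim = 2 := by
    rw [← hdeg]; rfl
  have hroot : (AdjoinRoot.root f) ^ 2 = AdjoinRoot.root f + (k : AdjoinRoot f) := by
    have := AdjoinRoot.eval₂_root f
    rw [Polynomial.eval₂_sub, Polynomial.eval₂_sub, Polynomial.eval₂_X_pow, Polynomial.eval₂_X,
      Polynomial.eval₂_C, map_intCast] at this
    linear_combination this
  refine ⟨AdjoinRoot f, inferInstance, hnf, pb.basis.reindex (finCongr hdim), AdjoinRoot.root f,
    hroot, ?_, ?_, ?_⟩
  · simp [pb]
  · simp [pb]
  · refine ⟨.X ^ 2 - .X - .C k, by monicity!, ?_⟩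
    rw [Polynomial.eval₂_sub, Polynomial.eval₂_sub, Polynomial.eval₂_X_pow, Polynomial.eval₂_X,
      Polynomial.eval₂_C, eq_intCast, hroot]
    ring

theorem quad_exists_all (k : ℤ) (hk : ∀ x : ℚ, x ^ 2 ≠ x + k) (hk0 : 0 < k) (hk5 : k ≤ 5) (hodd : Odd k) :
    ∃ (F : Type) (_ : Field F) (_ : NumberField F) (b : Module.Basis (Fin 2) ℚ F) (W : 𝓞 F),
      W ^ 2 = W + k ∧ b 0 = 1 ∧ b 1 = algebraMap (𝓞 F) F W ∧ IsPrincipalIdealRing (𝓞 F) := by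
  obtain ⟨F, _, _, b, ω, hω, hb0, hb1, hintg⟩ := quad_exists k hk
  obtain ⟨W, hW⟩ : ∃ W : 𝓞 F, algebraMap (𝓞 F) F W = ω := ⟨⟨ω, hintg⟩, rfl⟩
  refine ⟨F, inferInstance, inferInstance, b, W, ?_, hb0, hW ▸ hb1, quad_pid b ω k hω hb0 hb1 hintg hk0 hk5 hodd⟩
  apply FaithfulSMul.algebraMap_injective (𝓞 F) F
  rw [map_pow, map_add, map_intCast, hW]; exact hω


theorem quad_coords {F : Type*} [Field F] [NumberField F] (b : Module.Basis (Fin 2) ℚ F) (ω : F)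
    (hb0 : b 0 = 1) (hb1 : b 1 = ω) (z : F) : ∃ p q : ℚ, z = (p : F) + q * ω := by
  refine ⟨b.repr z 0, b.repr z 1, ?_⟩
  have := b.sum_repr z
  rw [Fin.sum_univ_two, hb0, hb1, Algebra.smul_def, Algebra.smul_def] at this
  simpa using this.symm

theorem quad_coords_inj {F : Type*} [Field F] [NumberField F] (b : Module.Basis (Fin 2) ℚ F) (ω : F)
    (hb0 : b 0 = 1) (hb1 : b 1 = ω) {p q p' q' : ℚ} (h : (p : F) + q * ω = (p' : F) + q' * ω) :
    p = p' ∧ q = q' := by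
  have e0 : ∀ x y : ℚ, (x : F) + y * ω = x • b 0 + y • b 1 := by
    intro x y
    rw [hb0, hb1, Algebra.smul_def, Algebra.smul_def]; simp
  have key : ∀ c d : ℚ, b.repr (c • b 0 + d • b 1) = Finsupp.single 0 c + Finsupp.single 1 d := by
    intro c d
    rw [map_add, map_smul, map_smul, b.repr_self, b.repr_self]; simp
  rw [e0, e0] at h
  have h2 := congrArg b.repr h
  rw [key, key] at h2
  constructor
  · have := DFunLike.congr_fun h2 0
    simpa using this
  · have := DFunLike.congr_fun h2 1
    simpa using this

theorem quad_int {F : Type*} [Field F] [NumberField F] (b : Module.Basis (Fin 2) ℚ F) (ω : F) (k : ℤ)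
    (hω : ω ^ 2 = ω + k) (hb0 : b 0 = 1) (hb1 : b 1 = ω) {p q : ℚ} (h : IsIntegral ℤ ((p : F) + q * ω)) :
    ∃ T N : ℤ, 2 * p + q = T ∧ p ^ 2 + p * q - k * q ^ 2 = N := by
  have h1 : IsIntegral ℤ (Algebra.trace ℚ F ((p : F) + q * ω)) := Algebra.isIntegral_trace h
  have h2 : IsIntegral ℤ (Algebra.norm ℚ ((p : F) + q * ω)) := Algebra.isIntegral_norm ℚ h
  obtain ⟨T, hT⟩ := IsIntegrallyClosed.isIntegral_iff.1 h1
  obtain ⟨N, hN⟩ := IsIntegrallyClosed.isIntegral_iff.1 h2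
  refine ⟨T, N, ?_, ?_⟩
  · rw [quad_trace b ω k hω hb0 hb1] at hT
    simpa using hT.symm
  · rw [Algebra.norm_eq_matrix_det b, quad_leftMul b ω k hω hb0 hb1, Matrix.det_fin_two] at hN
    simp at hN
    rw [hN]; ring

theorem rat_int_of_sq {k : ℤ} (hk : Squarefree k) {q : ℚ} {n : ℤ} (h : k * q ^ 2 = n) : ∃ m : ℤ, q = m := by
  have hd : (q.den : ℤ) ≠ 0 := by exact_mod_cast q.den_ne_zero
  have h1 : k * q.num ^ 2 = n * (q.den : ℤ) ^ 2 := by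
    have : (k : ℚ) * (q.num / q.den) ^ 2 = n := by rw [Rat.num_div_den]; exact h
    have hd' : (q.den : ℚ) ≠ 0 := by exact_mod_cast q.den_ne_zero
    field_simp at this
    rw [mul_comm n]
    exact_mod_cast this
  have h2 : ((q.den : ℤ)) ^ 2 ∣ k * q.num ^ 2 := ⟨n, by rw [h1]; ring⟩
  have h3 : IsCoprime ((q.den : ℤ) ^ 2) (q.num ^ 2) := by
    apply IsCoprime.pow
    rw [Int.isCoprime_iff_gcd_eq_one]
    have := q.reduced
    rw [Int.gcd_comm]
    exact this
  have h4 : ((q.den : ℤ)) ^ 2 ∣ k := h3.dvd_of_dvd_mul_right h2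
  rw [pow_two] at h4
  have h5 := hk _ h4
  have h6 : q.den = 1 := by
    have := Int.isUnit_iff.1 h5
    omega
  exact ⟨q.num, (Rat.coe_int_num_of_den_eq_one h6).symm⟩

theorem quad_pow5 {F : Type*} [Field F] (ω : F) (k : ℤ) (hω : ω ^ 2 = ω + k) (p q : F) :
    (p + q * ω) ^ 5 =
      (p ^ 5 + 10 * k * p ^ 3 * q ^ 2 + 10 * k * p ^ 2 * q ^ 3 + 5 * (k + k ^ 2) * p * q ^ 4
        + (k + 2 * k ^ 2) * q ^ 5) +
      (5 * p ^ 4 * q + 10 * p ^ 3 * q ^ 2 + 10 * (1 + k) * p ^ 2 * q ^ 3 + 5 * (1 + 2 * k) * p * q ^ 4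
        + (1 + 3 * k + k ^ 2) * q ^ 5) * ω := by
  have h3 : ω ^ 3 = (1 + k) * ω + k := by
    linear_combination (ω + 1) * hω
  have h4 : ω ^ 4 = (1 + 2 * k) * ω + (k + k ^ 2) := by
    linear_combination ω * h3 + (1 + k) * hω
  have h5 : ω ^ 5 = (1 + 3 * k + k ^ 2) * ω + (k + 2 * k ^ 2) := by
    linear_combination ω * h4 + (1 + 2 * k) * hω
  linear_combination 10 * p ^ 3 * q ^ 2 * hω + 10 * p ^ 2 * q ^ 3 * h3 + 5 * p * q ^ 4 * h4 + q ^ 5 * h5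

theorem pow_indep_one {G : Type*} [CommGroup G] (v : G) (hv : ¬ ∃ w : G, v = w ^ 5)
    (e : ℕ) (w : G) (h : v ^ e = w ^ 5) : 5 ∣ e := by
  by_contra h5
  have hc : IsCoprime (e : ℤ) 5 := by
    rw [Int.isCoprime_iff_gcd_eq_one]
    have : Nat.Coprime e 5 := ((Nat.Prime.coprime_iff_not_dvd (by norm_num)).2 h5).symm
    exact this
  obtain ⟨a, c, hac⟩ := hc
  apply hv
  refine ⟨w ^ a * v ^ c, ?_⟩
  have h' : v ^ (e : ℤ) = w ^ (5 : ℤ) := by exact_mod_cast h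
  calc v = v ^ (a * e + c * 5) := by rw [hac, zpow_one]
    _ = (v ^ (e : ℤ)) ^ a * (v ^ c) ^ (5 : ℤ) := by rw [zpow_add, ← zpow_mul, ← zpow_mul, mul_comm a]
    _ = _ := by
      rw [h', ← zpow_mul, mul_pow, mul_comm (5 : ℤ) a, zpow_mul]; norm_cast


theorem K_eps_not_fifth {F : Type*} [Field F] [NumberField F] (b : Module.Basis (Fin 2) ℚ F) (W : 𝓞 F)
    (hW : W ^ 2 = W + (5 : ℤ)) (hb0 : b 0 = 1) (hb1 : b 1 = algebraMap (𝓞 F) F W)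
    (w : 𝓞 F) (h : 2 + W = w ^ 5) : False := by
  have hω : (algebraMap (𝓞 F) F W) ^ 2 = algebraMap (𝓞 F) F W + ((5 : ℤ) : F) := by
    rw [← map_pow, hW, map_add, map_intCast]
  obtain ⟨p, q, hpq⟩ := quad_coords b _ hb0 hb1 (algebraMap (𝓞 F) F w)
  have hintg : IsIntegral ℤ ((p : F) + q * algebraMap (𝓞 F) F W) := hpq ▸ RingOfIntegers.isIntegral_coe w
  obtain ⟨T, N, hT, hN⟩ := quad_int b _ 5 hω hb0 hb1 hintg
  have h1 : ((2 : ℚ) : F) + ((1 : ℚ) : F) * algebraMap (𝓞 F) F W = (algebraMap (𝓞 F) F w) ^ 5 := by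
    rw [← map_pow, ← h, map_add, map_ofNat]; push_cast; ring
  rw [hpq, quad_pow5 _ 5 hω] at h1
  have h2 : _ ∧ _ := quad_coords_inj b _ hb0 hb1 (p := 2) (q := 1)
    (p' := p ^ 5 + 10 * 5 * p ^ 3 * q ^ 2 + 10 * 5 * p ^ 2 * q ^ 3 + 5 * (5 + 5 ^ 2) * p * q ^ 4
        + (5 + 2 * 5 ^ 2) * q ^ 5)
    (q' := 5 * p ^ 4 * q + 10 * p ^ 3 * q ^ 2 + 10 * (1 + 5) * p ^ 2 * q ^ 3 + 5 * (1 + 2 * 5) * p * q ^ 4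
        + (1 + 3 * 5 + 5 ^ 2) * q ^ 5) (by rw [h1]; push_cast; ring)
  obtain ⟨hX, hY⟩ := h2
  have hN5 : (N : ℚ) ^ 5 = 1 := by
    rw [← hN]
    have : ∀ X Y : ℚ, X = 2 → Y = 1 → X ^ 2 + X * Y - 5 * Y ^ 2 = 1 := by
      rintro X Y rfl rfl; norm_num
    rw [← this _ _ hX.symm hY.symm]; push_cast; ring
  have hN1 : N = 1 := by
    have h5 : N ^ 5 = 1 := by exact_mod_cast hN5
    have hu : IsUnit N := IsUnit.of_mul_eq_one (N ^ 4) (by rw [← h5]; ring)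
    rcases Int.isUnit_iff.1 hu with h | h
    · exact h
    · rw [h] at h5; norm_num at h5
  have hT5 : (T : ℚ) ^ 5 - 5 * T ^ 3 * N + 5 * T * N ^ 2 = 5 := by
    rw [← hT, ← hN]
    push_cast
    linear_combination -2 * hX - hY
  rw [hN1] at hT5
  have hT6 : T ^ 5 - 5 * T ^ 3 + 5 * T = 5 := by
    have : (T : ℚ) ^ 5 - 5 * T ^ 3 + 5 * T = 5 := by
      push_cast at hT5; linear_combination hT5
    exact_mod_cast this
  have hd : (5 : ℤ) ∣ T := by
    have : (5 : ℤ) ∣ T ^ 5 := ⟨1 + T ^ 3 - T, by linarith⟩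
    exact Int.Prime.dvd_pow' (by norm_num) this
  obtain ⟨s, rfl⟩ := hd
  have : (5 : ℤ) * (125 * s ^ 5 - 25 * s ^ 3 + s) = 1 := by linarith
  omega

theorem K_units {F : Type*} [Field F] [NumberField F] (b : Module.Basis (Fin 2) ℚ F) (W : 𝓞 F)
    (hW : W ^ 2 = W + (5 : ℤ)) (hb0 : b 0 = 1) (hb1 : b 1 = algebraMap (𝓞 F) F W)
    (u : (𝓞 F)ˣ) : ∃ (i : ℕ) (w : 𝓞 F), i < 5 ∧ (u : 𝓞 F) = (2 + W) ^ i * w ^ 5 := by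
  have hfin : Module.finrank ℚ F = 2 := by
    rw [Module.finrank_eq_card_basis b]; simp
  let ε : (𝓞 F)ˣ := ⟨2 + W, 3 - W, by push_cast at hW; linear_combination -hW,
    by push_cast at hW; linear_combination -hW⟩
  obtain ⟨e, w, he, hu⟩ := unit_decomp (F := F) (by rw [hfin]; norm_num) (quad_rank b) (fun _ : Fin 1 => ε)
    (by
      intro e w h i
      rw [Fin.prod_univ_one] at h
      have := pow_indep_one ε (by
        rintro ⟨w, hw⟩
        refine K_eps_not_fifth b W hW hb0 hb1 (w : 𝓞 F) ?_
        have := congrArg (fun z : (𝓞 F)ˣ => (z : 𝓞 F)) hw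
        simpa [ε] using this) (e 0) w h
      rwa [Subsingleton.elim i 0]) u
  refine ⟨e 0, w, he 0, ?_⟩
  rw [hu, Fin.prod_univ_one]
  simp [ε]

theorem int_bezout_prime {R : Type*} [CommRing R] {Q : R} (hQ : Prime Q) {a c : ℤ} (h : IsCoprime a c)
    (ha : Q ∣ (a : R)) (hc : Q ∣ (c : R)) : False := by
  obtain ⟨x, y, hxy⟩ := h
  apply hQ.not_isUnit
  apply isUnit_of_dvd_one
  have : (1 : R) = x * a + y * c := by
    have := congrArg (Int.cast : ℤ → R) hxy
    push_cast at this
    exact this.symm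
  rw [this]
  exact dvd_add (ha.mul_left _) (hc.mul_left _)

theorem K_decomp {F : Type*} [Field F] [NumberField F] (b : Module.Basis (Fin 2) ℚ F) (W : 𝓞 F)
    (hW : W ^ 2 = W + (5 : ℤ)) (hb0 : b 0 = 1) (hb1 : b 1 = algebraMap (𝓞 F) F W)
    [IsPrincipalIdealRing (𝓞 F)] (c p q : ℤ) (hpq : IsCoprime p q) (hcp : IsCoprime c p) (hp : p ≠ 0)
    (hq : q ≠ 0) (z : F) (hz : z * (c - z) * q ^ 5 = - p ^ 5) :
    ∃ (i : ℕ) (α : F), i < 5 ∧ z = (2 + algebraMap (𝓞 F) F W) ^ i * α ^ 5 := by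
  obtain ⟨A, ⟨B, hB0⟩, hAB, hz'⟩ := IsFractionRing.exists_reduced_fraction (A := 𝓞 F) z
  have hB : B ≠ 0 := nonZeroDivisors.ne_zero hB0
  have hzAB : z = algebraMap (𝓞 F) F A / algebraMap (𝓞 F) F B := by
    rw [← hz', IsFractionRing.mk'_eq_div]
  have hBF : algebraMap (𝓞 F) F B ≠ 0 := by
    simpa using hB
  have key : A * ((c * B - A) * q ^ 5) = (-B ^ 2) * p ^ 5 := by
    apply FaithfulSMul.algebraMap_injective (𝓞 F) F
    rw [hzAB] at hz
    field_simp at hz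
    simp only [map_mul, map_sub, map_neg, map_pow, map_intCast]
    linear_combination hz
  have hpO : (p : 𝓞 F) ≠ 0 := by exact_mod_cast hp
  have hqO : (q : 𝓞 F) ≠ 0 := by exact_mod_cast hq
  have hne : A * ((c * B - A) * q ^ 5) ≠ 0 := by
    rw [key]
    exact mul_ne_zero (neg_ne_zero.2 (pow_ne_zero _ hB)) (pow_ne_zero _ hpO)
  have hA : A ≠ 0 := left_ne_zero_of_mul hne
  have hC : (c * B - A) ≠ 0 := left_ne_zero_of_mul (right_ne_zero_of_mul hne)
  have hAB' : ∀ Q : 𝓞 F, Prime Q → Q ∣ A → Q ∣ B → False := fun Q hQ h1 h2 =>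
    hQ.not_isUnit (hAB h1 h2)
  have hAm : ∀ Q : 𝓞 F, Prime Q → (∀ i : Fin 0, ¬ Associated Q ((fun _ => 1 : Fin 0 → 𝓞 F) i)) → 5 ∣ multiplicity Q A := by
    intro Q hQ _
    by_cases hQA : Q ∣ A
    · have hQB : ¬ Q ∣ B := fun h => hAB' Q hQ hQA h
      refine mult_dvd_of_mul_eq hQ hA (right_ne_zero_of_mul hne) hpO (neg_ne_zero.2 (pow_ne_zero _ hB)) key ?_ ?_
      · rw [dvd_neg]; exact fun h => hQB (hQ.dvd_of_dvd_pow h)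
      · intro _ h
        have hQp : Q ∣ (p : 𝓞 F) := by
          have : Q ∣ (-B ^ 2) * p ^ 5 := key ▸ (hQA.mul_right _)
          rcases hQ.dvd_or_dvd this with h | h
          · rw [dvd_neg] at h; exact absurd (hQ.dvd_of_dvd_pow h) hQB
          · exact hQ.dvd_of_dvd_pow h
        rcases hQ.dvd_or_dvd h with h | h
        · have h1 : Q ∣ c * B := by
            have := dvd_add h hQA
            simpa using this
          rcases hQ.dvd_or_dvd h1 with h | h
          · exact int_bezout_prime hQ hcp h hQp
          · exact hQB h
        · exact int_bezout_prime hQ hpq hQp (hQ.dvd_of_dvd_pow h)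
    · rw [multiplicity_eq_zero.2 hQA]; exact dvd_zero _
  have hBm : ∀ Q : 𝓞 F, Prime Q → (∀ i : Fin 0, ¬ Associated Q ((fun _ => 1 : Fin 0 → 𝓞 F) i)) → 5 ∣ multiplicity Q B := by
    intro Q hQ _
    by_cases hQB : Q ∣ B
    · have hQA : ¬ Q ∣ A := fun h => hAB' Q hQ h hQB
      have h5 : 5 ∣ multiplicity Q (B ^ 2) := by
        refine mult_dvd_of_mul_eq (y := (p : 𝓞 F) ^ 5) (c := -(A * (c * B - A))) (w := (q : 𝓞 F)) hQ
          (pow_ne_zero _ hB) (pow_ne_zero _ hpO) hqO (neg_ne_zero.2 (mul_ne_zero hA hC))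
          (by linear_combination key) ?_ ?_
        · rw [dvd_neg]
          intro h
          rcases hQ.dvd_or_dvd h with h | h
          · exact hQA h
          · apply hQA
            have := dvd_sub (hQB.mul_left (c : 𝓞 F)) h
            simpa using this
        · intro _ h
          have hQp := hQ.dvd_of_dvd_pow h
          have h2 : Q ∣ A * ((c * B - A) * q ^ 5) := by
            rw [key]; exact h.mul_left _
          rcases hQ.dvd_or_dvd h2 with h | h
          · exact hQA h
          rcases hQ.dvd_or_dvd h with h | h
          · apply hQA
            have := dvd_sub (hQB.mul_left (c : 𝓞 F)) h
            simpa using this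
          · exact int_bezout_prime hQ hpq hQp (hQ.dvd_of_dvd_pow h)
      rw [(FiniteMultiplicity.of_prime_left hQ hB).multiplicity_pow hQ] at h5
      omega
    · rw [multiplicity_eq_zero.2 hQB]; exact dvd_zero _
  obtain ⟨u, _, μ, hu⟩ := selmer_decomp _ A hA hAm
  obtain ⟨u', _, μ', hu'⟩ := selmer_decomp _ B hB hBm
  simp only [Finset.univ_eq_empty, Finset.prod_empty, mul_one] at hu hu'
  obtain ⟨i, w, hi, hw⟩ := K_units b W hW hb0 hb1 (u / u')
  refine ⟨i, algebraMap (𝓞 F) F (w * μ) / algebraMap (𝓞 F) F μ', hi, ?_⟩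
  have huu : (u : 𝓞 F) = ((u / u' : (𝓞 F)ˣ) : 𝓞 F) * u' := by
    rw [← Units.val_mul, div_mul_cancel]
  have hμ' : μ' ≠ 0 := by
    rintro rfl
    apply hB; rw [hu']; simp
  have hμF : algebraMap (𝓞 F) F μ' ≠ 0 := by simpa using hμ'
  rw [hzAB, div_pow, ← mul_div_assoc, div_eq_div_iff hBF (pow_ne_zero _ hμF)]
  have : A * μ' ^ 5 = (2 + W) ^ i * (w * μ) ^ 5 * B := by
    rw [hu, hu', huu, hw]; ring
  have := congrArg (algebraMap (𝓞 F) F) this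
  simp only [map_mul, map_pow, map_add, map_ofNat] at this ⊢
  exact this


/-- rational part of the fifth power of `m + n ω`, `ω² = ω + 5` -/
def XX (m n : ℤ) : ℤ := m ^ 5 + 50 * m ^ 3 * n ^ 2 + 50 * m ^ 2 * n ^ 3 + 150 * m * n ^ 4 + 55 * n ^ 5
/-- coefficient of `ω` in the fifth power of `m + n ω`, `ω² = ω + 5` -/
def YY (m n : ℤ) : ℤ := 5 * m ^ 4 * n + 10 * m ^ 3 * n ^ 2 + 60 * m ^ 2 * n ^ 3 + 55 * m * n ^ 4 + 41 * n ^ 5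

theorem rat_int_of_pow5 {c : ℤ} (hc : c = 1 ∨ c = 3) {q : ℚ} {n : ℤ} (h : c * q ^ 5 = n) :
    ∃ m : ℤ, q = m := by
  have h1 : c * q.num ^ 5 = n * (q.den : ℤ) ^ 5 := by
    have : (c : ℚ) * (q.num / q.den) ^ 5 = n := by rw [Rat.num_div_den]; exact h
    have hd' : (q.den : ℚ) ≠ 0 := by exact_mod_cast q.den_ne_zero
    field_simp at this
    rw [mul_comm n]
    exact_mod_cast this
  have h2 : ((q.den : ℤ)) ^ 5 ∣ c * q.num ^ 5 := ⟨n, by rw [h1]; ring⟩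
  have h3 : IsCoprime ((q.den : ℤ) ^ 5) (q.num ^ 5) := by
    apply IsCoprime.pow
    rw [Int.isCoprime_iff_gcd_eq_one]
    have := q.reduced
    rw [Int.gcd_comm]
    exact this
  have h4 : ((q.den : ℤ)) ^ 5 ∣ c := h3.dvd_of_dvd_mul_right h2
  have hpos : (0 : ℤ) < q.den := by exact_mod_cast q.den_pos
  have h5 : (q.den : ℤ) ^ 5 ≤ 3 := by
    refine (Int.le_of_dvd (by omega) h4).trans (by omega)
  have h6 : q.den = 1 := by
    by_contra hne
    have : (2 : ℤ) ≤ q.den := by omega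
    have : (2 : ℤ) ^ 5 ≤ (q.den : ℤ) ^ 5 := pow_le_pow_left₀ (by norm_num) this 5
    omega
  exact ⟨q.num, (Rat.coe_int_num_of_den_eq_one h6).symm⟩

theorem coprime_scale (p q : ℚ) (h : ¬ (p = 0 ∧ q = 0)) :
    ∃ (m n : ℤ) (r : ℚ), IsCoprime m n ∧ r ≠ 0 ∧ p = r * m ∧ q = r * n := by
  have hp : (p.den : ℚ) ≠ 0 := by exact_mod_cast p.den_ne_zero
  have hq : (q.den : ℚ) ≠ 0 := by exact_mod_cast q.den_ne_zero
  have ep : p * p.den = p.num := Rat.mul_den_eq_num p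
  have eq : q * q.den = q.num := Rat.mul_den_eq_num q
  have hne : p.num * q.den ≠ 0 ∨ q.num * p.den ≠ 0 := by
    by_contra hh
    push Not at hh
    obtain ⟨h1, h2⟩ := hh
    apply h
    constructor
    · have : p.num = 0 := by
        rcases mul_eq_zero.1 h1 with h | h
        · exact h
        · exact absurd h (by exact_mod_cast q.den_ne_zero)
      simpa using this
    · have : q.num = 0 := by
        rcases mul_eq_zero.1 h2 with h | h
        · exact h
        · exact absurd h (by exact_mod_cast p.den_ne_zero)
      simpa using this
  have hg : 0 < Int.gcd (p.num * q.den) (q.num * p.den) := by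
    rw [Int.gcd_pos_iff]; exact hne
  obtain ⟨g, m, n, hg0, hco, hm, hn⟩ := Int.exists_gcd_one' hg
  refine ⟨m, n, g / (p.den * q.den), Int.isCoprime_iff_gcd_eq_one.2 hco, ?_, ?_, ?_⟩
  · have : (g : ℚ) ≠ 0 := by exact_mod_cast hg0.ne'
    positivity
  · have h1 : (p.num : ℚ) * q.den = m * g := by exact_mod_cast hm
    field_simp
    rw [← ep] at h1
    linear_combination h1
  · have h1 : (q.num : ℚ) * p.den = n * g := by exact_mod_cast hn
    field_simp
    rw [← eq] at h1
    linear_combination h1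

theorem K_coprime {c : ℤ} (hc : c = 1 ∨ c = 3) (x t : ℚ) (h : 21 * t ^ 2 = 4 * x ^ 5 + c ^ 2) :
    x ≠ 0 ∧ IsCoprime c x.num := by
  have hsq : Squarefree (21 : ℤ) := by
    rw [← Int.squarefree_natAbs]
    norm_num
    decide +kernel
  constructor
  · rintro rfl
    obtain ⟨m, hm⟩ := rat_int_of_sq hsq (q := t) (n := c ^ 2) (by push_cast; rw [h]; ring)
    rw [hm] at h
    have h2 : 21 * m ^ 2 = c ^ 2 := by
      have : (21 : ℚ) * m ^ 2 = c ^ 2 := by rw [h]; ring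
      exact_mod_cast this
    have h3 : m ^ 2 = 0 ∨ 1 ≤ m ^ 2 := by
      have := sq_nonneg m
      omega
    rcases hc with rfl | rfl <;> omega
  · rcases hc with rfl | rfl
    · exact isCoprime_one_left
    · rw [Int.isCoprime_iff_gcd_eq_one]
      by_contra hg
      have h3 : (3 : ℤ) ∣ x.num := by
        by_contra h3
        exact hg (Int.isCoprime_iff_gcd_eq_one.1 ((Prime.coprime_iff_not_dvd Int.prime_three).2 h3))
      have hd : (x.den : ℚ) ≠ 0 := by exact_mod_cast x.den_ne_zero
      have hx : x * x.den = x.num := Rat.mul_den_eq_num x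
      have e : 21 * (t * x.den ^ 3) ^ 2 = 4 * x.num ^ 5 * x.den + 9 * x.den ^ 6 := by
        rw [← hx]
        push_cast at h
        linear_combination (x.den : ℚ) ^ 6 * h
      obtain ⟨s, hs⟩ := rat_int_of_sq hsq (q := t * x.den ^ 3) (n := 4 * x.num ^ 5 * x.den + 9 * x.den ^ 6)
        (by push_cast; exact e)
      rw [hs] at e
      have e' : 21 * s ^ 2 = 4 * x.num ^ 5 * x.den + 9 * (x.den : ℤ) ^ 6 := by exact_mod_cast e
      obtain ⟨p', hp'⟩ := h3
      rw [hp'] at e'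
      have hs3 : (3 : ℤ) ∣ s := by
        have : (3 : ℤ) ∣ 7 * s ^ 2 := ⟨4 * 27 * p' ^ 5 * x.den + (x.den : ℤ) ^ 6, by linarith⟩
        have : (3 : ℤ) ∣ s ^ 2 := by omega
        exact Int.Prime.dvd_pow' (by norm_num) this
      obtain ⟨s', rfl⟩ := hs3
      have hq3 : (3 : ℤ) ∣ (x.den : ℤ) ^ 6 := ⟨7 * s' ^ 2 - 36 * p' ^ 5 * x.den, by linarith⟩
      have hq : (3 : ℤ) ∣ (x.den : ℤ) := Int.Prime.dvd_pow' (by norm_num) hq3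
      have hred := x.reduced
      have a1 : 3 ∣ x.num.natAbs := by omega
      have a2 : 3 ∣ x.den := by omega
      have := Nat.dvd_gcd a1 a2
      rw [Nat.Coprime] at hred
      omega

theorem K_final {c : ℤ} (hc : c = 1 ∨ c = 3) (x t : ℚ) (h : 21 * t ^ 2 = 4 * x ^ 5 + c ^ 2) :
    ∃ m n w : ℤ, IsCoprime m n ∧ w ≠ 0 ∧ (2 * XX m n + YY m n = c * w ^ 5 ∨ 5 * XX m n + 13 * YY m n = c * w ^ 5 ∨
      23 * XX m n + 64 * YY m n = c * w ^ 5) := by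
  obtain ⟨hx0, hcop⟩ := K_coprime hc x t h
  have hnr : ∀ x : ℚ, x ^ 2 ≠ x + (5 : ℤ) := by
    intro y hy
    have hsq : Squarefree (1 : ℤ) := squarefree_one
    obtain ⟨m, hm⟩ := rat_int_of_sq (k := 1) hsq (q := 2 * y - 1) (n := 21) (by push_cast at hy ⊢; linear_combination 4 * hy)
    have h2 : m ^ 2 = 21 := by
      have : (m : ℚ) ^ 2 = 21 := by rw [← hm]; push_cast at hy; linear_combination 4 * hy
      exact_mod_cast this
    have : m < 5 := by nlinarith
    have : -5 < m := by nlinarith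
    interval_cases m <;> omega
  obtain ⟨F, _, _, b, W, hW, hb0, hb1, hpid⟩ := quad_exists_all 5 hnr (by norm_num) (by norm_num) (by decide)
  set ω : F := algebraMap (𝓞 F) F W with hωdef
  have hω : ω ^ 2 = ω + ((5 : ℤ) : F) := by
    rw [hωdef, ← map_pow, hW, map_add, map_intCast]
  have hden : (x.den : F) ≠ 0 := by exact_mod_cast x.den_ne_zero
  have hxF : (x : F) * x.den = x.num := by
    have := Rat.mul_den_eq_num x
    exact_mod_cast congrArg (fun y : ℚ => (y : F)) this
  have hF : (21 : F) * t ^ 2 = 4 * x ^ 5 + c ^ 2 := by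
    exact_mod_cast congrArg (fun y : ℚ => (y : F)) h
  have hzz : ((((c - t) / 2 : ℚ) : F) + t * ω) * (c - ((((c - t) / 2 : ℚ) : F) + t * ω)) = - x ^ 5 := by
    push_cast at hω ⊢
    field_simp
    linear_combination (-4 * (t : F) ^ 2) * hω - hF
  obtain ⟨i, α, hi, hα⟩ := K_decomp b W hW hb0 hb1 c x.num x.den
    (by rw [Int.isCoprime_iff_gcd_eq_one]; exact x.reduced) hcop (by simpa using hx0)
    (by exact_mod_cast x.den_ne_zero) ((((c - t) / 2 : ℚ) : F) + t * ω) (by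
      rw [hzz, ← hxF]; push_cast; ring)
  rw [← hωdef] at hα
  have hεne : (2 + ω) ≠ 0 := by
    intro h0
    have : (2 + ω) * (3 - ω) = 1 := by push_cast at hω; linear_combination -hω
    rw [h0, zero_mul] at this
    exact zero_ne_one this
  have hxF0 : (x : F) ≠ 0 := by exact_mod_cast hx0
  have hαne : α ≠ 0 := by
    rintro rfl
    rw [hα] at hzz
    simp at hzz
    exact hx0 hzz
  have main : ∃ (j : ℕ) (β : F) (s : ℚ), j ≤ 2 ∧ β ≠ 0 ∧
      ((((c - s) / 2 : ℚ) : F) + s * ω) = (2 + ω) ^ j * β ^ 5 := by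
    by_cases hi2 : i ≤ 2
    · exact ⟨i, α, t, hi2, hαne, hα⟩
    · refine ⟨5 - i, -x / ((2 + ω) * α), -t, by omega, ?_, ?_⟩
      · exact div_ne_zero (neg_ne_zero.2 hxF0) (mul_ne_zero hεne hαne)
      · have hz0 : (2 + ω) ^ i * α ^ 5 ≠ 0 := mul_ne_zero (pow_ne_zero _ hεne) (pow_ne_zero _ hαne)
        rw [hα] at hzz
        have e1 : ((((c - (-t)) / 2 : ℚ) : F) + ((-t : ℚ) : F) * ω) = c - (2 + ω) ^ i * α ^ 5 := by
          rw [← hα]; push_cast; ring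
        rw [e1]
        apply mul_left_cancel₀ hz0
        rw [hzz]
        have e2 : (2 + ω) ^ i * (2 + ω) ^ (5 - i) = (2 + ω) ^ 5 := by
          rw [← pow_add]; congr 1; omega
        calc _ = (2 + ω) ^ 5 * α ^ 5 * (-x / ((2 + ω) * α)) ^ 5 := by field_simp
          _ = _ := by rw [← e2]; ring
  clear hα hαne hzz
  obtain ⟨j, β, s, hj, hβ, hjs⟩ := main
  obtain ⟨p, q, hpq⟩ := quad_coords b ω hb0 hb1 β
  obtain ⟨m, n, r, hco, hr, hp, hq⟩ := coprime_scale p q (by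
    rintro ⟨rfl, rfl⟩
    apply hβ; rw [hpq]; simp)
  have hX : β ^ 5 = ((r ^ 5 * XX m n : ℚ) : F) + ((r ^ 5 * YY m n : ℚ) : F) * ω := by
    rw [hpq, quad_pow5 ω 5 hω, hp, hq]
    unfold XX YY
    push_cast
    ring
  rw [hX] at hjs
  have fin : ∀ a d : ℤ, r ^ 5 * (a * XX m n + d * YY m n) = c → ∃ w : ℤ, w ≠ 0 ∧ a * XX m n + d * YY m n = c * w ^ 5 := by
    intro a d had
    have e : (c : ℚ) * (1 / r) ^ 5 = (a * XX m n + d * YY m n : ℤ) := by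
      rw [← had]; push_cast; field_simp
    obtain ⟨w, hw⟩ := rat_int_of_pow5 hc e
    refine ⟨w, ?_, ?_⟩
    · rintro rfl
      rw [Int.cast_zero] at hw
      exact one_div_ne_zero hr hw
    rw [hw] at e
    exact_mod_cast e.symm
  push_cast at hω
  interval_cases j
  · obtain ⟨h1, h2⟩ := quad_coords_inj b ω hb0 hb1 (p := (c - s) / 2) (q := s) (p' := r ^ 5 * XX m n)
      (q' := r ^ 5 * YY m n) (by rw [hjs]; ring)
    obtain ⟨w, hw0, hw⟩ := fin 2 1 (by push_cast; linear_combination -2 * h1 - h2)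
    exact ⟨m, n, w, hco, hw0, Or.inl (by linarith)⟩
  · obtain ⟨h1, h2⟩ := quad_coords_inj b ω hb0 hb1 (p := (c - s) / 2) (q := s)
      (p' := r ^ 5 * (2 * XX m n + 5 * YY m n))
      (q' := r ^ 5 * (XX m n + 3 * YY m n)) (by
        rw [hjs]; push_cast
        linear_combination ((r : F) ^ 5 * YY m n) * hω)
    obtain ⟨w, hw0, hw⟩ := fin 5 13 (by push_cast; linear_combination -2 * h1 - h2)
    exact ⟨m, n, w, hco, hw0, Or.inr (Or.inl hw)⟩
  · obtain ⟨h1, h2⟩ := quad_coords_inj b ω hb0 hb1 (p := (c - s) / 2) (q := s)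
      (p' := r ^ 5 * (9 * XX m n + 25 * YY m n))
      (q' := r ^ 5 * (5 * XX m n + 14 * YY m n)) (by
        rw [hjs]; push_cast
        linear_combination ((r : F) ^ 5 * XX m n + (r : F) ^ 5 * YY m n * (ω + 5)) * hω)
    obtain ⟨w, hw0, hw⟩ := fin 23 64 (by push_cast; linear_combination -2 * h1 - h2)
    exact ⟨m, n, w, hco, hw0, Or.inr (Or.inr hw)⟩


/-- Multiplication matrix of an element in the power basis of the quintic. -/
def quinMat {A : Type*} [CommRing A] (c0 c1 c2 c3 c4 : A) : Matrix (Fin 5) (Fin 5) A :=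
  !![c0, 5 * c4, 5 * c3, 5 * c2 + 25 * c4, 5 * c1 + 25 * c3;
    c1, c0 - 5 * c4, -5 * c3 + 5 * c4, -5 * c2 + 5 * c3 - 25 * c4, -5 * c1 + 5 * c2 - 25 * c3 + 25 * c4;
    c2, c1, c0 - 5 * c4, -5 * c3 + 5 * c4, -5 * c2 + 5 * c3 - 25 * c4;
    c3, c2 + 5 * c4, c1 + 5 * c3, c0 + 5 * c2 + 20 * c4, 5 * c1 + 20 * c3 + 5 * c4;
    c4, c3, c2 + 5 * c4, c1 + 5 * c3, c0 + 5 * c2 + 20 * c4]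

theorem quin_repr {F : Type*} [Field F] [NumberField F] (b : Module.Basis (Fin 5) ℚ F) (τ : F)
    (hb : ∀ i : Fin 5, b i = τ ^ (i : ℕ)) (v : Fin 5 → ℚ) (z : F)
    (hz : z = v 0 + v 1 * τ + v 2 * τ ^ 2 + v 3 * τ ^ 3 + v 4 * τ ^ 4) (i : Fin 5) :
    b.repr z i = v i := by
  have e : z = ∑ i, v i • b i := by
    rw [hz, Fin.sum_univ_five]
    simp only [hb, Algebra.smul_def]
    simp
  rw [e, b.repr_sum_self]

theorem quin_leftMul {F : Type*} [Field F] [NumberField F] (b : Module.Basis (Fin 5) ℚ F) (τ : F)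
    (hτ : τ ^ 5 = 5 * τ ^ 3 - 5 * τ + 5) (hb : ∀ i : Fin 5, b i = τ ^ (i : ℕ)) (c0 c1 c2 c3 c4 : ℚ) :
    Algebra.leftMulMatrix b ((c0 : F) + c1 * τ + c2 * τ ^ 2 + c3 * τ ^ 3 + c4 * τ ^ 4) =
      quinMat c0 c1 c2 c3 c4 := by
  ext i j
  rw [Algebra.leftMulMatrix_eq_repr_mul, hb]
  rw [quin_repr b τ hb (fun i => quinMat c0 c1 c2 c3 c4 i j)]
  fin_cases j
  · simp [quinMat]
  · simp [quinMat]; linear_combination c4 * hτ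
  · simp [quinMat]; linear_combination (c3 + c4 * τ) * hτ
  · simp [quinMat]; linear_combination (c2 + c3 * τ + c4 * (τ ^ 2 + 5)) * hτ
  · simp [quinMat]; linear_combination (c1 + c2 * τ + c3 * (τ ^ 2 + 5) + c4 * (τ ^ 3 + 5 * τ)) * hτ

theorem quin_trace {F : Type*} [Field F] [NumberField F] (b : Module.Basis (Fin 5) ℚ F) (τ : F)
    (hτ : τ ^ 5 = 5 * τ ^ 3 - 5 * τ + 5) (hb : ∀ i : Fin 5, b i = τ ^ (i : ℕ)) (c0 c1 c2 c3 c4 : ℚ) :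
    Algebra.trace ℚ F ((c0 : F) + c1 * τ + c2 * τ ^ 2 + c3 * τ ^ 3 + c4 * τ ^ 4) =
      5 * c0 + 10 * c2 + 30 * c4 := by
  rw [Algebra.trace_eq_matrix_trace b, quin_leftMul b τ hτ hb]
  simp [quinMat, Matrix.trace, Fin.sum_univ_five]
  ring

theorem quin_discr {F : Type*} [Field F] [NumberField F] (b : Module.Basis (Fin 5) ℚ F) (τ : F)
    (hτ : τ ^ 5 = 5 * τ ^ 3 - 5 * τ + 5) (hb : ∀ i : Fin 5, b i = τ ^ (i : ℕ)) :
    Algebra.discr ℚ b = 1378125 := by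
  have t := quin_trace b τ hτ hb
  have t' : ∀ k : ℕ, ∀ c0 c1 c2 c3 c4 : ℚ, τ ^ k = (c0 : F) + c1 * τ + c2 * τ ^ 2 + c3 * τ ^ 3 + c4 * τ ^ 4 →
      Algebra.trace ℚ F (τ ^ k) = 5 * c0 + 10 * c2 + 30 * c4 := by
    intro k c0 c1 c2 c3 c4 h
    rw [h, t]
  have s0 := t' 0 1 0 0 0 0 (by simp)
  have s1 := t' 1 0 1 0 0 0 (by simp)
  have s2 := t' 2 0 0 1 0 0 (by simp)
  have s3 := t' 3 0 0 0 1 0 (by simp)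
  have s4 := t' 4 0 0 0 0 1 (by simp)
  have s5 := t' 5 5 (-5) 0 5 0 (by push_cast; linear_combination hτ)
  have s6 := t' 6 0 5 (-5) 0 5 (by push_cast; linear_combination τ * hτ)
  have s7 := t' 7 25 (-25) 5 20 0 (by push_cast; linear_combination (τ ^ 2 + 5) * hτ)
  have s8 := t' 8 0 25 (-25) 5 20 (by push_cast; linear_combination (τ ^ 3 + 5 * τ) * hτ)
  rw [pow_zero] at s0
  rw [pow_one] at s1
  have hM : Algebra.traceMatrix ℚ b = (!![5, 0, 10, 0, 30; 0, 10, 0, 30, 25; 10, 0, 30, 25, 100;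
      0, 30, 25, 100, 175; 30, 25, 100, 175, 350] : Matrix (Fin 5) (Fin 5) ℤ).map (Int.castRingHom ℚ) := by
    ext i j
    rw [Algebra.traceMatrix_apply, Algebra.traceForm_apply, hb, hb, ← pow_add]
    fin_cases i <;> fin_cases j <;> simp [-map_pow, s0, s1, s2, s3, s4, s5, s6, s7, s8] <;> norm_num
  rw [Algebra.discr_def, hM, ← RingHom.mapMatrix_apply, ← RingHom.map_det]
  have : (!![5, 0, 10, 0, 30; 0, 10, 0, 30, 25; 10, 0, 30, 25, 100;
      0, 30, 25, 100, 175; 30, 25, 100, 175, 350] : Matrix (Fin 5) (Fin 5) ℤ).det = 1378125 := by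
    simp [Matrix.det_succ_row_zero, Fin.sum_univ_succ, Fin.succAbove]
  rw [this]; norm_num

theorem quin_norm {F : Type*} [Field F] [NumberField F] (b : Module.Basis (Fin 5) ℚ F) (W : 𝓞 F)
    (hW : W ^ 5 = 5 * W ^ 3 - 5 * W + 5) (hb : ∀ i : Fin 5, b i = (algebraMap (𝓞 F) F W) ^ (i : ℕ))
    (c0 c1 c2 c3 c4 : ℤ) :
    Algebra.norm ℤ ((c0 : 𝓞 F) + c1 * W + c2 * W ^ 2 + c3 * W ^ 3 + c4 * W ^ 4) =
      (quinMat c0 c1 c2 c3 c4).det := by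
  have hτ : (algebraMap (𝓞 F) F W) ^ 5 = 5 * (algebraMap (𝓞 F) F W) ^ 3 - 5 * (algebraMap (𝓞 F) F W) + 5 := by
    have := congrArg (algebraMap (𝓞 F) F) hW
    simpa only [map_pow, map_add, map_sub, map_mul, map_ofNat] using this
  have h := quin_leftMul b _ hτ hb c0 c1 c2 c3 c4
  have e : (quinMat (c0 : ℚ) c1 c2 c3 c4) = (quinMat c0 c1 c2 c3 c4).map (Int.castRingHom ℚ) := by
    ext i j
    fin_cases i <;> fin_cases j <;> simp [quinMat]
  obtain ⟨x, hx⟩ : ∃ x : 𝓞 F, x = (c0 : 𝓞 F) + c1 * W + c2 * W ^ 2 + c3 * W ^ 3 + c4 * W ^ 4 := ⟨_, rfl⟩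
  rw [← hx]
  have h2 := Algebra.coe_norm_int x
  have h3 : (x : F) =
     (((c0 : ℚ) : F) + ((c1 : ℚ) : F) * (algebraMap (𝓞 F) F W) + ((c2 : ℚ) : F) * (algebraMap (𝓞 F) F W) ^ 2 +
      ((c3 : ℚ) : F) * (algebraMap (𝓞 F) F W) ^ 3 + ((c4 : ℚ) : F) * (algebraMap (𝓞 F) F W) ^ 4) := by
    rw [hx]
    show algebraMap (𝓞 F) F _ = _
    simp only [map_pow, map_add, map_mul, map_intCast]
    push_cast; rfl
  rw [h3, Algebra.norm_eq_matrix_det b, h, e, ← RingHom.mapMatrix_apply, ← RingHom.map_det] at h2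
  rw [eq_intCast (Int.castRingHom ℚ)] at h2
  exact_mod_cast h2


theorem quin_exists :
    ∃ (F : Type) (_ : Field F) (_ : NumberField F) (b : Module.Basis (Fin 5) ℚ F) (W : 𝓞 F),
      W ^ 5 = 5 * W ^ 3 - 5 * W + 5 ∧ ∀ i : Fin 5, b i = (algebraMap (𝓞 F) F W) ^ (i : ℕ) := by
  let g : Polynomial ℤ := .X ^ 5 - 5 * .X ^ 3 + 5 * .X - 5
  have hgdeg : g.natDegree = 5 := by simp only [g]; compute_degree!
  have hgmon : g.Monic := by simp only [g]; monicity!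
  have hgirr : Irreducible g := by
    have hE : g.IsEisensteinAt (Ideal.span {(5 : ℤ)}) := by
      refine ⟨?_, ?_, ?_⟩
      · rw [hgmon.leadingCoeff, Ideal.mem_span_singleton]; norm_num
      · intro n hn
        rw [hgdeg] at hn
        rw [Ideal.mem_span_singleton]
        have e : g = .X ^ 5 - .C 5 * .X ^ 3 + .C 5 * .X - .C 5 := by simp [g]
        rw [e]
        simp only [Polynomial.coeff_sub, Polynomial.coeff_add, Polynomial.coeff_X_pow, Polynomial.coeff_C_mul,
          Polynomial.coeff_X, Polynomial.coeff_C]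
        interval_cases n <;> norm_num
      · rw [Ideal.span_singleton_pow, Ideal.mem_span_singleton]
        have e : g = .X ^ 5 - .C 5 * .X ^ 3 + .C 5 * .X - .C 5 := by simp [g]
        rw [e]
        simp only [Polynomial.coeff_sub, Polynomial.coeff_add, Polynomial.coeff_X_pow, Polynomial.coeff_C_mul,
          Polynomial.coeff_X, Polynomial.coeff_C]
        norm_num
    refine hE.irreducible ?_ hgmon.isPrimitive (by omega)
    rw [Ideal.span_singleton_prime (by norm_num)]
    exact Int.prime_iff_natAbs_prime.2 (by norm_num)
  let f : Polynomial ℚ := g.map (Int.castRingHom ℚ)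
  have hirr : Irreducible f := (Polynomial.Monic.irreducible_iff_irreducible_map_fraction_map hgmon).1 hgirr
  have hdeg : f.natDegree = 5 := by rw [hgmon.natDegree_map, hgdeg]
  have : Fact (Irreducible f) := ⟨hirr⟩
  let pb := AdjoinRoot.powerBasis hirr.ne_zero
  have hfd : FiniteDimensional ℚ (AdjoinRoot f) := pb.finite
  have hnf : NumberField (AdjoinRoot f) := { to_charZero := charZero_of_injective_algebraMap (algebraMap ℚ _).injective, to_finiteDimensional := hfd }
  have hdim : pb.dim = 5 := by
    rw [← hdeg]; rfl
  have hroot : (AdjoinRoot.root f) ^ 5 = 5 * (AdjoinRoot.root f) ^ 3 - 5 * AdjoinRoot.root f + 5 := by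
    have := AdjoinRoot.eval₂_root f
    rw [Polynomial.eval₂_map] at this
    simp [g] at this
    linear_combination this
  have hintg : IsIntegral ℤ (AdjoinRoot.root f) := by
    refine ⟨g, hgmon, ?_⟩
    simp [g]
    linear_combination hroot
  obtain ⟨W, hW⟩ : ∃ W : 𝓞 (AdjoinRoot f), algebraMap (𝓞 (AdjoinRoot f)) (AdjoinRoot f) W = AdjoinRoot.root f := ⟨⟨_, hintg⟩, rfl⟩
  refine ⟨AdjoinRoot f, inferInstance, hnf, pb.basis.reindex (finCongr hdim), W, ?_, ?_⟩
  · apply FaithfulSMul.algebraMap_injective (𝓞 (AdjoinRoot f)) (AdjoinRoot f)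
    simp only [map_pow, map_add, map_sub, map_mul, map_ofNat, hW]
    exact hroot
  · intro i
    rw [hW]
    simp [pb]

theorem quin_real_root (x y : ℝ) (hx : x ^ 5 = 5 * x ^ 3 - 5 * x + 5) (hy : y ^ 5 = 5 * y ^ 3 - 5 * y + 5) :
    x = y := by
  have h2 : ∀ x : ℝ, x ^ 5 = 5 * x ^ 3 - 5 * x + 5 → 2 < x := by
    intro x hx
    have h1 : (x - 2) * (x ^ 2 + x - 1) ^ 2 = 3 := by linear_combination hx
    by_contra h
    have : (x - 2) * (x ^ 2 + x - 1) ^ 2 ≤ 0 :=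
      mul_nonpos_of_nonpos_of_nonneg (by linarith) (sq_nonneg _)
    linarith
  have mono : ∀ x y : ℝ, 2 < x → x < y → (x - 2) * (x ^ 2 + x - 1) ^ 2 < (y - 2) * (y ^ 2 + y - 1) ^ 2 := by
    intro x y hx hxy
    have : 0 < x ^ 2 + x - 1 := by nlinarith
    have h0 : 0 < x - 2 := by linarith
    gcongr
  have hx2 := h2 x hx
  have hy2 := h2 y hy
  have h1 : (x - 2) * (x ^ 2 + x - 1) ^ 2 = 3 := by linear_combination hx
  have h3 : (y - 2) * (y ^ 2 + y - 1) ^ 2 = 3 := by linear_combination hy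
  rcases lt_trichotomy x y with h | h | h
  · have := mono x y hx2 h; linarith
  · exact h
  · have := mono y x hy2 h; linarith

theorem quin_rank {F : Type*} [Field F] [NumberField F] (b : Module.Basis (Fin 5) ℚ F) (τ : F)
    (hτ : τ ^ 5 = 5 * τ ^ 3 - 5 * τ + 5) (hb : ∀ i : Fin 5, b i = τ ^ (i : ℕ)) :
    Units.rank F ≤ 2 := by
  have hfin : Module.finrank ℚ F = 5 := by
    rw [Module.finrank_eq_card_basis b]; simp
  have h1 := InfinitePlace.card_add_two_mul_card_eq_rank F
  have h2 := InfinitePlace.card_eq_nrRealPlaces_add_nrComplexPlaces F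
  have h3 : InfinitePlace.nrRealPlaces F ≤ 1 := by
    unfold InfinitePlace.nrRealPlaces
    classical
    refine (@Fintype.card_le_one_iff_subsingleton _ _).2 ?_
    refine ⟨?_⟩
    rintro ⟨w, hw⟩ ⟨w', hw'⟩
    have key : ∀ w : InfinitePlace F, w.IsReal → ∃ x : ℝ, w.embedding τ = x ∧ x ^ 5 = 5 * x ^ 3 - 5 * x + 5 := by
      intro w hw
      rw [InfinitePlace.isReal_iff] at hw
      have h4 : (starRingEnd ℂ) (w.embedding τ) = w.embedding τ := by
        have := congrArg (fun φ : F →+* ℂ => φ τ) hw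
        simpa using this
      obtain ⟨x, hx⟩ := Complex.conj_eq_iff_real.1 h4
      refine ⟨x, hx, ?_⟩
      have := congrArg w.embedding hτ
      simp only [map_pow, map_add, map_sub, map_mul, map_ofNat, hx] at this
      exact_mod_cast this
    obtain ⟨x, hx, hx5⟩ := key w hw
    obtain ⟨y, hy, hy5⟩ := key w' hw'
    have hxy : w.embedding τ = w'.embedding τ := by
      rw [hx, hy, quin_real_root x y hx5 hy5]
    have : w.embedding = w'.embedding := by
      ext z
      rw [← b.sum_repr z]
      simp only [hb, Algebra.smul_def, map_sum, map_mul, map_pow, hxy]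
      simp
    rw [Subtype.mk.injEq, ← InfinitePlace.mk_embedding w, this, InfinitePlace.mk_embedding]
  unfold Units.rank
  omega


/-- Generators of the degree one primes of small norm. -/
def quinTab : ℕ → ℤ × ℤ × ℤ × ℤ × ℤ
  | 2 => (2, -2, -1, 2, 1)
  | 3 => (-2, 1, 0, 0, 0)
  | 5 => (0, 1, 0, 0, 0)
  | 7 => (2, 1, 0, 0, 0)
  | 11 => (1, 1, -3, -1, 1)
  | 13 => (-3, -3, 0, 1, 0)
  | 17 => (-3, -1, 2, 1, 0)
  | 23 => (-2, 0, 1, 0, 0)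
  | 31 => (-1, 2, -1, -2, 1)
  | 37 => (2, 0, 0, 2, 1)
  | 43 => (-3, -1, 1, 0, 0)
  | 47 => (-3, 3, -3, -1, 1)
  | 53 => (2, -2, -4, 0, 1)
  | 59 => (-1, 2, 3, 1, 0)
  | 61 => (1, -1, 0, 2, 1)
  | 67 => (2, -3, 2, 0, 0)
  | 71 => (-6, 3, 2, -4, -2)
  | 73 => (-3, 7, -5, -1, 1)
  | _ => (0, 0, 0, 0, 0)

/-- Value of the tabulated polynomial at an integer. -/
def quinTabEval (c : ℤ × ℤ × ℤ × ℤ × ℤ) (r : ℤ) : ℤ :=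
  c.1 + c.2.1 * r + c.2.2.1 * r ^ 2 + c.2.2.2.1 * r ^ 3 + c.2.2.2.2 * r ^ 4

theorem quinTab_spec : ∀ p < 74, Nat.Prime p → ∀ r < p,
    ((r : ℤ) ^ 5 - 5 * (r : ℤ) ^ 3 + 5 * r - 5) % (p : ℤ) = 0 →
    quinTabEval (quinTab p) r % (p : ℤ) = 0 ∧
    (quinMat (quinTab p).1 (quinTab p).2.1 (quinTab p).2.2.1 (quinTab p).2.2.2.1 (quinTab p).2.2.2.2).det.natAbs = p := by
  decide +kernel

theorem int_mem_prime_norm {R : Type*} [CommRing R] (P : Ideal R) (hP : P.IsPrime)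
    (p : ℕ) (hp : p.Prime) (hpP : (p : R) ∈ P) (n : ℤ) (hn : (n : R) ∈ P) : (p : ℤ) ∣ n := by
  by_contra h
  have hc : IsCoprime (p : ℤ) n := (Nat.prime_iff_prime_int.1 hp).coprime_iff_not_dvd.2 h
  obtain ⟨x, y, hxy⟩ := hc
  apply hP.ne_top
  rw [Ideal.eq_top_iff_one]
  have : (1 : R) = x * p + y * n := by
    have := congrArg (Int.cast : ℤ → R) hxy
    push_cast at this
    exact this.symm
  rw [this]
  exact Ideal.add_mem _ (Ideal.mul_mem_left _ _ hpP) (Ideal.mul_mem_left _ _ hn)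

theorem quin_mem {R : Type*} [CommRing R] (W : R) (P : Ideal R) (p : ℕ) (r : ℤ) (hr : W - (r : R) ∈ P)
    (hpP : (p : R) ∈ P) (c0 c1 c2 c3 c4 : ℤ)
    (h : (p : ℤ) ∣ c0 + c1 * r + c2 * r ^ 2 + c3 * r ^ 3 + c4 * r ^ 4) :
    (c0 : R) + c1 * W + c2 * W ^ 2 + c3 * W ^ 3 + c4 * W ^ 4 ∈ P := by
  obtain ⟨k, hk⟩ := h
  have hk' := congrArg (Int.cast : ℤ → R) hk
  push_cast at hk'
  have : (c0 : R) + c1 * W + c2 * W ^ 2 + c3 * W ^ 3 + c4 * W ^ 4 =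
      (c1 + c2 * (W + r) + c3 * (W ^ 2 + W * r + r ^ 2) + c4 * (W ^ 3 + W ^ 2 * r + W * r ^ 2 + r ^ 3)) * (W - r)
      + k * p := by
    linear_combination hk'
  rw [this]
  exact Ideal.add_mem _ (Ideal.mul_mem_left _ _ hr) (Ideal.mul_mem_left _ _ hpP)

theorem quin_deg_one {F : Type*} [Field F] [NumberField F] (b : Module.Basis (Fin 5) ℚ F) (W : 𝓞 F)
    (hW : W ^ 5 = 5 * W ^ 3 - 5 * W + 5) (hb : ∀ i : Fin 5, b i = (algebraMap (𝓞 F) F W) ^ (i : ℕ))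
    (P : Ideal (𝓞 F)) (hP : P.IsPrime) (p : ℕ) (hp : p.Prime) (h74 : p < 74) (hpP : (p : 𝓞 F) ∈ P)
    (r : ℕ) (hr : r < p) (hmem : W - (r : 𝓞 F) ∈ P) : P.IsPrincipal := by
  have h1 : ((((r : ℤ) ^ 5 - 5 * (r : ℤ) ^ 3 + 5 * r - 5 : ℤ)) : 𝓞 F) ∈ P := by
    have : ((((r : ℤ) ^ 5 - 5 * (r : ℤ) ^ 3 + 5 * r - 5 : ℤ)) : 𝓞 F) =
      (- (W ^ 4 + W ^ 3 * r + W ^ 2 * r ^ 2 + W * r ^ 3 + r ^ 4) + 5 * (W ^ 2 + W * r + r ^ 2) - 5) * (W - r) := by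
      push_cast
      linear_combination hW
    rw [this]
    exact Ideal.mul_mem_left _ _ hmem
  have h2 := int_mem_prime_norm P hP p hp hpP _ h1
  obtain ⟨h3, h4⟩ := quinTab_spec p h74 hp r hr (Int.emod_eq_zero_of_dvd h2)
  refine principal_of_prime_norm P hP _ (quin_mem W P p r (by exact_mod_cast hmem) hpP _ _ _ _ _ (Int.dvd_of_emod_eq_zero h3)) ?_
  rw [quin_norm b W hW hb, h4]
  exact hp


theorem pow_absNorm_sub_mem {F : Type*} [Field F] [NumberField F] (P : Ideal (𝓞 F)) [P.IsMaximal] (h0 : P ≠ ⊥)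
    (x : 𝓞 F) : x ^ (Ideal.absNorm P) - x ∈ P := by
  have hc : Nat.card (𝓞 F ⧸ P) = Ideal.absNorm P := rfl
  have hfin : Finite (𝓞 F ⧸ P) := Ideal.finiteQuotientOfFreeOfNeBot P h0
  have := Fintype.ofFinite (𝓞 F ⧸ P)
  let _ : Field (𝓞 F ⧸ P) := Ideal.Quotient.field P
  have h := FiniteField.pow_card (Ideal.Quotient.mk P x)
  rw [← Nat.card_eq_fintype_card, hc] at h
  rw [← Ideal.Quotient.eq_zero_iff_mem, map_sub, map_pow]
  rw [h, sub_self]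

theorem quin_pid {F : Type*} [Field F] [NumberField F] (b : Module.Basis (Fin 5) ℚ F) (W : 𝓞 F)
    (hW : W ^ 5 = 5 * W ^ 3 - 5 * W + 5) (hb : ∀ i : Fin 5, b i = (algebraMap (𝓞 F) F W) ^ (i : ℕ)) :
    IsPrincipalIdealRing (𝓞 F) := by
  have hτ : (algebraMap (𝓞 F) F W) ^ 5 = 5 * (algebraMap (𝓞 F) F W) ^ 3 - 5 * (algebraMap (𝓞 F) F W) + 5 := by
    have := congrArg (algebraMap (𝓞 F) F) hW
    simpa only [map_pow, map_add, map_sub, map_mul, map_ofNat] using this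
  have hfin : Module.finrank ℚ F = 5 := by
    rw [Module.finrank_eq_card_basis b]; simp
  have hd : |(discr F : ℝ)| ≤ 1378125 := by
    have h1 := discr_le_of_basis b (by
      intro i; rw [hb]; exact (RingOfIntegers.isIntegral_coe W).pow _)
    rw [quin_discr b _ hτ hb] at h1
    norm_num at h1
    exact_mod_cast h1
  have hr2 : InfinitePlace.nrComplexPlaces F ≤ 2 := by
    have := InfinitePlace.card_add_two_mul_card_eq_rank F
    omega
  apply RingOfIntegers.isPrincipalIdealRing_of_isPrincipal_of_norm_le_of_isPrime
  intro I hI hIn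
  have hlt : (Ideal.absNorm (I : Ideal (𝓞 F)) : ℝ) < 74 := by
    refine lt_of_le_of_lt hIn ?_
    have h1 : (4 / Real.pi) ^ InfinitePlace.nrComplexPlaces F ≤ (4 / 3.14) ^ 2 := by
      have h3 : (4 / Real.pi) ≤ 4 / 3.14 := by
        apply div_le_div_of_nonneg_left <;> linarith [Real.pi_gt_d2]
      have h4 : 1 ≤ 4 / Real.pi := by
        rw [le_div_iff₀ Real.pi_pos]; linarith [Real.pi_lt_d2]
      calc _ ≤ (4 / Real.pi) ^ 2 := pow_le_pow_right₀ h4 hr2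
        _ ≤ _ := by gcongr
    have h2 : √|(discr F : ℝ)| ≤ 1174 := by
      rw [Real.sqrt_le_left (by norm_num)]; exact hd.trans (by norm_num)
    rw [hfin]
    have h5 : ((Nat.factorial 5 : ℕ) : ℝ) / ((5 : ℕ) : ℝ) ^ 5 * √|(discr F : ℝ)| ≤ 45.0816 := by
      norm_num [Nat.factorial]; norm_num at h2; linarith
    calc _ ≤ ((4 / 3.14) ^ 2 : ℝ) * 45.0816 := by
          apply mul_le_mul h1 h5 (by positivity) (by norm_num)
      _ < 74 := by norm_num
  have hlt' : Ideal.absNorm (I : Ideal (𝓞 F)) < 74 := by exact_mod_cast hlt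
  have hne0 := Ideal.absNorm_ne_zero_of_nonZeroDivisors I
  obtain ⟨P, hPI⟩ : ∃ P : Ideal (𝓞 F), P = I := ⟨_, rfl⟩
  rw [← hPI] at hI hlt' hne0 ⊢
  have hPbot : P ≠ ⊥ := by
    rintro h; rw [h] at hne0; simp at hne0
  have hmax : P.IsMaximal := hI.isMaximal hPbot
  obtain ⟨p, k, hk, hpP, hp, hN⟩ := Ideal.exists_prime_and_absNorm_eq_pow P
  rw [hN] at hlt'
  have hple : p < 74 := lt_of_le_of_lt (Nat.le_self_pow hk.ne' p) hlt'
  have deg1 := quin_deg_one b W hW hb P hI p hp hple hpP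
  rcases Nat.lt_or_ge k 2 with hk2 | hk2
  · have : k = 1 := by omega
    rw [this, pow_one] at hN
    obtain ⟨r, hr, hmem⟩ := exists_nat_mod P hp hN W
    exact deg1 r hr hmem
  have hp8 : p ≤ 8 := by
    by_contra h
    have : 9 ^ 2 ≤ p ^ k := (Nat.pow_le_pow_left (by omega) 2).trans (Nat.pow_le_pow_right hp.pos hk2)
    omega
  have norm_of : ∀ (c0 c1 c2 c3 c4 : ℤ), Ideal.absNorm P = (quinMat c0 c1 c2 c3 c4).det.natAbs →
      ((c0 : 𝓞 F) + c1 * W + c2 * W ^ 2 + c3 * W ^ 3 + c4 * W ^ 4) ∈ P → P.IsPrincipal := by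
    intro c0 c1 c2 c3 c4 h hm
    refine principal_of_norm_eq P _ hm ?_ (by rw [quin_norm b W hW hb, h])
    intro h0
    apply hne0
    rw [h, ← quin_norm b W hW hb, h0]; simp
  have dvd_of : ∀ (c0 c1 c2 c3 c4 : ℤ), 
      ((c0 : 𝓞 F) + c1 * W + c2 * W ^ 2 + c3 * W ^ 3 + c4 * W ^ 4) ∈ P →
      ((p ^ k : ℕ) : ℤ) ∣ (quinMat c0 c1 c2 c3 c4).det := by
    intro c0 c1 c2 c3 c4 hm
    rw [← quin_norm b W hW hb, ← hN]
    exact Ideal.absNorm_dvd_norm_of_mem hm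
  have hp' : p = 2 ∨ p = 3 ∨ p = 5 ∨ p = 7 := by
    interval_cases p <;> first | (left; rfl) | (right; left; rfl) | (right; right; left; rfl) | (right; right; right; rfl) | (exfalso; revert hp; norm_num)
  rcases hp' with rfl | rfl | rfl | rfl
  · have hprod : (2 - 2 * W - W ^ 2 + 2 * W ^ 3 + W ^ 4) * (1 - 4 * W + 4 * W ^ 2 + W ^ 3 - W ^ 4) = ((2 : ℕ) : 𝓞 F) := by
      push_cast
      linear_combination (-W ^ 3 - W ^ 2 + 2 * W) * hW
    have hm := hpP
    rw [← hprod] at hm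
    rcases hI.mem_or_mem hm with hm | hm
    · refine principal_of_prime_norm P hI ((2 : ℤ) + (-2 : ℤ) * W + (-1 : ℤ) * W ^ 2 + (2 : ℤ) * W ^ 3 + (1 : ℤ) * W ^ 4) (by push_cast; convert hm using 1; ring) ?_
      rw [quin_norm b W hW hb]
      have : (quinMat (2 : ℤ) (-2) (-1) 2 1).det.natAbs = 2 := by decide +kernel
      rw [this]; norm_num
    · have h2m : ((1 : ℤ) : 𝓞 F) + (-4 : ℤ) * W + (4 : ℤ) * W ^ 2 + (1 : ℤ) * W ^ 3 + (-1 : ℤ) * W ^ 4 ∈ P := by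
        push_cast; convert hm using 1; ring
      have hq := pow_absNorm_sub_mem P hPbot W
      rw [hN] at hq
      have hk4 : k ≤ 6 := by
        by_contra h
        have : 2 ^ 7 ≤ 2 ^ k := Nat.pow_le_pow_right (by norm_num) (by omega)
        omega
      have hdet : (quinMat (1 : ℤ) (-4) 4 1 (-1)).det = 16 := by decide +kernel
      have hdv := dvd_of _ _ _ _ _ h2m
      rw [hdet] at hdv
      have c2 : ((2 : ℕ) : 𝓞 F) = 2 := by norm_num
      rw [c2] at hpP
      interval_cases k
      · exfalso
        apply hI.ne_top
        rw [Ideal.eq_top_iff_one]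
        have : (1 : 𝓞 F) = (W + W ^ 3) * (W ^ 2 ^ 2 - W) + (1 + W ^ 2 + W ^ 3) * (1 - 4 * W + 4 * W ^ 2 + W ^ 3 - W ^ 4)
          + (2 * W - 2 * W ^ 2 + W ^ 3 + W ^ 4 - 3 * W ^ 5) * 2 := by ring
        rw [this]
        exact Ideal.add_mem _ (Ideal.add_mem _ (Ideal.mul_mem_left _ _ hq) (Ideal.mul_mem_left _ _ hm)) (Ideal.mul_mem_left _ _ hpP)
      · exfalso
        apply hI.ne_top
        rw [Ideal.eq_top_iff_one]
        have : (1 : 𝓞 F) = W * (W ^ 2 ^ 3 - W) + (1 + W ^ 2 + W ^ 3 + W ^ 4 + W ^ 5) * (1 - 4 * W + 4 * W ^ 2 + W ^ 3 - W ^ 4)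
          + (2 * W - 2 * W ^ 2 + W ^ 3 - W ^ 5 - 2 * W ^ 7) * 2 := by ring
        rw [this]
        exact Ideal.add_mem _ (Ideal.add_mem _ (Ideal.mul_mem_left _ _ hq) (Ideal.mul_mem_left _ _ hm)) (Ideal.mul_mem_left _ _ hpP)
      · exact norm_of _ _ _ _ _ (by rw [hdet, hN]; norm_num) h2m
      · exfalso; revert hdv; norm_num
      · exfalso; revert hdv; norm_num
  · have hprod : (W - 2) * ((W ^ 2 + W - 1) * (W ^ 2 + W - 1)) = ((3 : ℕ) : 𝓞 F) := by
      push_cast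
      linear_combination hW
    have hm := hpP
    rw [← hprod] at hm
    rcases hI.mem_or_mem hm with hm | hm
    · exact deg1 2 (by norm_num) (by exact_mod_cast hm)
    · have hm : W ^ 2 + W - 1 ∈ P := (hI.mem_or_mem hm).elim id id
      have h2m : ((-1 : ℤ) : 𝓞 F) + (1 : ℤ) * W + (1 : ℤ) * W ^ 2 + (0 : ℤ) * W ^ 3 + (0 : ℤ) * W ^ 4 ∈ P := by
        push_cast; convert hm using 1; ring
      have hdet : (quinMat (-1 : ℤ) 1 1 0 0).det.natAbs = 9 := by decide +kernel
      have hdv := Int.natAbs_dvd_natAbs.2 (dvd_of _ _ _ _ _ h2m)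
      rw [hdet, Int.natAbs_natCast] at hdv
      have hk3 : k ≤ 2 := (Nat.pow_dvd_pow_iff_le_right (x := 3) (by norm_num)).1 (by simpa using hdv)
      have : k = 2 := by omega
      exact norm_of _ _ _ _ _ (by rw [hdet, hN, this]; norm_num) h2m
  · have hm : W ^ 5 ∈ P := by
      rw [hW]
      have : 5 * W ^ 3 - 5 * W + 5 = (W ^ 3 - W + 1) * ((5 : ℕ) : 𝓞 F) := by push_cast; ring
      rw [this]
      exact Ideal.mul_mem_left _ _ hpP
    exact deg1 0 (by norm_num) (by simpa using hI.mem_of_pow_mem _ hm)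
  · have hprod : (W + 2) * ((W ^ 2 - W - 1) * (W ^ 2 - W - 1)) = ((7 : ℕ) : 𝓞 F) := by
      push_cast
      linear_combination hW
    have hm := hpP
    rw [← hprod] at hm
    rcases hI.mem_or_mem hm with hm | hm
    · refine deg1 5 (by norm_num) ?_
      have : W - ((5 : ℕ) : 𝓞 F) = (W + 2) - ((7 : ℕ) : 𝓞 F) := by push_cast; ring
      rw [this]
      exact Ideal.sub_mem _ hm hpP
    · have hm : W ^ 2 - W - 1 ∈ P := (hI.mem_or_mem hm).elim id id
      have h2m : ((-1 : ℤ) : 𝓞 F) + (-1 : ℤ) * W + (1 : ℤ) * W ^ 2 + (0 : ℤ) * W ^ 3 + (0 : ℤ) * W ^ 4 ∈ P := by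
        push_cast; convert hm using 1; ring
      have hdet : (quinMat (-1 : ℤ) (-1) 1 0 0).det.natAbs = 49 := by decide +kernel
      have hdv := Int.natAbs_dvd_natAbs.2 (dvd_of _ _ _ _ _ h2m)
      rw [hdet, Int.natAbs_natCast] at hdv
      have hk3 : k ≤ 2 := (Nat.pow_dvd_pow_iff_le_right (x := 7) (by norm_num)).1 (by simpa using hdv)
      have : k = 2 := by omega
      exact norm_of _ _ _ _ _ (by rw [hdet, hN, this]; norm_num) h2m


/-- Truncated product of polynomials of degree at most four. -/
def tmul (a b : ℤ × ℤ × ℤ × ℤ × ℤ) : ℤ × ℤ × ℤ × ℤ × ℤ :=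
  (a.1 * b.1, a.1 * b.2.1 + a.2.1 * b.1, a.1 * b.2.2.1 + a.2.1 * b.2.1 + a.2.2.1 * b.1,
   a.1 * b.2.2.2.1 + a.2.1 * b.2.2.1 + a.2.2.1 * b.2.1 + a.2.2.2.1 * b.1,
   a.1 * b.2.2.2.2 + a.2.1 * b.2.2.2.1 + a.2.2.1 * b.2.2.1 + a.2.2.2.1 * b.2.1 + a.2.2.2.2 * b.1)

/-- Truncated power. -/
def tpow (a : ℤ × ℤ × ℤ × ℤ × ℤ) : ℕ → ℤ × ℤ × ℤ × ℤ × ℤ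
  | 0 => (1, 0, 0, 0, 0)
  | n + 1 => tmul (tpow a n) a

/-- Evaluation of a coefficient tuple at a ring element. -/
def tev {R : Type*} [CommRing R] (W : R) (a : ℤ × ℤ × ℤ × ℤ × ℤ) : R :=
  a.1 + a.2.1 * W + a.2.2.1 * W ^ 2 + a.2.2.2.1 * W ^ 3 + a.2.2.2.2 * W ^ 4

theorem tev_mul {R : Type*} [CommRing R] (W : R) (hW : W ^ 5 = 5 * W ^ 3 - 5 * W + 5)
    {x y : R} {a b : ℤ × ℤ × ℤ × ℤ × ℤ} (hx : ∃ β, x = tev W a + 5 * β) (hy : ∃ β, y = tev W b + 5 * β) :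
    ∃ β, x * y = tev W (tmul a b) + 5 * β := by
  obtain ⟨α, rfl⟩ := hx
  obtain ⟨β, rfl⟩ := hy
  obtain ⟨a0, a1, a2, a3, a4⟩ := a
  obtain ⟨b0, b1, b2, b3, b4⟩ := b
  refine ⟨α * tev W (b0, b1, b2, b3, b4) + β * tev W (a0, a1, a2, a3, a4) + 5 * α * β +
    (W ^ 3 - W + 1) * ((a1 * b4 + a2 * b3 + a3 * b2 + a4 * b1) + (a2 * b4 + a3 * b3 + a4 * b2) * W
      + (a3 * b4 + a4 * b3) * W ^ 2 + a4 * b4 * W ^ 3), ?_⟩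
  simp only [tev, tmul]
  push_cast
  linear_combination ((a1 * b4 + a2 * b3 + a3 * b2 + a4 * b1 : R) + (a2 * b4 + a3 * b3 + a4 * b2) * W
      + (a3 * b4 + a4 * b3) * W ^ 2 + a4 * b4 * W ^ 3) * hW

theorem tev_pow {R : Type*} [CommRing R] (W : R) (hW : W ^ 5 = 5 * W ^ 3 - 5 * W + 5)
    {x : R} {a : ℤ × ℤ × ℤ × ℤ × ℤ} (hx : ∃ β, x = tev W a + 5 * β) (n : ℕ) :
    ∃ β, x ^ n = tev W (tpow a n) + 5 * β := by
  induction n with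
  | zero => exact ⟨0, by simp [tev, tpow]⟩
  | succ n ih => rw [pow_succ]; exact tev_mul W hW ih hx

theorem quin_W_inv {R : Type*} [CommRing R] (W : R) (hW : W ^ 5 = 5 * W ^ 3 - 5 * W + 5) :
    (1 - W + W ^ 3) * (-9 + W + 6 * W ^ 2 - W ^ 4) = 1 := by
  linear_combination (2 - W ^ 2) * hW

theorem quin_d_inv {R : Type*} [CommRing R] (W : R) (hW : W ^ 5 = 5 * W ^ 3 - 5 * W + 5) :
    (-1 + 8 * W - 4 * W ^ 2 - 4 * W ^ 3 + 2 * W ^ 4) * (-481 + 252 * W + 120 * W ^ 2 - 424 * W ^ 3 - 202 * W ^ 4) = 1 := by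
  linear_combination (-96 + 724 * W - 40 * W ^ 2 - 404 * W ^ 3) * hW

theorem quin_prime_W {F : Type*} [Field F] [NumberField F] (b : Module.Basis (Fin 5) ℚ F) (W : 𝓞 F)
    (hW : W ^ 5 = 5 * W ^ 3 - 5 * W + 5) (hb : ∀ i : Fin 5, b i = (algebraMap (𝓞 F) F W) ^ (i : ℕ)) :
    Ideal.absNorm (Ideal.span {W}) = 5 ∧ (Ideal.span {W}).IsPrime := by
  have h1 : Ideal.absNorm (Ideal.span {W}) = 5 := by
    rw [Ideal.absNorm_span_singleton]
    have h := quin_norm b W hW hb 0 1 0 0 0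
    have : (quinMat (0 : ℤ) 1 0 0 0).det.natAbs = 5 := by decide +kernel
    have e : ((0 : ℤ) : 𝓞 F) + (1 : ℤ) * W + (0 : ℤ) * W ^ 2 + (0 : ℤ) * W ^ 3 + (0 : ℤ) * W ^ 4 = W := by
      push_cast; ring
    rw [e] at h
    rw [h, this]
  refine ⟨h1, ?_⟩
  apply Ideal.isPrime_of_irreducible_absNorm
  rw [h1]
  exact Nat.Prime.prime (by norm_num) |>.irreducible

theorem quin_five_mem {R : Type*} [CommRing R] (W : R) (hW : W ^ 5 = 5 * W ^ 3 - 5 * W + 5) :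
    (5 : R) = W ^ 5 * (-9 + W + 6 * W ^ 2 - W ^ 4) := by
  have := quin_W_inv W hW
  linear_combination (-5) * this + (9 - W - 6 * W ^ 2 + W ^ 4) * hW

theorem quin_mod5 {F : Type*} [Field F] [NumberField F] (b : Module.Basis (Fin 5) ℚ F) (W : 𝓞 F)
    (hW : W ^ 5 = 5 * W ^ 3 - 5 * W + 5) (hb : ∀ i : Fin 5, b i = (algebraMap (𝓞 F) F W) ^ (i : ℕ))
    (c0 c1 c2 c3 c4 : ℤ) (β : 𝓞 F) (h : tev W (c0, c1, c2, c3, c4) = 5 * β) :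
    (5 : ℤ) ∣ c0 ∧ (5 : ℤ) ∣ c1 ∧ (5 : ℤ) ∣ c2 ∧ (5 : ℤ) ∣ c3 ∧ (5 : ℤ) ∣ c4 := by
  obtain ⟨hN, hP⟩ := quin_prime_W b W hW hb
  have hW0 : W ≠ 0 := by
    rintro rfl
    simp at hW
  have h5 := quin_five_mem W hW
  have h5m : ((5 : ℕ) : 𝓞 F) ∈ Ideal.span {W} := by
    rw [Ideal.mem_span_singleton]
    exact ⟨W ^ 4 * (-9 + W + 6 * W ^ 2 - W ^ 4), by push_cast; linear_combination h5⟩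
  have key : ∀ (c : ℤ) (γ : 𝓞 F), (c : 𝓞 F) = W * γ → (5 : ℤ) ∣ c := by
    intro c γ hc
    refine int_mem_prime_norm _ hP 5 (by norm_num) h5m c ?_
    rw [Ideal.mem_span_singleton]
    exact ⟨γ, hc⟩
  obtain ⟨v, hv⟩ : ∃ v, (5 : 𝓞 F) = W ^ 5 * v := ⟨_, h5⟩
  simp only [tev] at h
  have h0 : (5 : ℤ) ∣ c0 := key c0 (W ^ 4 * v * β - (c1 + c2 * W + c3 * W ^ 2 + c4 * W ^ 3)) (by
    linear_combination h + β * hv)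
  obtain ⟨d0, rfl⟩ := h0
  have e1 : (c1 : 𝓞 F) + c2 * W + c3 * W ^ 2 + c4 * W ^ 3 = W ^ 4 * (v * (β - d0)) := by
    apply mul_left_cancel₀ hW0
    push_cast at h
    linear_combination h + (β - d0) * hv
  have h1 : (5 : ℤ) ∣ c1 := key c1 (W ^ 3 * (v * (β - d0)) - (c2 + c3 * W + c4 * W ^ 2)) (by
    linear_combination e1)
  obtain ⟨d1, rfl⟩ := h1
  have e2 : (c2 : 𝓞 F) + c3 * W + c4 * W ^ 2 = W ^ 3 * (v * (β - d0) - W * v * d1) := by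
    apply mul_left_cancel₀ hW0
    push_cast at e1
    linear_combination e1 - d1 * hv
  have h2 : (5 : ℤ) ∣ c2 := key c2 (W ^ 2 * (v * (β - d0) - W * v * d1) - (c3 + c4 * W)) (by
    linear_combination e2)
  obtain ⟨d2, rfl⟩ := h2
  have e3 : (c3 : 𝓞 F) + c4 * W = W ^ 2 * (v * (β - d0) - W * v * d1 - W ^ 2 * v * d2) := by
    apply mul_left_cancel₀ hW0
    push_cast at e2
    linear_combination e2 - d2 * hv
  have h3 : (5 : ℤ) ∣ c3 := key c3 (W * (v * (β - d0) - W * v * d1 - W ^ 2 * v * d2) - c4) (by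
    linear_combination e3)
  obtain ⟨d3, rfl⟩ := h3
  have e4 : (c4 : 𝓞 F) = W * (v * (β - d0) - W * v * d1 - W ^ 2 * v * d2 - W ^ 3 * v * d3) := by
    apply mul_left_cancel₀ hW0
    push_cast at e3
    linear_combination e3 - d3 * hv
  have h4 : (5 : ℤ) ∣ c4 := key c4 _ e4
  exact ⟨⟨_, rfl⟩, ⟨_, rfl⟩, ⟨_, rfl⟩, ⟨_, rfl⟩, h4⟩

theorem quin_fifth {F : Type*} [Field F] [NumberField F] (b : Module.Basis (Fin 5) ℚ F) (W : 𝓞 F)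
    (hW : W ^ 5 = 5 * W ^ 3 - 5 * W + 5) (hb : ∀ i : Fin 5, b i = (algebraMap (𝓞 F) F W) ^ (i : ℕ))
    (x : 𝓞 F) : ∃ (r : ℤ) (β : 𝓞 F), x ^ 5 = r + 5 * β := by
  obtain ⟨hN, hP⟩ := quin_prime_W b W hW hb
  obtain ⟨r, _, hr⟩ := exists_nat_mod (Ideal.span {W}) (by norm_num : Nat.Prime 5) hN x
  rw [Ideal.mem_span_singleton] at hr
  obtain ⟨y, hy⟩ := hr
  refine ⟨(r : ℤ) ^ 5, (r : 𝓞 F) ^ 4 * (W * y) + 2 * (r : 𝓞 F) ^ 3 * (W * y) ^ 2 + 2 * (r : 𝓞 F) ^ 2 * (W * y) ^ 3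
    + r * (W * y) ^ 4 + (W ^ 3 - W + 1) * y ^ 5, ?_⟩
  have : x = r + W * y := by linear_combination hy
  rw [this]
  push_cast
  linear_combination y ^ 5 * hW


/-- A coefficient tuple is constant modulo five. -/
def tconst (t : ℤ × ℤ × ℤ × ℤ × ℤ) : Bool :=
  t.2.1 % 5 == 0 && t.2.2.1 % 5 == 0 && t.2.2.2.1 % 5 == 0 && t.2.2.2.2 % 5 == 0

theorem tev_units_check : ∀ i : ℕ, i < 5 → ∀ j : ℕ, j < 5 →
    tconst (tmul (tpow (1, -1, 0, 1, 0) i) (tpow (-1, 8, -4, -4, 2) j)) = true → i = 0 ∧ j = 0 := by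
  decide +kernel

theorem quin_units {F : Type*} [Field F] [NumberField F] (b : Module.Basis (Fin 5) ℚ F) (W : 𝓞 F)
    (hW : W ^ 5 = 5 * W ^ 3 - 5 * W + 5) (hb : ∀ i : Fin 5, b i = (algebraMap (𝓞 F) F W) ^ (i : ℕ))
    (u : (𝓞 F)ˣ) : ∃ (i j : ℕ) (w : 𝓞 F), i < 5 ∧ j < 5 ∧
      (u : 𝓞 F) = tev W (1, -1, 0, 1, 0) ^ i * tev W (-1, 8, -4, -4, 2) ^ j * w ^ 5 := by
  have hτ : (algebraMap (𝓞 F) F W) ^ 5 = 5 * (algebraMap (𝓞 F) F W) ^ 3 - 5 * (algebraMap (𝓞 F) F W) + 5 := by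
    have := congrArg (algebraMap (𝓞 F) F) hW
    simpa only [map_pow, map_add, map_sub, map_mul, map_ofNat] using this
  have hfin : Module.finrank ℚ F = 5 := by
    rw [Module.finrank_eq_card_basis b]; simp
  have hv := quin_W_inv W hW
  have hd := quin_d_inv W hW
  obtain ⟨v, hv1⟩ : IsUnit (tev W (1, -1, 0, 1, 0)) := by
    refine IsUnit.of_mul_eq_one (-9 + W + 6 * W ^ 2 - W ^ 4) ?_
    rw [← hv]; simp only [tev]; push_cast; ring
  obtain ⟨d, hd1⟩ : IsUnit (tev W (-1, 8, -4, -4, 2)) := by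
    refine IsUnit.of_mul_eq_one (-481 + 252 * W + 120 * W ^ 2 - 424 * W ^ 3 - 202 * W ^ 4) ?_
    rw [← hd]; simp only [tev]; push_cast; ring
  obtain ⟨e, w, he, hu⟩ := unit_decomp (F := F) (by rw [hfin]; norm_num) (quin_rank b _ hτ hb) ![v, d]
    (by
      intro e w h
      rw [Fin.prod_univ_two] at h
      simp only [Matrix.cons_val_zero, Matrix.cons_val_one] at h
      have h1 : v ^ (e 0 % 5) * d ^ (e 1 % 5) = (w * (v ^ (e 0 / 5) * d ^ (e 1 / 5))⁻¹) ^ 5 := by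
        rw [mul_pow, ← h, inv_pow, eq_mul_inv_iff_mul_eq]
        conv_rhs => rw [← Nat.div_add_mod (e 0) 5, ← Nat.div_add_mod (e 1) 5]
        rw [pow_add, pow_add, pow_mul', pow_mul', mul_pow]
        simp only [mul_comm, mul_left_comm, mul_assoc]
      have h2 := congrArg (fun z : (𝓞 F)ˣ => (z : 𝓞 F)) h1
      simp only [Units.val_mul, Units.val_pow_eq_pow_val, hv1, hd1] at h2
      obtain ⟨r, β, hr⟩ := quin_fifth b W hW hb
        (((w * (v ^ (e 0 / 5) * d ^ (e 1 / 5))⁻¹ : (𝓞 F)ˣ)) : 𝓞 F)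
      simp only [Units.val_mul, Units.val_pow_eq_pow_val] at hr
      rw [hr] at h2
      obtain ⟨γ, hγ⟩ := tev_mul W hW (tev_pow W hW (a := (1, -1, 0, 1, 0)) ⟨0, by rw [mul_zero, add_zero]⟩ (e 0 % 5))
        (tev_pow W hW (a := (-1, 8, -4, -4, 2)) ⟨0, by rw [mul_zero, add_zero]⟩ (e 1 % 5))
      rw [h2] at hγ
      have hchk := tev_units_check (e 0 % 5) (Nat.mod_lt _ (by norm_num)) (e 1 % 5) (Nat.mod_lt _ (by norm_num))
      revert hγ hchk
      generalize tmul (tpow (1, -1, 0, 1, 0) (e 0 % 5)) (tpow (-1, 8, -4, -4, 2) (e 1 % 5)) = t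
      obtain ⟨t0, t1, t2, t3, t4⟩ := t
      intro hγ hchk
      have h5 := quin_mod5 b W hW hb (t0 - r) t1 t2 t3 t4 (β - γ) (by
        simp only [tev] at hγ ⊢; push_cast; linear_combination -hγ)
      obtain ⟨_, k1, k2, k3, k4⟩ := h5
      obtain ⟨m0, m1⟩ := hchk (by
        simp [tconst, Int.emod_eq_zero_of_dvd k1, Int.emod_eq_zero_of_dvd k2,
          Int.emod_eq_zero_of_dvd k3, Int.emod_eq_zero_of_dvd k4])
      intro i
      fin_cases i
      · exact Nat.dvd_of_mod_eq_zero m0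
      · exact Nat.dvd_of_mod_eq_zero m1) u
  refine ⟨e 0, e 1, w, he 0, he 1, ?_⟩
  rw [hu, Fin.prod_univ_two]
  simp [hv1, hd1]


theorem quin_tev_norm {F : Type*} [Field F] [NumberField F] (b : Module.Basis (Fin 5) ℚ F) (W : 𝓞 F)
    (hW : W ^ 5 = 5 * W ^ 3 - 5 * W + 5) (hb : ∀ i : Fin 5, b i = (algebraMap (𝓞 F) F W) ^ (i : ℕ))
    (c0 c1 c2 c3 c4 : ℤ) : Algebra.norm ℤ (tev W (c0, c1, c2, c3, c4)) = (quinMat c0 c1 c2 c3 c4).det :=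
  quin_norm b W hW hb c0 c1 c2 c3 c4

theorem prime_of_norm_prime {F : Type*} [Field F] [NumberField F] (g : 𝓞 F)
    (hN : (Algebra.norm ℤ g).natAbs.Prime) : Prime g := by
  have h1 : (Ideal.span {g}).IsPrime := by
    apply Ideal.isPrime_of_irreducible_absNorm
    rw [Ideal.absNorm_span_singleton]
    exact hN
  have h0 : g ≠ 0 := by
    rintro rfl
    simp at hN
    exact Nat.not_prime_zero hN
  exact (Ideal.span_singleton_prime h0).1 h1

theorem quin_q_prime {F : Type*} [Field F] [NumberField F] (b : Module.Basis (Fin 5) ℚ F) (W : 𝓞 F)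
    (hW : W ^ 5 = 5 * W ^ 3 - 5 * W + 5) (hb : ∀ i : Fin 5, b i = (algebraMap (𝓞 F) F W) ^ (i : ℕ))
    (c0 c1 c2 c3 c4 : ℤ) (p : ℕ) (hp : p.Prime) (hN : (quinMat c0 c1 c2 c3 c4).det.natAbs = p ^ 2)
    (hr : ∀ r : ℕ, r < p → ((r : ℤ) ^ 5 - 5 * (r : ℤ) ^ 3 + 5 * r - 5) % (p : ℤ) = 0 →
      (c0 + c1 * r + c2 * r ^ 2 + c3 * r ^ 3 + c4 * r ^ 4) % (p : ℤ) ≠ 0) :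
    Prime (tev W (c0, c1, c2, c3, c4)) := by
  have hn := quin_tev_norm b W hW hb c0 c1 c2 c3 c4
  obtain ⟨q, hq⟩ : ∃ q, q = tev W (c0, c1, c2, c3, c4) := ⟨_, rfl⟩
  rw [← hq] at hn ⊢
  rw [← hn] at hN
  have hq0 : q ≠ 0 := by
    rintro rfl
    have := pow_pos hp.pos 2
    simp at hN
    omega
  have hqu : Ideal.span {q} ≠ ⊤ := by
    intro h
    have := Ideal.absNorm_span_singleton q
    rw [h, hN, Ideal.absNorm_top] at this
    have := Nat.one_lt_pow (by norm_num : 2 ≠ 0) hp.one_lt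
    omega
  obtain ⟨P, hP, hle⟩ := Ideal.exists_le_maximal _ hqu
  have hqP : q ∈ P := hle (Ideal.mem_span_singleton_self q)
  have hd : Ideal.absNorm P ∣ p ^ 2 := by
    rw [← hN]
    exact Int.natCast_dvd.1 (Ideal.absNorm_dvd_norm_of_mem hqP)
  obtain ⟨k, hk, hPk⟩ := (Nat.dvd_prime_pow hp).1 hd
  have hPp : P.IsPrime := hP.isPrime
  interval_cases k
  · exact absurd (Ideal.absNorm_eq_one_iff.1 (by simpa using hPk)) hP.ne_top
  · exfalso
    rw [pow_one] at hPk
    obtain ⟨r, hrp, hmem⟩ := exists_nat_mod P hp hPk W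
    have hpP : (p : 𝓞 F) ∈ P := by
      have := Ideal.absNorm_mem P
      rwa [hPk] at this
    have h1 : ((((r : ℤ) ^ 5 - 5 * (r : ℤ) ^ 3 + 5 * r - 5 : ℤ)) : 𝓞 F) ∈ P := by
      have : ((((r : ℤ) ^ 5 - 5 * (r : ℤ) ^ 3 + 5 * r - 5 : ℤ)) : 𝓞 F) =
        (- (W ^ 4 + W ^ 3 * r + W ^ 2 * r ^ 2 + W * r ^ 3 + r ^ 4) + 5 * (W ^ 2 + W * r + r ^ 2) - 5) * (W - r) := by
        push_cast
        linear_combination hW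
      rw [this]
      exact Ideal.mul_mem_left _ _ hmem
    have h2 : (((c0 + c1 * r + c2 * r ^ 2 + c3 * r ^ 3 + c4 * r ^ 4 : ℤ)) : 𝓞 F) ∈ P := by
      have : (((c0 + c1 * r + c2 * r ^ 2 + c3 * r ^ 3 + c4 * r ^ 4 : ℤ)) : 𝓞 F) =
        q - (c1 + c2 * (W + r) + c3 * (W ^ 2 + W * r + r ^ 2) + c4 * (W ^ 3 + W ^ 2 * r + W * r ^ 2 + r ^ 3)) * (W - r) := by
        rw [hq]; simp only [tev]
        push_cast
        ring
      rw [this]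
      exact Ideal.sub_mem _ hqP (Ideal.mul_mem_left _ _ hmem)
    have d1 := int_mem_prime_norm P hPp p hp hpP _ h1
    have d2 := int_mem_prime_norm P hPp p hp hpP _ h2
    exact hr r hrp (Int.emod_eq_zero_of_dvd d1) (Int.emod_eq_zero_of_dvd d2)
  · have hdv : P ∣ Ideal.span {q} := Ideal.dvd_span_singleton.2 hqP
    obtain ⟨J, hJ⟩ := hdv
    have h1 : Ideal.absNorm (Ideal.span {q}) = Ideal.absNorm P * Ideal.absNorm J := by
      rw [hJ, map_mul]
    rw [Ideal.absNorm_span_singleton, hN, hPk] at h1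
    have h3 : Ideal.absNorm J = 1 := by
      have : p ^ 2 * Ideal.absNorm J = p ^ 2 * 1 := by omega
      exact Nat.eq_of_mul_eq_mul_left (pow_pos hp.pos 2) this
    rw [Ideal.absNorm_eq_one_iff.1 h3, Ideal.mul_top] at hJ
    rw [← Ideal.span_singleton_prime hq0, hJ]
    exact hPp

theorem quin_val {a b c d f : ℕ} {cc X Y : ℕ} (hcc : cc = 1 ∨ cc = 3) (hX : X ≠ 0) (hY : Y ≠ 0)
    (h : 3 ^ a * 9 ^ b * 7 ^ c * 49 ^ d * 5 ^ f * X ^ 5 = cc * Y ^ 5) :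
    (∃ e0 k, e0 < 2 ∧ a + 2 * b = 5 * k + e0) ∧ (∃ k, c + 2 * d = 5 * k) ∧ ∃ k, f = 5 * k := by
  have h' : 3 ^ (a + 2 * b) * (7 ^ (c + 2 * d) * (5 ^ f * X ^ 5)) = cc * Y ^ 5 := by
    rw [← h, pow_add, pow_add, pow_mul, pow_mul]; norm_num; ring
  have key : ∀ p : ℕ, p.Prime → (a + 2 * b) * padicValNat p 3 + ((c + 2 * d) * padicValNat p 7 +
      (f * padicValNat p 5 + 5 * padicValNat p X)) = padicValNat p cc + 5 * padicValNat p Y := by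
    intro p hp
    have : Fact p.Prime := ⟨hp⟩
    have hcc0 : cc ≠ 0 := by omega
    have := congrArg (padicValNat p) h'
    rw [padicValNat.mul (by positivity) (by positivity), padicValNat.mul (by positivity) (by positivity),
      padicValNat.mul (by positivity) (by positivity), padicValNat.mul hcc0 (by positivity),
      padicValNat.pow, padicValNat.pow, padicValNat.pow, padicValNat.pow, padicValNat.pow] at this
    exact this
  have i3 : Fact (Nat.Prime 3) := ⟨by norm_num⟩
  have i5 : Fact (Nat.Prime 5) := ⟨by norm_num⟩
  have i7 : Fact (Nat.Prime 7) := ⟨by norm_num⟩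
  have k3 := key 3 (by norm_num)
  have k5 := key 5 (by norm_num)
  have k7 := key 7 (by norm_num)
  simp only [padicValNat_self, padicValNat_primes (p := 3) (q := 5) (by norm_num),
    padicValNat_primes (p := 3) (q := 7) (by norm_num), padicValNat_primes (p := 5) (q := 3) (by norm_num),
    padicValNat_primes (p := 5) (q := 7) (by norm_num), padicValNat_primes (p := 7) (q := 3) (by norm_num),
    padicValNat_primes (p := 7) (q := 5) (by norm_num)] at k3 k5 k7
  have c5 : padicValNat 5 cc = 0 := by
    rcases hcc with rfl | rfl
    · simp
    · exact padicValNat_primes (by norm_num)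
  have c7 : padicValNat 7 cc = 0 := by
    rcases hcc with rfl | rfl
    · simp
    · exact padicValNat_primes (by norm_num)
  have c3 : padicValNat 3 cc < 2 := by
    rcases hcc with rfl | rfl
    · simp
    · simp
  refine ⟨⟨padicValNat 3 cc, (a + 2 * b) / 5, c3, ?_⟩, ⟨(c + 2 * d) / 5, ?_⟩, ⟨f / 5, ?_⟩⟩ <;> omega


theorem quin_sel {F : Type*} [Field F] [NumberField F] (b : Module.Basis (Fin 5) ℚ F) (W : 𝓞 F)
    (hW : W ^ 5 = 5 * W ^ 3 - 5 * W + 5) (hb : ∀ i : Fin 5, b i = (algebraMap (𝓞 F) F W) ^ (i : ℕ))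
    (lam : 𝓞 F) (hlam : lam ≠ 0) (c w : ℤ) (hc : c = 1 ∨ c = 3) (hw : w ≠ 0)
    (hN : Algebra.norm ℤ lam = c * w ^ 5)
    (hQ : ∀ Q : 𝓞 F, Prime Q → ¬ Q ∣ 3 → ¬ Q ∣ 7 → ¬ Q ∣ 5 → 5 ∣ multiplicity Q lam) :
    ∃ (N0 : ℤ) (i j e : ℕ) (r : ℤ) (β : 𝓞 F), ¬ (5 : ℤ) ∣ N0 ∧ i < 5 ∧ j < 5 ∧ e < 2 ∧
      N0 * lam = r * tev W (tmul (tmul (tpow (1, -1, 0, 1, 0) i) (tpow (-1, 8, -4, -4, 2) j))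
        (tpow (-2, 1, 0, 0, 0) e)) + 5 * β := by
  have := quin_pid b W hW hb
  have n3 : Algebra.norm ℤ (tev W (-2, 1, 0, 0, 0)) = (quinMat (-2) 1 0 0 0).det := quin_tev_norm b W hW hb _ _ _ _ _
  have n3q : Algebra.norm ℤ (tev W (-1, 1, 1, 0, 0)) = (quinMat (-1) 1 1 0 0).det := quin_tev_norm b W hW hb _ _ _ _ _
  have n7 : Algebra.norm ℤ (tev W (2, 1, 0, 0, 0)) = (quinMat 2 1 0 0 0).det := quin_tev_norm b W hW hb _ _ _ _ _
  have n7q : Algebra.norm ℤ (tev W (-1, -1, 1, 0, 0)) = (quinMat (-1) (-1) 1 0 0).det := quin_tev_norm b W hW hb _ _ _ _ _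
  have m3 : (Algebra.norm ℤ (tev W (-2, 1, 0, 0, 0))).natAbs = 3 := by rw [n3]; decide +kernel
  have m3q : (Algebra.norm ℤ (tev W (-1, 1, 1, 0, 0))).natAbs = 9 := by rw [n3q]; decide +kernel
  have m7 : (Algebra.norm ℤ (tev W (2, 1, 0, 0, 0))).natAbs = 7 := by rw [n7]; decide +kernel
  have m7q : (Algebra.norm ℤ (tev W (-1, -1, 1, 0, 0))).natAbs = 49 := by rw [n7q]; decide +kernel
  have m5 : (Algebra.norm ℤ W).natAbs = 5 := by
    rw [← Ideal.absNorm_span_singleton]; exact (quin_prime_W b W hW hb).1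
  have p3 : Prime (tev W (-2, 1, 0, 0, 0)) := prime_of_norm_prime _ (by rw [m3]; norm_num)
  have p7 : Prime (tev W (2, 1, 0, 0, 0)) := prime_of_norm_prime _ (by rw [m7]; norm_num)
  have p5 : Prime W := prime_of_norm_prime _ (by rw [m5]; norm_num)
  have p3q : Prime (tev W (-1, 1, 1, 0, 0)) := quin_q_prime b W hW hb _ _ _ _ _ 3 (by norm_num)
    (by rw [← n3q, m3q]; norm_num) (by decide +kernel)
  have p7q : Prime (tev W (-1, -1, 1, 0, 0)) := quin_q_prime b W hW hb _ _ _ _ _ 7 (by norm_num)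
    (by rw [← n7q, m7q]; norm_num) (by decide +kernel)
  have e3 : tev W (-2, 1, 0, 0, 0) * tev W (-1, 1, 1, 0, 0) ^ 2 = 3 := by
    simp only [tev]; push_cast; linear_combination hW
  have e7 : tev W (2, 1, 0, 0, 0) * tev W (-1, -1, 1, 0, 0) ^ 2 = 7 := by
    simp only [tev]; push_cast; linear_combination hW
  have h35 : (Algebra.norm ℤ (tev W (-2, 1, 0, 0, 0))).natAbs = 3 := m3
  obtain ⟨g3, hg3⟩ : ∃ x, x = tev W (-2, 1, 0, 0, 0) := ⟨_, rfl⟩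
  obtain ⟨q3, hq3⟩ : ∃ x, x = tev W (-1, 1, 1, 0, 0) := ⟨_, rfl⟩
  obtain ⟨g7, hg7⟩ : ∃ x, x = tev W (2, 1, 0, 0, 0) := ⟨_, rfl⟩
  obtain ⟨q7, hq7⟩ : ∃ x, x = tev W (-1, -1, 1, 0, 0) := ⟨_, rfl⟩
  rw [← hg3] at m3 p3 e3
  rw [← hq3] at m3q p3q e3
  rw [← hg7] at m7 p7 e7
  rw [← hq7] at m7q p7q e7
  obtain ⟨u, e, μ, hdec⟩ := selmer_decomp (![g3, q3, g7, q7, W]) lam hlam (by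
    intro Q hQp hna
    apply hQ Q hQp
    · intro hd
      rw [← e3] at hd
      rcases hQp.dvd_or_dvd hd with h | h
      · exact hna 0 (hQp.associated_of_dvd p3 h)
      · exact hna 1 (hQp.associated_of_dvd p3q (hQp.dvd_of_dvd_pow h))
    · intro hd
      rw [← e7] at hd
      rcases hQp.dvd_or_dvd hd with h | h
      · exact hna 2 (hQp.associated_of_dvd p7 h)
      · exact hna 3 (hQp.associated_of_dvd p7q (hQp.dvd_of_dvd_pow h))
    · intro hd
      rw [quin_five_mem W hW] at hd
      rcases hQp.dvd_or_dvd hd with h | h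
      · exact hna 4 (hQp.associated_of_dvd p5 (hQp.dvd_of_dvd_pow h))
      · apply hQp.not_isUnit
        apply isUnit_of_dvd_one
        rw [← quin_W_inv W hW]
        exact h.mul_left _)
  rw [Fin.prod_univ_five] at hdec
  simp only [Matrix.cons_val_zero, Matrix.cons_val_one, Matrix.cons_val] at hdec
  have hμ : μ ≠ 0 := by rintro rfl; apply hlam; rw [hdec]; simp
  have hval : 3 ^ e 0 * 9 ^ e 1 * 7 ^ e 2 * 49 ^ e 3 * 5 ^ e 4 * (Algebra.norm ℤ μ).natAbs ^ 5 = c.natAbs * w.natAbs ^ 5 := by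
    have h1 := congrArg (fun z => (Algebra.norm ℤ z).natAbs) hdec
    simp only [hN, map_mul, map_pow, Int.natAbs_mul, Int.natAbs_pow, m3, m3q, m7, m7q, m5] at h1
    have hu : (Algebra.norm ℤ (u : 𝓞 F)).natAbs = 1 :=
      Int.isUnit_iff_natAbs_eq.1 ((u.isUnit).map (Algebra.norm ℤ))
    rw [hu, one_mul] at h1
    exact h1.symm
  obtain ⟨⟨e0, k3, he0, hk3⟩, ⟨k7, hk7⟩, ⟨k5, hk5⟩⟩ := quin_val (by omega)
    (by simpa using hμ) (by simpa using hw) hval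
  obtain ⟨i, j, w', hi, hj, hu⟩ := quin_units b W hW hb u
  obtain ⟨r, β, hr⟩ := quin_fifth b W hW hb (w' * (g3 ^ k3 * q3 ^ e 1 * g7 ^ k7 * q7 ^ e 3 * W ^ k5 * μ))
  have t1 : ∃ β, tev W (1, -1, 0, 1, 0) ^ i = tev W (tpow (1, -1, 0, 1, 0) i) + 5 * β :=
    tev_pow W hW ⟨0, by simp⟩ i
  have t2 : ∃ β, tev W (-1, 8, -4, -4, 2) ^ j = tev W (tpow (-1, 8, -4, -4, 2) j) + 5 * β :=
    tev_pow W hW ⟨0, by simp⟩ j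
  have t3 : ∃ β, g3 ^ e0 = tev W (tpow (-2, 1, 0, 0, 0) e0) + 5 * β :=
    tev_pow W hW ⟨0, by simp [hg3]⟩ e0
  obtain ⟨γ, hγ⟩ := tev_mul W hW (tev_mul W hW t1 t2) t3
  refine ⟨9 ^ e 1 * 49 ^ e 3, i, j, e0, r, r * γ + β * (tev W (1, -1, 0, 1, 0) ^ i * tev W (-1, 8, -4, -4, 2) ^ j * g3 ^ e0), ?_, hi, hj, he0, ?_⟩
  · intro h
    rcases Int.Prime.dvd_mul' (by norm_num) h with h | h
    · exact absurd (Int.Prime.dvd_pow' (by norm_num) h) (by norm_num)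
    · exact absurd (Int.Prime.dvd_pow' (by norm_num) h) (by norm_num)
  · have hkey : (9 : 𝓞 F) ^ e 1 * 49 ^ e 3 * lam =
        (tev W (1, -1, 0, 1, 0) ^ i * tev W (-1, 8, -4, -4, 2) ^ j * g3 ^ e0) *
        (w' * (g3 ^ k3 * q3 ^ e 1 * g7 ^ k7 * q7 ^ e 3 * W ^ k5 * μ)) ^ 5 := by
      have s9 : (9 : 𝓞 F) = g3 ^ 2 * q3 ^ 4 := by
        linear_combination (-3 - g3 * q3 ^ 2) * e3
      have s49 : (49 : 𝓞 F) = g7 ^ 2 * q7 ^ 4 := by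
        linear_combination (-7 - g7 * q7 ^ 2) * e7
      have a3 : g3 ^ (e 0) * (g3 ^ 2) ^ (e 1) = (g3 ^ k3) ^ 5 * g3 ^ e0 := by
        rw [← pow_mul, ← pow_add, hk3, pow_add, pow_mul']
      have a7 : g7 ^ (e 2) * (g7 ^ 2) ^ (e 3) = (g7 ^ k7) ^ 5 := by
        rw [← pow_mul, ← pow_add, hk7, pow_mul']
      rw [s9, s49, mul_pow, mul_pow, hdec, hu, hk5]
      calc _ = (tev W (1, -1, 0, 1, 0) ^ i * tev W (-1, 8, -4, -4, 2) ^ j) * (g3 ^ (e 0) * (g3 ^ 2) ^ (e 1)) *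
            (g7 ^ (e 2) * (g7 ^ 2) ^ (e 3)) * (w' * (q3 ^ e 1 * q7 ^ e 3 * W ^ k5 * μ)) ^ 5 := by ring
        _ = _ := by rw [a3, a7]; ring
    push_cast
    rw [hkey, hr]
    linear_combination (r : 𝓞 F) * hγ


theorem quin_dvd_D {R : Type*} [CommRing R] {Q : R} (hQ : Prime Q) (m n A B A' B' Fm Fn : ℤ) (hmn : IsCoprime m n)
    (h1 : A * Fm + B * Fn = 972405 * m ^ 7) (h2 : A' * Fm + B' * Fn = 972405 * n ^ 7)
    (hm : Q ∣ (Fm : R)) (hn : Q ∣ (Fn : R)) : Q ∣ 3 ∨ Q ∣ 7 ∨ Q ∣ 5 := by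
  have k1 : Q ∣ (972405 : R) * m ^ 7 := by
    have h := congrArg (Int.cast : ℤ → R) h1
    push_cast at h
    rw [← h]
    exact dvd_add (hm.mul_left _) (hn.mul_left _)
  have k2 : Q ∣ (972405 : R) * n ^ 7 := by
    have h := congrArg (Int.cast : ℤ → R) h2
    push_cast at h
    rw [← h]
    exact dvd_add (hm.mul_left _) (hn.mul_left _)
  by_cases hD : Q ∣ (972405 : R)
  · have e : (972405 : R) = 3 ^ 4 * (5 * 7 ^ 4) := by norm_num
    rw [e] at hD
    rcases hQ.dvd_or_dvd hD with h | h
    · exact Or.inl (hQ.dvd_of_dvd_pow h)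
    rcases hQ.dvd_or_dvd h with h | h
    · exact Or.inr (Or.inr h)
    · exact Or.inr (Or.inl (hQ.dvd_of_dvd_pow h))
  · exfalso
    exact int_bezout_prime hQ hmn (hQ.dvd_of_dvd_pow ((hQ.dvd_or_dvd k1).resolve_left hD))
      (hQ.dvd_of_dvd_pow ((hQ.dvd_or_dvd k2).resolve_left hD))

theorem quin_ne_zero {F : Type*} [Field F] [NumberField F] (b : Module.Basis (Fin 5) ℚ F) (W : 𝓞 F)
    (hW : W ^ 5 = 5 * W ^ 3 - 5 * W + 5) (hb : ∀ i : Fin 5, b i = (algebraMap (𝓞 F) F W) ^ (i : ℕ))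
    (c0 c1 c2 c3 c4 : ℤ) (hf : ¬ ((5 : ℤ) ∣ c0 ∧ (5 : ℤ) ∣ c1 ∧ (5 : ℤ) ∣ c2 ∧ (5 : ℤ) ∣ c3 ∧ (5 : ℤ) ∣ c4)) :
    tev W (c0, c1, c2, c3, c4) ≠ 0 := by
  intro h
  exact hf (quin_mod5 b W hW hb c0 c1 c2 c3 c4 0 (by rw [h]; simp))


def qchk1 (t : ℤ × ℤ × ℤ × ℤ × ℤ) : Bool :=
  t.2.2.2.1 % 5 == 0 && (t.2.2.1 + 2 * t.1) % 5 == 0 && (t.1 - 2 * t.2.2.2.2) % 5 == 0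

theorem quin_check1 : ∀ i : ℕ, i < 5 → ∀ j : ℕ, j < 5 → ∀ e : ℕ, e < 2 →
    qchk1 (tmul (tmul (tpow (1, -1, 0, 1, 0) i) (tpow (-1, 8, -4, -4, 2) j)) (tpow (-2, 1, 0, 0, 0) e)) = false := by
  intro i hi j hj e he
  interval_cases i <;> interval_cases j <;> interval_cases e <;> simp [tpow, tmul, qchk1]

theorem quin_norm1 (m n : ℤ) : (quinMat (-2 * n) (m + 3 * n) (4 * n) (0) (-n)).det =
    5 * XX m n + 13 * YY m n := by
  simp [quinMat, Matrix.det_succ_row_zero, Fin.sum_univ_succ, Fin.succAbove, XX, YY]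
  ring

set_option maxHeartbeats 1000000 in
theorem M_case1 {c : ℤ} (hc : c = 1 ∨ c = 3) (m n w : ℤ) (hmn : IsCoprime m n)
    (h : 5 * XX m n + 13 * YY m n = c * w ^ 5) : False := by
  obtain ⟨F, _, _, b, W, hW, hb⟩ := quin_exists
  have := quin_pid b W hW hb
  have h5mn : ¬ ((5 : ℤ) ∣ m ∧ (5 : ℤ) ∣ n) := by
    rintro ⟨h1, h2⟩
    have := hmn.isUnit_of_dvd' h1 h2
    rw [Int.isUnit_iff] at this
    omega
  obtain ⟨lam, hlam⟩ : ∃ x, x = tev W (-2 * n, m + 3 * n, 4 * n, 0, -n) := ⟨_, rfl⟩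
  have hlam0 : lam ≠ 0 := by
    rw [hlam]
    refine quin_ne_zero b W hW hb _ _ _ _ _ ?_
    rintro ⟨h0, h1, h2, h3, h4⟩
    apply h5mn
    constructor <;> omega
  have hN : Algebra.norm ℤ lam = c * w ^ 5 := by
    rw [hlam, quin_tev_norm b W hW hb, ← h]
    exact quin_norm1 m n
  have hw : w ≠ 0 := by
    rintro rfl
    rw [zero_pow (by norm_num), mul_zero, Algebra.norm_eq_zero_iff] at hN
    exact hlam0 hN
  obtain ⟨lam', hlam'⟩ : ∃ x : 𝓞 F, x = ((5) + (0) * W ^ 1 + (-5) * W ^ 2 + (0) * W ^ 3 + (1) * W ^ 4) * (m ^ 4 * n ^ 0) + ((40) + (-10) * W ^ 1 + (-55) * W ^ 2 + (2) * W ^ 3 + (12) * W ^ 4) * (m ^ 3 * n ^ 1) + ((105) + (-15) * W ^ 1 + (-201) * W ^ 2 + (3) * W ^ 3 + (48) * W ^ 4) * (m ^ 2 * n ^ 2) + ((130) + (3) * W ^ 1 + (-346) * W ^ 2 + (-9) * W ^ 3 + (92) * W ^ 4) * (m ^ 1 * n ^ 3) + ((71) + (4) * W ^ 1 + (-212) *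 W ^ 2 + (-5) * W ^ 3 + (63) * W ^ 4) * (m ^ 0 * n ^ 4) := ⟨_, rfl⟩
  have hc0 : c ≠ 0 := by rcases hc with rfl | rfl <;> norm_num
  have hprod : lam * lam' = (c : 𝓞 F) * (w : 𝓞 F) ^ 5 := by
    have h' := congrArg (Int.cast : ℤ → 𝓞 F) h
    simp only [XX, YY] at h'
    push_cast at h'
    rw [← h', hlam, hlam']
    simp only [tev]
    push_cast
    linear_combination (m ^ 5 + (15 + 4 * W - W ^ 3) * m ^ 4 * n + (92 + 43 * W - 2 * W ^ 2 - 12 * W ^ 3) * m ^ 3 * n ^ 2 + (248 + 153 * W - 3 * W ^ 2 - 48 * W ^ 3) * m ^ 2 * n ^ 3 + (345 + 254 * W + 9 * W ^ 2 - 92 * W ^ 3) * m * n ^ 4 + (190 + 149 * W + 5 * W ^ 2 - 63 * W ^ 3) * n ^ 5) * hW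
  have hcO : (c : 𝓞 F) ≠ 0 := by exact_mod_cast hc0
  have hwO : (w : 𝓞 F) ≠ 0 := by exact_mod_cast hw
  have hne : lam * lam' ≠ 0 := by
    rw [hprod]; exact mul_ne_zero hcO (pow_ne_zero _ hwO)
  obtain ⟨N0, i, j, e, r, β, hN0, hi, hj, he, hfin⟩ := quin_sel b W hW hb lam hlam0 c w hc hw hN (by
    intro Q hQ h3 h7 h5
    refine mult_dvd_of_mul_eq hQ hlam0 (right_ne_zero_of_mul hne) hwO hcO hprod ?_ ?_
    · rcases hc with rfl | rfl
      · intro hd; apply hQ.not_isUnit; apply isUnit_of_dvd_one; simpa using hd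
      · intro hd; apply h3; simpa using hd
    · intro d1 d2
      have hm : Q ∣ (((25) * m ^ 4 + (260) * m ^ 3 * n ^ 1 + (1140) * m ^ 2 * n ^ 2 + (2060) * m ^ 1 * n ^ 3 + (1465) * n ^ 4 : ℤ) : 𝓞 F) := by
        have : (((25) * m ^ 4 + (260) * m ^ 3 * n ^ 1 + (1140) * m ^ 2 * n ^ 2 + (2060) * m ^ 1 * n ^ 3 + (1465) * n ^ 4 : ℤ) : 𝓞 F) = ((0) + (1) * W ^ 1 + (0) * W ^ 2 + (0) * W ^ 3 + (0) * W ^ 4) * lam' + (((5) + (0) * W ^ 1 + (-5) * W ^ 2 + (0) * W ^ 3 + (1) * W ^ 4) * (4 * m ^ 3 * n ^ 0) + ((40) + (-10) * W ^ 1 + (-55) * W ^ 2 + (2) * W ^ 3 + (12) * W ^ 4) * (3 * m ^ 2 * n ^ 1) + ((105) + (-15) * W ^ 1 + (-201) * W ^ 2 + (3) * W ^ 3 + (48) * W ^ 4) * (2 * m ^ 1 * n ^ 2) + ((130) + (3) * W ^ 1 + (-346) * W ^ 2 + (-9) * W ^ 3 + (92) * W ^ 4) * (1 * m ^ 0 *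 n ^ 3)) * lam := by
          rw [hlam, hlam']
          simp only [tev]
          push_cast
          linear_combination (-(((1) + (0) * W ^ 1 + (0) * W ^ 2 + (0) * W ^ 3) * (5 * m ^ 4 * n ^ 0) + ((15) + (4) * W ^ 1 + (0) * W ^ 2 + (-1) * W ^ 3) * (4 * m ^ 3 * n ^ 1) + ((92) + (43) * W ^ 1 + (-2) * W ^ 2 + (-12) * W ^ 3) * (3 * m ^ 2 * n ^ 2) + ((248) + (153) * W ^ 1 + (-3) * W ^ 2 + (-48) * W ^ 3) * (2 * m ^ 1 * n ^ 3) + ((345) + (254) * W ^ 1 + (9) * W ^ 2 + (-92) * W ^ 3) * (1 * m ^ 0 * n ^ 4))) * hW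
        rw [this]
        exact dvd_add (d2.mul_left _) (d1.mul_left _)
      have hn : Q ∣ (((65) * m ^ 4 + (760) * m ^ 3 * n ^ 1 + (3090) * m ^ 2 * n ^ 2 + (5860) * m ^ 1 * n ^ 3 + (4040) * n ^ 4 : ℤ) : 𝓞 F) := by
        have : (((65) * m ^ 4 + (760) * m ^ 3 * n ^ 1 + (3090) * m ^ 2 * n ^ 2 + (5860) * m ^ 1 * n ^ 3 + (4040) * n ^ 4 : ℤ) : 𝓞 F) = ((-2) + (3) * W ^ 1 + (4) * W ^ 2 + (0) * W ^ 3 + (-1) * W ^ 4) * lam' + (((40) + (-10) * W ^ 1 + (-55) * W ^ 2 + (2) * W ^ 3 + (12) * W ^ 4) * (1 * m ^ 3 * n ^ 0) + ((105) + (-15) * W ^ 1 + (-201) * W ^ 2 + (3) * W ^ 3 + (48) * W ^ 4) * (2 * m ^ 2 * n ^ 1) + ((130) + (3) * W ^ 1 + (-346) * W ^ 2 + (-9) * W ^ 3 + (92) * W ^ 4) * (3 * m ^ 1 * n ^ 2) + ((71) + (4) * W ^ 1 + (-212) * W ^ 2 + (-5) * W ^ 3 + (63) * W ^ 4) * (4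 * m ^ 0 * n ^ 3)) * lam := by
          rw [hlam, hlam']
          simp only [tev]
          push_cast
          linear_combination (-(((15) + (4) * W ^ 1 + (0) * W ^ 2 + (-1) * W ^ 3) * (1 * m ^ 4 * n ^ 0) + ((92) + (43) * W ^ 1 + (-2) * W ^ 2 + (-12) * W ^ 3) * (2 * m ^ 3 * n ^ 1) + ((248) + (153) * W ^ 1 + (-3) * W ^ 2 + (-48) * W ^ 3) * (3 * m ^ 2 * n ^ 2) + ((345) + (254) * W ^ 1 + (9) * W ^ 2 + (-92) * W ^ 3) * (4 * m ^ 1 * n ^ 3) + ((190) + (149) * W ^ 1 + (5) * W ^ 2 + (-63) * W ^ 3) * (5 * m ^ 0 * n ^ 4))) * hW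
        rw [this]
        exact dvd_add (d2.mul_left _) (d1.mul_left _)
      have := quin_dvd_D hQ m n ((417308) * m ^ 3 + (1773360) * m ^ 2 * n ^ 1 + (3132000) * m ^ 1 * n ^ 2 + (2020000) * n ^ 3) ((-145543) * m ^ 3 + (-649560) * m ^ 2 * n ^ 1 + (-1103250) * m ^ 1 * n ^ 2 + (-732500) * n ^ 3) ((260) * m ^ 3 + (2910) * m ^ 2 * n ^ 1 + (10632) * m ^ 1 * n ^ 2 + (15205) * n ^ 3) ((-100) * m ^ 3 + (-990) * m ^ 2 * n ^ 1 + (-3960) * m ^ 1 * n ^ 2 + (-5273) * n ^ 3) _ _ hmn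
        (by ring) (by ring) hm hn
      rcases this with h | h | h
      · exact h3 h
      · exact h7 h
      · exact h5 h)
  have hch := quin_check1 i hi j hj e he
  obtain ⟨t, ht⟩ : ∃ t, t = tmul (tmul (tpow (1, -1, 0, 1, 0) i) (tpow (-1, 8, -4, -4, 2) j)) (tpow (-2, 1, 0, 0, 0) e) := ⟨_, rfl⟩
  rw [← ht] at hch hfin
  obtain ⟨t0, t1, t2, t3, t4⟩ := t
  have hz : tev W (N0 * (-2 * n) - r * t0, N0 * (m + 3 * n) - r * t1, N0 * (4 * n) - r * t2, N0 * (0) - r * t3, N0 * (-n) - r * t4) = 5 * β := by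
    rw [hlam] at hfin
    simp only [tev] at hfin ⊢
    push_cast at hfin ⊢
    linear_combination hfin
  obtain ⟨z0, z1, z2, z3, z4⟩ := quin_mod5 b W hW hb _ _ _ _ _ _ hz
  have hp5 : Prime (5 : ℤ) := by norm_num
  have hr : (5 : ℤ) ∣ r := by
    by_contra hr
    have : qchk1 (t0, t1, t2, t3, t4) = true := by
      simp only [qchk1, Bool.and_eq_true, beq_iff_eq]
      have hdv : ∀ z : ℤ, (5 : ℤ) ∣ r * z → z % 5 = 0 := fun z hz =>
        Int.emod_eq_zero_of_dvd ((hp5.dvd_or_dvd hz).resolve_left hr)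
      refine ⟨⟨hdv _ ?_, hdv _ ?_⟩, hdv _ ?_⟩
      · have := dvd_neg.2 z3; ring_nf at this ⊢; exact this
      · have := dvd_neg.2 (dvd_add z2 (z0.mul_left 2)); ring_nf at this ⊢; exact this
      · have := dvd_neg.2 (dvd_sub z0 (z4.mul_left 2)); ring_nf at this ⊢; exact this
    rw [this] at hch
    exact absurd hch (by simp)
  obtain ⟨r', rfl⟩ := hr
  have hdN : ∀ z y : ℤ, (5 : ℤ) ∣ N0 * z - 5 * r' * y → 5 ∣ z := by
    intro z y hz
    refine (hp5.dvd_or_dvd ?_).resolve_left hN0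
    have := dvd_add hz (Dvd.intro (r' * y) rfl : (5 : ℤ) ∣ 5 * (r' * y))
    ring_nf at this ⊢
    exact this
  have y0 := hdN _ _ z0
  have y1 := hdN _ _ z1
  have y2 := hdN _ _ z2
  have y3 := hdN _ _ z3
  have y4 := hdN _ _ z4
  apply h5mn
  constructor <;> omega

def qchk2 (t : ℤ × ℤ × ℤ × ℤ × ℤ) : Bool :=
  t.2.2.2.2 % 5 == 0 && (t.2.1 + 3 * t.2.2.2.1) % 5 == 0 && (t.1 + 2 * t.2.2.1) % 5 == 0

theorem quin_check2 : ∀ i : ℕ, i < 5 → ∀ j : ℕ, j < 5 → ∀ e : ℕ, e < 2 →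
    qchk2 (tmul (tmul (tpow (1, -1, 0, 1, 0) i) (tpow (-1, 8, -4, -4, 2) j)) (tpow (-2, 1, 0, 0, 0) e)) = false := by
  intro i hi j hj e he
  interval_cases i <;> interval_cases j <;> interval_cases e <;> simp [tpow, tmul, qchk2]

theorem quin_norm2 (m n : ℤ) : (quinMat (-2 * m - 6 * n) (3 * n) (m + 3 * n) (-n) (0)).det =
    23 * XX m n + 64 * YY m n := by
  simp [quinMat, Matrix.det_succ_row_zero, Fin.sum_univ_succ, Fin.succAbove, XX, YY]
  ring

set_option maxHeartbeats 1000000 in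
theorem M_case2 {c : ℤ} (hc : c = 1 ∨ c = 3) (m n w : ℤ) (hmn : IsCoprime m n)
    (h : 23 * XX m n + 64 * YY m n = c * w ^ 5) : False := by
  obtain ⟨F, _, _, b, W, hW, hb⟩ := quin_exists
  have := quin_pid b W hW hb
  have h5mn : ¬ ((5 : ℤ) ∣ m ∧ (5 : ℤ) ∣ n) := by
    rintro ⟨h1, h2⟩
    have := hmn.isUnit_of_dvd' h1 h2
    rw [Int.isUnit_iff] at this
    omega
  obtain ⟨lam, hlam⟩ : ∃ x, x = tev W (-2 * m - 6 * n, 3 * n, m + 3 * n, -n, 0) := ⟨_, rfl⟩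
  have hlam0 : lam ≠ 0 := by
    rw [hlam]
    refine quin_ne_zero b W hW hb _ _ _ _ _ ?_
    rintro ⟨h0, h1, h2, h3, h4⟩
    apply h5mn
    constructor <;> omega
  have hN : Algebra.norm ℤ lam = c * w ^ 5 := by
    rw [hlam, quin_tev_norm b W hW hb, ← h]
    exact quin_norm2 m n
  have hw : w ≠ 0 := by
    rintro rfl
    rw [zero_pow (by norm_num), mul_zero, Algebra.norm_eq_zero_iff] at hN
    exact hlam0 hN
  obtain ⟨lam', hlam'⟩ : ∃ x : 𝓞 F, x = ((1) + (-15) * W ^ 1 + (3) * W ^ 2 + (5) * W ^ 3 + (-1) * W ^ 4) * (m ^ 4 * n ^ 0) + ((12) + (-166) * W ^ 1 + (16) * W ^ 2 + (56) * W ^ 3 + (-7) * W ^ 4) * (m ^ 3 * n ^ 1) + ((69) + (-699) * W ^ 1 + (-12) * W ^ 2 + (234) * W ^ 3 + (-9) * W ^ 4) * (m ^ 2 * n ^ 2) + ((218) + (-1317) * W ^ 1 + (-180) * W ^ 2 + (436) * W ^ 3 + (22) * W ^ 4) * (m ^ 1 * n ^ 3) + ((231) + (-917) * W ^ 1 + (-223)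 * W ^ 2 + (304) * W ^ 3 + (40) * W ^ 4) * (m ^ 0 * n ^ 4) := ⟨_, rfl⟩
  have hc0 : c ≠ 0 := by rcases hc with rfl | rfl <;> norm_num
  have hprod : lam * lam' = (c : 𝓞 F) * (w : 𝓞 F) ^ 5 := by
    have h' := congrArg (Int.cast : ℤ → 𝓞 F) h
    simp only [XX, YY] at h'
    push_cast at h'
    rw [← h', hlam, hlam']
    simp only [tev]
    push_cast
    linear_combination ((5 - W) * m ^ 5 + (70 - 15 * W + W ^ 2) * m ^ 4 * n + (400 - 86 * W + 7 * W ^ 2) * m ^ 3 * n ^ 2 + (1168 - 239 * W + 9 * W ^ 2) * m ^ 2 * n ^ 3 + (1748 - 330 * W - 22 * W ^ 2) * m * n ^ 4 + (1055 - 184 * W - 40 * W ^ 2) * n ^ 5) * hW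
  have hcO : (c : 𝓞 F) ≠ 0 := by exact_mod_cast hc0
  have hwO : (w : 𝓞 F) ≠ 0 := by exact_mod_cast hw
  have hne : lam * lam' ≠ 0 := by
    rw [hprod]; exact mul_ne_zero hcO (pow_ne_zero _ hwO)
  obtain ⟨N0, i, j, e, r, β, hN0, hi, hj, he, hfin⟩ := quin_sel b W hW hb lam hlam0 c w hc hw hN (by
    intro Q hQ h3 h7 h5
    refine mult_dvd_of_mul_eq hQ hlam0 (right_ne_zero_of_mul hne) hwO hcO hprod ?_ ?_
    · rcases hc with rfl | rfl
      · intro hd; apply hQ.not_isUnit; apply isUnit_of_dvd_one; simpa using hd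
      · intro hd; apply h3; simpa using hd
    · intro d1 d2
      have hm : Q ∣ (((115) * m ^ 4 + (1280) * m ^ 3 * n ^ 1 + (5370) * m ^ 2 * n ^ 2 + (9980) * m ^ 1 * n ^ 3 + (6970) * n ^ 4 : ℤ) : 𝓞 F) := by
        have : (((115) * m ^ 4 + (1280) * m ^ 3 * n ^ 1 + (5370) * m ^ 2 * n ^ 2 + (9980) * m ^ 1 * n ^ 3 + (6970) * n ^ 4 : ℤ) : 𝓞 F) = ((-2) + (0) * W ^ 1 + (1) * W ^ 2 + (0) * W ^ 3 + (0) * W ^ 4) * lam' + (((1) + (-15) * W ^ 1 + (3) * W ^ 2 + (5) * W ^ 3 + (-1) * W ^ 4) * (4 * m ^ 3 * n ^ 0) + ((12) + (-166) * W ^ 1 + (16) * W ^ 2 + (56) * W ^ 3 + (-7) * W ^ 4) * (3 * m ^ 2 * n ^ 1) + ((69) + (-699) * W ^ 1 + (-12) * W ^ 2 + (234) * W ^ 3 + (-9) * W ^ 4) * (2 * m ^ 1 * n ^ 2) + ((218) + (-1317) * W ^ 1 + (-180) * W ^ 2 + (436) * W ^ 3 + (22) * W ^ 4) * (1 * m ^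 0 * n ^ 3)) * lam := by
          rw [hlam, hlam']
          simp only [tev]
          push_cast
          linear_combination (-(((5) + (-1) * W ^ 1) * (5 * m ^ 4 * n ^ 0) + ((70) + (-15) * W ^ 1 + (1) * W ^ 2) * (4 * m ^ 3 * n ^ 1) + ((400) + (-86) * W ^ 1 + (7) * W ^ 2) * (3 * m ^ 2 * n ^ 2) + ((1168) + (-239) * W ^ 1 + (9) * W ^ 2) * (2 * m ^ 1 * n ^ 3) + ((1748) + (-330) * W ^ 1 + (-22) * W ^ 2) * (1 * m ^ 0 * n ^ 4))) * hW
        rw [this]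
        exact dvd_add (d2.mul_left _) (d1.mul_left _)
      have hn : Q ∣ (((320) * m ^ 4 + (3580) * m ^ 3 * n ^ 1 + (14970) * m ^ 2 * n ^ 2 + (27880) * m ^ 1 * n ^ 3 + (19445) * n ^ 4 : ℤ) : 𝓞 F) := by
        have : (((320) * m ^ 4 + (3580) * m ^ 3 * n ^ 1 + (14970) * m ^ 2 * n ^ 2 + (27880) * m ^ 1 * n ^ 3 + (19445) * n ^ 4 : ℤ) : 𝓞 F) = ((-6) + (3) * W ^ 1 + (3) * W ^ 2 + (-1) * W ^ 3 + (0) * W ^ 4) * lam' + (((12) + (-166) * W ^ 1 + (16) * W ^ 2 + (56) * W ^ 3 + (-7) * W ^ 4) * (1 * m ^ 3 * n ^ 0) + ((69) + (-699) * W ^ 1 + (-12) * W ^ 2 + (234) * W ^ 3 + (-9) * W ^ 4) * (2 * m ^ 2 * n ^ 1) + ((218) + (-1317) * W ^ 1 + (-180) * W ^ 2 + (436) * W ^ 3 + (22) * W ^ 4) * (3 * m ^ 1 * n ^ 2) + ((231) + (-917) * W ^ 1 + (-223) * W ^ 2 + (304) * W ^ 3 + (40) * W ^ 4) * (4 * m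 ^ 0 * n ^ 3)) * lam := by
          rw [hlam, hlam']
          simp only [tev]
          push_cast
          linear_combination (-(((70) + (-15) * W ^ 1 + (1) * W ^ 2) * (1 * m ^ 4 * n ^ 0) + ((400) + (-86) * W ^ 1 + (7) * W ^ 2) * (2 * m ^ 3 * n ^ 1) + ((1168) + (-239) * W ^ 1 + (9) * W ^ 2) * (3 * m ^ 2 * n ^ 2) + ((1748) + (-330) * W ^ 1 + (-22) * W ^ 2) * (4 * m ^ 1 * n ^ 3) + ((1055) + (-184) * W ^ 1 + (-40) * W ^ 2) * (5 * m ^ 0 * n ^ 4))) * hW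
        rw [this]
        exact dvd_add (d2.mul_left _) (d1.mul_left _)
      have := quin_dvd_D hQ m n ((1979639) * m ^ 3 + (8567880) * m ^ 2 * n ^ 1 + (14912250) * m ^ 1 * n ^ 2 + (9722500) * n ^ 3) ((-708394) * m ^ 3 + (-3072480) * m ^ 2 * n ^ 1 + (-5338500) * m ^ 1 * n ^ 2 + (-3485000) * n ^ 3) ((1280) * m ^ 3 + (13680) * m ^ 2 * n ^ 1 + (51696) * m ^ 1 * n ^ 2 + (71980) * n ^ 3) ((-460) * m ^ 3 + (-4890) * m ^ 2 * n ^ 1 + (-18552) * m ^ 1 * n ^ 2 + (-25751) * n ^ 3) _ _ hmn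
        (by ring) (by ring) hm hn
      rcases this with h | h | h
      · exact h3 h
      · exact h7 h
      · exact h5 h)
  have hch := quin_check2 i hi j hj e he
  obtain ⟨t, ht⟩ : ∃ t, t = tmul (tmul (tpow (1, -1, 0, 1, 0) i) (tpow (-1, 8, -4, -4, 2) j)) (tpow (-2, 1, 0, 0, 0) e) := ⟨_, rfl⟩
  rw [← ht] at hch hfin
  obtain ⟨t0, t1, t2, t3, t4⟩ := t
  have hz : tev W (N0 * (-2 * m - 6 * n) - r * t0, N0 * (3 * n) - r * t1, N0 * (m + 3 * n) - r * t2, N0 * (-n) - r * t3, N0 * (0) - r * t4) = 5 * β := by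
    rw [hlam] at hfin
    simp only [tev] at hfin ⊢
    push_cast at hfin ⊢
    linear_combination hfin
  obtain ⟨z0, z1, z2, z3, z4⟩ := quin_mod5 b W hW hb _ _ _ _ _ _ hz
  have hp5 : Prime (5 : ℤ) := by norm_num
  have hr : (5 : ℤ) ∣ r := by
    by_contra hr
    have : qchk2 (t0, t1, t2, t3, t4) = true := by
      simp only [qchk2, Bool.and_eq_true, beq_iff_eq]
      have hdv : ∀ z : ℤ, (5 : ℤ) ∣ r * z → z % 5 = 0 := fun z hz =>
        Int.emod_eq_zero_of_dvd ((hp5.dvd_or_dvd hz).resolve_left hr)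
      refine ⟨⟨hdv _ ?_, hdv _ ?_⟩, hdv _ ?_⟩
      · have := dvd_neg.2 z4; ring_nf at this ⊢; exact this
      · have := dvd_neg.2 (dvd_add z1 (z3.mul_left 3)); ring_nf at this ⊢; exact this
      · have := dvd_neg.2 (dvd_add z0 (z2.mul_left 2)); ring_nf at this ⊢; exact this
    rw [this] at hch
    exact absurd hch (by simp)
  obtain ⟨r', rfl⟩ := hr
  have hdN : ∀ z y : ℤ, (5 : ℤ) ∣ N0 * z - 5 * r' * y → 5 ∣ z := by
    intro z y hz
    refine (hp5.dvd_or_dvd ?_).resolve_left hN0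
    have := dvd_add hz (Dvd.intro (r' * y) rfl : (5 : ℤ) ∣ 5 * (r' * y))
    ring_nf at this ⊢
    exact this
  have y0 := hdN _ _ z0
  have y1 := hdN _ _ z1
  have y2 := hdN _ _ z2
  have y3 := hdN _ _ z3
  have y4 := hdN _ _ z4
  apply h5mn
  constructor <;> omega


/-- coordinates in the basis `1, φ` of a golden integer are integers -/
theorem gold_int {F : Type*} [Field F] [NumberField F] (b : Module.Basis (Fin 2) ℚ F) (W : 𝓞 F)
    (hW : W ^ 2 = W + (1 : ℤ)) (hb0 : b 0 = 1) (hb1 : b 1 = algebraMap (𝓞 F) F W) (z : 𝓞 F) :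
    ∃ p q : ℤ, z = p + q * W := by
  have hω : (algebraMap (𝓞 F) F W) ^ 2 = algebraMap (𝓞 F) F W + ((1 : ℤ) : F) := by
    rw [← map_pow, hW, map_add, map_intCast]
  obtain ⟨p, q, hpq⟩ := quad_coords b _ hb0 hb1 (algebraMap (𝓞 F) F z)
  have hintg : IsIntegral ℤ ((p : F) + q * algebraMap (𝓞 F) F W) := hpq ▸ RingOfIntegers.isIntegral_coe z
  obtain ⟨T, N, hT, hN⟩ := quad_int b _ 1 hω hb0 hb1 hintg
  have hsq : Squarefree (5 : ℤ) := by
    rw [← Int.squarefree_natAbs]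
    exact (by norm_num : Nat.Prime 5).prime.squarefree
  have h5 : (5 : ℚ) * q ^ 2 = T ^ 2 - 4 * N := by
    rw [← hT, ← hN]; push_cast; ring
  obtain ⟨q', hq'⟩ := rat_int_of_sq hsq (q := q) (n := T ^ 2 - 4 * N) (by push_cast; exact h5)
  rw [hq'] at h5
  have h6 : 5 * q' ^ 2 = T ^ 2 - 4 * N := by exact_mod_cast h5
  have hpar : (2 : ℤ) ∣ T - q' := by
    have h7 : (2 : ℤ) ∣ (T - q') ^ 2 := ⟨3 * q' ^ 2 + 2 * N - T * q', by linarith⟩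
    exact Int.Prime.dvd_pow' (by norm_num) h7
  obtain ⟨p', hp'⟩ := hpar
  have hp : p = p' := by
    have : (T : ℚ) - q' = 2 * p' := by exact_mod_cast hp'
    rw [← hT, hq'] at this
    linarith
  refine ⟨p', q', ?_⟩
  apply FaithfulSMul.algebraMap_injective (𝓞 F) F
  rw [hpq, hp, hq']
  simp only [map_add, map_mul, map_intCast]
  push_cast
  rfl

theorem gold_inj {F : Type*} [Field F] [NumberField F] (b : Module.Basis (Fin 2) ℚ F) (W : 𝓞 F)
    (hb0 : b 0 = 1) (hb1 : b 1 = algebraMap (𝓞 F) F W) {p q p' q' : ℤ}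
    (h : (p : 𝓞 F) + q * W = p' + q' * W) : p = p' ∧ q = q' := by
  have h1 := congrArg (algebraMap (𝓞 F) F) h
  simp only [map_add, map_mul, map_intCast] at h1
  have := quad_coords_inj b _ hb0 hb1 (p := p) (q := q) (p' := p') (q' := q') (by push_cast; exact h1)
  exact_mod_cast this

/-- rational part of the fifth power of `p + q φ` -/
def GX (p q : ℤ) : ℤ := p ^ 5 + 10 * p ^ 3 * q ^ 2 + 10 * p ^ 2 * q ^ 3 + 10 * p * q ^ 4 + 3 * q ^ 5
/-- coefficient of `φ` in the fifth power of `p + q φ`, divided by `5 q` -/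
def GG (p q : ℤ) : ℤ := p ^ 4 + 2 * p ^ 3 * q + 4 * p ^ 2 * q ^ 2 + 3 * p * q ^ 3 + q ^ 4

theorem gold_pow5 {R : Type*} [CommRing R] (W : R) (hW : W ^ 2 = W + 1) (p q : ℤ) :
    ((p : R) + q * W) ^ 5 = (GX p q : R) + ((5 * q * GG p q : ℤ) : R) * W := by
  unfold GX GG
  push_cast
  linear_combination (10 * (p : R) ^ 3 * q ^ 2 + 10 * p ^ 2 * q ^ 3 * (W + 1) + 5 * p * q ^ 4 * (W ^ 2 + W + 2)
    + q ^ 5 * (W ^ 3 + W ^ 2 + 2 * W + 3)) * hW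

theorem gold_phi_not_fifth {F : Type*} [Field F] [NumberField F] (b : Module.Basis (Fin 2) ℚ F) (W : 𝓞 F)
    (hW : W ^ 2 = W + (1 : ℤ)) (hb0 : b 0 = 1) (hb1 : b 1 = algebraMap (𝓞 F) F W)
    (w : 𝓞 F) (h : W = w ^ 5) : False := by
  obtain ⟨p, q, rfl⟩ := gold_int b W hW hb0 hb1 w
  rw [gold_pow5 W (by simpa using hW)] at h
  have h2 := gold_inj b W hb0 hb1 (p := 0) (q := 1) (by rw [← h]; simp)
  have := h2.2
  have : (5 : ℤ) ∣ 1 := ⟨q * GG p q, by rw [this]; ring⟩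
  omega

theorem gold_units {F : Type*} [Field F] [NumberField F] (b : Module.Basis (Fin 2) ℚ F) (W : 𝓞 F)
    (hW : W ^ 2 = W + (1 : ℤ)) (hb0 : b 0 = 1) (hb1 : b 1 = algebraMap (𝓞 F) F W)
    (u : (𝓞 F)ˣ) : ∃ (i : ℕ) (w : 𝓞 F), i < 5 ∧ (u : 𝓞 F) = W ^ i * w ^ 5 := by
  have hfin : Module.finrank ℚ F = 2 := by
    rw [Module.finrank_eq_card_basis b]; simp
  let ε : (𝓞 F)ˣ := ⟨W, W - 1, by push_cast at hW; linear_combination hW,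
    by push_cast at hW; linear_combination hW⟩
  obtain ⟨e, w, he, hu⟩ := unit_decomp (F := F) (by rw [hfin]; norm_num) (quad_rank b) (fun _ : Fin 1 => ε)
    (by
      intro e w h i
      rw [Fin.prod_univ_one] at h
      have := pow_indep_one ε (by
        rintro ⟨w, hw⟩
        refine gold_phi_not_fifth b W hW hb0 hb1 (w : 𝓞 F) ?_
        have := congrArg (fun z : (𝓞 F)ˣ => (z : 𝓞 F)) hw
        simpa [ε] using this) (e 0) w h
      rwa [Subsingleton.elim i 0]) u
  refine ⟨e 0, w, he 0, ?_⟩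
  rw [hu, Fin.prod_univ_one]
  simp [ε]

/-- primes `p ≡ ±2 mod 5` stay prime -/
theorem gold_inert {F : Type*} [Field F] [NumberField F] (b : Module.Basis (Fin 2) ℚ F) (W : 𝓞 F)
    (hW : W ^ 2 = W + (1 : ℤ)) (hb0 : b 0 = 1) (hb1 : b 1 = algebraMap (𝓞 F) F W)
    (p : ℕ) (hp : p.Prime) (hr : ∀ u v : ZMod p, u * u + u * v - v * v = 0 → u = 0 ∧ v = 0) :
    Prime (p : 𝓞 F) := by
  have hcast : ∀ x : ℤ, (p : ℤ) ∣ x ↔ ((x : ZMod p) = 0) := fun x => (ZMod.intCast_zmod_eq_zero_iff_dvd x p).symm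
  have hdv : ∀ x y : ℤ, (p : ℤ) ∣ x → (p : ℤ) ∣ y → (p : 𝓞 F) ∣ x + y * W := by
    rintro x y ⟨x', rfl⟩ ⟨y', rfl⟩
    exact ⟨x' + y' * W, by push_cast; ring⟩
  have hdv' : ∀ x y : ℤ, (p : 𝓞 F) ∣ x + y * W → (p : ℤ) ∣ x ∧ (p : ℤ) ∣ y := by
    rintro x y ⟨z, hz⟩
    obtain ⟨s, t, rfl⟩ := gold_int b W hW hb0 hb1 z
    have := gold_inj b W hb0 hb1 (p := x) (q := y) (p' := p * s) (q' := p * t) (by rw [hz]; push_cast; ring)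
    exact ⟨⟨s, this.1⟩, ⟨t, this.2⟩⟩
  have hN : ∀ x y : ℤ, (p : ℤ) ∣ x ^ 2 + x * y - y ^ 2 → (p : ℤ) ∣ x ∧ (p : ℤ) ∣ y := by
    intro x y h
    rw [hcast] at h
    have := hr x y (by push_cast at h; rw [← h]; ring)
    rw [hcast, hcast]
    exact this
  refine ⟨by exact_mod_cast hp.ne_zero, ?_, ?_⟩
  · intro hu
    have : (p : 𝓞 F) ∣ (1 : ℤ) + (0 : ℤ) * W := by
      simpa using hu.dvd
    have := (hdv' _ _ this).1
    have h1 : p ∣ 1 := by exact_mod_cast this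
    exact hp.one_lt.ne' (Nat.dvd_one.1 h1)
  · intro x y h
    obtain ⟨x0, x1, rfl⟩ := gold_int b W hW hb0 hb1 x
    obtain ⟨y0, y1, rfl⟩ := gold_int b W hW hb0 hb1 y
    have e : ((x0 : 𝓞 F) + x1 * W) * (y0 + y1 * W) = ((x0 * y0 + x1 * y1 : ℤ) : 𝓞 F) + ((x0 * y1 + x1 * y0 + x1 * y1 : ℤ) : 𝓞 F) * W := by
      push_cast at hW ⊢
      linear_combination ((x1 : 𝓞 F) * y1) * hW
    rw [e] at h
    obtain ⟨d1, d2⟩ := hdv' _ _ h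
    have hpr : (p : ℤ) ∣ (x0 ^ 2 + x0 * x1 - x1 ^ 2) * (y0 ^ 2 + y0 * y1 - y1 ^ 2) := by
      have : (x0 ^ 2 + x0 * x1 - x1 ^ 2) * (y0 ^ 2 + y0 * y1 - y1 ^ 2) =
        (x0 * y0 + x1 * y1) * (x0 * y0 + x1 * y1 + (x0 * y1 + x1 * y0 + x1 * y1)) - (x0 * y1 + x1 * y0 + x1 * y1) * (x0 * y1 + x1 * y0 + x1 * y1) := by ring
      rw [this]
      exact dvd_sub (d1.mul_right _) (d2.mul_right _)
    rcases (Nat.prime_iff_prime_int.1 hp).dvd_or_dvd hpr with h | h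
    · left; exact hdv _ _ (hN _ _ h).1 (hN _ _ h).2
    · right; exact hdv _ _ (hN _ _ h).1 (hN _ _ h).2


/-- integers of the form `3 ^ e * 7 ^ f` -/
def Sm (D : ℤ) : Prop := ∃ e f : ℕ, D = 3 ^ e * 7 ^ f

theorem Sm.mul {A B : ℤ} (hA : Sm A) (hB : Sm B) : Sm (A * B) := by
  obtain ⟨e, f, rfl⟩ := hA
  obtain ⟨e', f', rfl⟩ := hB
  exact ⟨e + e', f + f', by ring⟩

theorem Sm.pos {A : ℤ} (hA : Sm A) : 0 < A := by
  obtain ⟨e, f, rfl⟩ := hA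
  positivity

theorem Sm.prime {A : ℤ} (hA : Sm A) {p : ℕ} (hp : p.Prime) (h : (p : ℤ) ∣ A) : p = 3 ∨ p = 7 := by
  obtain ⟨e, f, rfl⟩ := hA
  have h' : p ∣ 3 ^ e * 7 ^ f := by exact_mod_cast h
  rcases hp.dvd_mul.1 h' with h | h
  · left; exact (Nat.prime_dvd_prime_iff_eq hp (by norm_num)).1 (hp.dvd_of_dvd_pow h)
  · right; exact (Nat.prime_dvd_prime_iff_eq hp (by norm_num)).1 (hp.dvd_of_dvd_pow h)

theorem Sm_c {c : ℤ} (hc : c = 1 ∨ c = 3) : Sm c := by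
  rcases hc with rfl | rfl
  · exact ⟨0, 0, by norm_num⟩
  · exact ⟨1, 0, by norm_num⟩

theorem prime_dvd_nat {R : Type*} [CommRing R] {Q : R} (hQ : Prime Q) (g : ℕ) (hg : g ≠ 0) (h : Q ∣ (g : R)) :
    ∃ p : ℕ, p.Prime ∧ p ∣ g ∧ Q ∣ (p : R) := by
  induction g using Nat.strong_induction_on with
  | _ g ih =>
    by_cases h1 : g = 1
    · subst h1
      exact absurd (isUnit_of_dvd_one (by simpa using h)) hQ.not_isUnit
    have hmp := Nat.minFac_prime h1
    obtain ⟨k, hk⟩ := Nat.minFac_dvd g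
    have hc : (g : R) = (g.minFac : R) * (k : R) := by
      rw [← Nat.cast_mul, ← hk]
    rw [hc] at h
    rcases hQ.dvd_or_dvd h with h | h
    · exact ⟨_, hmp, Nat.minFac_dvd g, h⟩
    · have hk0 : k ≠ 0 := by rintro rfl; omega
      have hlt : k < g := by
        have := hmp.two_le
        calc k < 2 * k := by omega
          _ ≤ g.minFac * k := Nat.mul_le_mul_right _ this
          _ = g := hk.symm
      obtain ⟨p, hp, hpk, hQp⟩ := ih k hlt hk0 h
      exact ⟨p, hp, hpk.trans ⟨g.minFac, by rw [mul_comm]; exact hk⟩, hQp⟩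

/-- a prime dividing two integers divides a common rational prime -/
theorem prime_dvd_two {R : Type*} [CommRing R] {Q : R} (hQ : Prime Q) (x y : ℤ) (hx : x ≠ 0)
    (h1 : Q ∣ (x : R)) (h2 : Q ∣ (y : R)) : ∃ p : ℕ, p.Prime ∧ (p : ℤ) ∣ x ∧ (p : ℤ) ∣ y ∧ Q ∣ (p : R) := by
  have hg : Q ∣ ((Int.gcd x y : ℕ) : R) := by
    have h := Int.gcd_eq_gcd_ab x y
    have h' := congrArg (Int.cast : ℤ → R) h
    push_cast at h'
    rw [h']
    exact dvd_add (h1.mul_right _) (h2.mul_right _)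
  obtain ⟨p, hp, hpg, hQp⟩ := prime_dvd_nat hQ _ (by
    intro h
    rw [Int.gcd_eq_zero_iff] at h
    exact hx h.1) hg
  have hpg' : (p : ℤ) ∣ (Int.gcd x y : ℤ) := by exact_mod_cast hpg
  exact ⟨p, hp, hpg'.trans (Int.gcd_dvd_left ..), hpg'.trans (Int.gcd_dvd_right ..), hQp⟩

theorem Z_decomp {x y C w : ℤ} (hx : x ≠ 0) (hy : y ≠ 0) (hw : w ≠ 0) (h : x * y = C * w ^ 5)
    (hp : ∀ p : ℕ, p.Prime → p ≠ 3 → p ≠ 7 → (p : ℤ) ∣ x → ¬ (p : ℤ) ∣ C ∧ ¬ (p : ℤ) ∣ y) :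
    ∃ D μ : ℤ, Sm D ∧ x = D * μ ^ 5 := by
  have hC : C ≠ 0 := by
    rintro rfl
    rw [zero_mul] at h
    exact mul_ne_zero hx hy h
  obtain ⟨u, e, μ, hdec⟩ := selmer_decomp (![3, 7] : Fin 2 → ℤ) x hx (by
    intro Q hQ hna
    by_cases hQx : Q ∣ x
    · have hpr : Q.natAbs.Prime := Int.prime_iff_natAbs_prime.1 hQ
      have hass : Associated Q (Q.natAbs : ℤ) := Int.associated_natAbs Q
      obtain ⟨h1, h2⟩ := hp Q.natAbs hpr
        (by intro h3; apply hna 0; rw [h3] at hass; simpa using hass)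
        (by intro h3; apply hna 1; rw [h3] at hass; simpa using hass) (Int.natAbs_dvd.2 hQx)
      exact mult_dvd_of_mul_eq hQ hx hy hw hC h (fun h => h1 (Int.natAbs_dvd.2 h))
        (fun _ h => h2 (Int.natAbs_dvd.2 h))
    · rw [multiplicity_eq_zero.2 hQx]; exact dvd_zero _)
  rw [Fin.prod_univ_two] at hdec
  simp only [Matrix.cons_val_zero, Matrix.cons_val_one, Matrix.cons_val_fin_one] at hdec
  refine ⟨3 ^ e 0 * 7 ^ e 1, u * μ, ⟨_, _, rfl⟩, ?_⟩
  rcases Int.units_eq_one_or u with rfl | rfl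
  · rw [hdec]; push_cast; ring
  · rw [hdec]; push_cast; ring

theorem E_key {A B C w : ℤ} (hB5 : (5 : ℤ) ∣ B) (hA5 : ¬ (5 : ℤ) ∣ A) (hC : Sm C)
    (h : A ^ 2 + A * B - B ^ 2 = C * w ^ 5)
    (hAB : ∀ p : ℕ, p.Prime → (p : ℤ) ∣ A → (p : ℤ) ∣ B → p = 3 ∨ p = 7) :
    ∃ d p q : ℤ, Sm d ∧ A = d * GX p q ∧ B = d * (5 * q * GG p q) := by
  have hp5 : Prime (5 : ℤ) := by norm_num
  obtain ⟨B', rfl⟩ := hB5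
  have hn5 : ¬ (5 : ℤ) ∣ C * w ^ 5 := by
    rw [← h]
    intro hd
    apply hA5
    have : (5 : ℤ) ∣ A ^ 2 := by
      have := dvd_sub hd (Dvd.intro (A * B' - 5 * B' ^ 2) rfl : (5 : ℤ) ∣ 5 * (A * B' - 5 * B' ^ 2))
      ring_nf at this
      exact this
    exact hp5.dvd_of_dvd_pow this
  have hw : w ≠ 0 := by rintro rfl; apply hn5; simp
  obtain ⟨F, _, _, b, W, hW, hb0, hb1, hpid⟩ := quad_exists_all 1 (by
    intro y hy
    obtain ⟨m, hm⟩ := rat_int_of_sq (k := 1) squarefree_one (q := 2 * y - 1) (n := 5)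
      (by push_cast at hy ⊢; linear_combination 4 * hy)
    have h2 : m ^ 2 = 5 := by
      have : (m : ℚ) ^ 2 = 5 := by rw [← hm]; push_cast at hy; linear_combination 4 * hy
      exact_mod_cast this
    have : m < 3 := by nlinarith
    have : -3 < m := by nlinarith
    interval_cases m <;> omega) (by norm_num) (by norm_num) (by decide)
  have hW1 : W ^ 2 = W + 1 := by simpa using hW
  have p3 : Prime ((3 : ℕ) : 𝓞 F) := gold_inert b W hW hb0 hb1 3 (by norm_num) (by decide)
  have p7 : Prime ((7 : ℕ) : 𝓞 F) := gold_inert b W hW hb0 hb1 7 (by norm_num) (by decide)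
  obtain ⟨κ, hκ⟩ : ∃ κ : 𝓞 F, κ = A + (5 * B' : ℤ) * W := ⟨_, rfl⟩
  obtain ⟨κ', hκ'⟩ : ∃ κ : 𝓞 F, κ = A + (5 * B' : ℤ) * (1 - W) := ⟨_, rfl⟩
  have hprod : κ * κ' = (C : 𝓞 F) * (w : 𝓞 F) ^ 5 := by
    have h' := congrArg (Int.cast : ℤ → 𝓞 F) h
    push_cast at h'
    rw [hκ, hκ', ← h']
    push_cast
    linear_combination (-25 * (B' : 𝓞 F) ^ 2) * hW1
  have hC0 : C ≠ 0 := hC.pos.ne'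
  have hCO : (C : 𝓞 F) ≠ 0 := by exact_mod_cast hC0
  have hwO : (w : 𝓞 F) ≠ 0 := by exact_mod_cast hw
  have hne : κ * κ' ≠ 0 := by
    rw [hprod]; exact mul_ne_zero hCO (pow_ne_zero _ hwO)
  have hna : ∀ Q : 𝓞 F, Prime Q → (∀ i, ¬ Associated Q ((![((3 : ℕ) : 𝓞 F), ((7 : ℕ) : 𝓞 F)] : Fin 2 → 𝓞 F) i)) →
      ∀ p : ℕ, Q ∣ (p : 𝓞 F) → p = 3 ∨ p = 7 → False := by
    intro Q hQ hQi p hQp hp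
    rcases hp with rfl | rfl
    · exact hQi 0 (hQ.associated_of_dvd p3 hQp)
    · exact hQi 1 (hQ.associated_of_dvd p7 hQp)
  obtain ⟨u, e, μ, hdec⟩ := selmer_decomp (![((3 : ℕ) : 𝓞 F), ((7 : ℕ) : 𝓞 F)] : Fin 2 → 𝓞 F) κ (left_ne_zero_of_mul hne) (by
    intro Q hQ hQi
    refine mult_dvd_of_mul_eq hQ (left_ne_zero_of_mul hne) (right_ne_zero_of_mul hne) hwO hCO hprod ?_ ?_
    · intro hd
      obtain ⟨p, hp, h1, _, hQp⟩ := prime_dvd_two hQ C C hC0 hd hd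
      exact hna Q hQ hQi p hQp (hC.prime hp h1)
    · intro d1 d2
      have hN : Q ∣ ((C * w ^ 5 : ℤ) : 𝓞 F) := by
        push_cast; rw [← hprod]; exact d1.mul_right _
      have h5B : Q ∣ ((5 * (5 * B') : ℤ) : 𝓞 F) := by
        have : ((5 * (5 * B') : ℤ) : 𝓞 F) = (2 * W - 1) * (κ - κ') := by
          rw [hκ, hκ']; push_cast; linear_combination (-20 * (B' : 𝓞 F)) * hW1
        rw [this]; exact (dvd_sub d1 d2).mul_left _
      obtain ⟨p, hp, h1, h2, hQp⟩ := prime_dvd_two hQ _ _ (mul_ne_zero hC0 (pow_ne_zero 5 hw)) hN h5B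
      have hpI := Nat.prime_iff_prime_int.1 hp
      have hpne : ¬ (p : ℤ) ∣ 5 := by
        intro hd
        have hd' : p ∣ 5 := by exact_mod_cast hd
        have := (Nat.prime_dvd_prime_iff_eq hp (by norm_num)).1 hd'
        subst this
        exact hn5 (by exact_mod_cast h1)
      have h2' := (hpI.dvd_or_dvd h2).resolve_left hpne
      refine hna Q hQ hQi p hQp (hAB p hp ?_ h2')
      rw [← h] at h1
      have : (p : ℤ) ∣ A ^ 2 := by
        have := dvd_sub h1 (h2'.mul_right (A - 5 * B'))
        ring_nf at this
        exact this
      exact hpI.dvd_of_dvd_pow this)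
  rw [Fin.prod_univ_two] at hdec
  simp only [Matrix.cons_val_zero, Matrix.cons_val_one, Matrix.cons_val_fin_one] at hdec
  obtain ⟨i, v, hi, hu⟩ := gold_units b W hW hb0 hb1 u
  obtain ⟨p, q, hpq⟩ := gold_int b W hW hb0 hb1 (v * μ)
  obtain ⟨d, hd⟩ : ∃ d : ℤ, d = 3 ^ e 0 * 7 ^ e 1 := ⟨_, rfl⟩
  have hdS : Sm d := ⟨_, _, hd⟩
  have hfin : κ = W ^ i * ((d * GX p q : ℤ) + (d * (5 * q * GG p q) : ℤ) * W) := by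
    have e1 : ((d * GX p q : ℤ) : 𝓞 F) + (d * (5 * q * GG p q) : ℤ) * W = d * (v * μ) ^ 5 := by
      rw [hpq, gold_pow5 W hW1]; push_cast; ring
    rw [e1, hdec, hu, hd]; push_cast; ring
  have hX5 : (5 : ℤ) ∣ d * GX p q → False := by
    rintro ⟨z, hz⟩
    apply hA5
    rw [hz] at hfin
    have : κ = 5 * (W ^ i * (z + (d * (q * GG p q) : ℤ) * W)) := by rw [hfin]; push_cast; ring
    obtain ⟨s, t, hst⟩ := gold_int b W hW hb0 hb1 (W ^ i * (z + (d * (q * GG p q) : ℤ) * W))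
    rw [hst, hκ] at this
    have := gold_inj b W hb0 hb1 (p := A) (q := 5 * B') (p' := 5 * s) (q' := 5 * t) (by rw [this]; push_cast; ring)
    exact ⟨s, this.1⟩
  rw [hκ] at hfin
  interval_cases i
  · have := gold_inj b W hb0 hb1 (p := A) (q := 5 * B') (p' := d * GX p q) (q' := d * (5 * q * GG p q)) (by rw [hfin]; ring)
    exact ⟨d, p, q, hdS, this.1, this.2⟩
  · exfalso
    apply hX5
    have := (gold_inj b W hb0 hb1 (p := A) (q := 5 * B') (p' := d * (5 * q * GG p q)) (q' := d * GX p q + d * (5 * q * GG p q)) (by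
      rw [hfin]; push_cast; linear_combination ((d : 𝓞 F) * (5 * q * GG p q)) * hW1)).2
    exact ⟨B' - d * (q * GG p q), by linarith⟩
  · exfalso
    apply hX5
    have := (gold_inj b W hb0 hb1 (p := A) (q := 5 * B') (p' := d * GX p q + d * (5 * q * GG p q)) (q' := d * GX p q + 2 * (d * (5 * q * GG p q))) (by
      rw [hfin]; push_cast; linear_combination ((d : 𝓞 F) * GX p q + (d : 𝓞 F) * (5 * q * GG p q) * (W + 1)) * hW1)).2
    exact ⟨B' - 2 * (d * (q * GG p q)), by linarith⟩
  · exfalso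
    apply hX5
    have := (gold_inj b W hb0 hb1 (p := A) (q := 5 * B') (p' := d * GX p q + 2 * (d * (5 * q * GG p q))) (q' := 2 * (d * GX p q) + 3 * (d * (5 * q * GG p q))) (by
      rw [hfin]; push_cast; linear_combination ((d : 𝓞 F) * GX p q * (W + 1) + (d : 𝓞 F) * (5 * q * GG p q) * (W ^ 2 + W + 2)) * hW1)).2
    have h2 : (5 : ℤ) ∣ 2 * (d * GX p q) := ⟨B' - 3 * (d * (q * GG p q)), by linarith⟩
    exact (hp5.dvd_or_dvd h2).resolve_left (by norm_num)
  · exfalso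
    apply hX5
    have := (gold_inj b W hb0 hb1 (p := A) (q := 5 * B') (p' := 2 * (d * GX p q) + 3 * (d * (5 * q * GG p q))) (q' := 3 * (d * GX p q) + 5 * (d * (5 * q * GG p q))) (by
      rw [hfin]; push_cast; linear_combination ((d : 𝓞 F) * GX p q * (W ^ 2 + W + 2) + (d : 𝓞 F) * (5 * q * GG p q) * (W ^ 3 + W ^ 2 + 2 * W + 3)) * hW1)).2
    have h2 : (5 : ℤ) ∣ 3 * (d * GX p q) := ⟨B' - 5 * (d * (q * GG p q)), by linarith⟩
    exact (hp5.dvd_or_dvd h2).resolve_left (by norm_num)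


/-- the descent invariant -/
def DInv (N y : ℤ) : Prop := y ≠ 0 ∧ ¬ (5 : ℤ) ∣ N ∧
  (∀ r : ℕ, r.Prime → (r : ℤ) ∣ N → (r : ℤ) ∣ y → r = 3 ∨ r = 7) ∧
  (∃ D v : ℤ, Sm D ∧ N ^ 2 + 5 * N * y ^ 2 + 5 * y ^ 4 = D * v ^ 5) ∧
  ∃ D t : ℤ, Sm D ∧ y = 5 * D * t ^ 5

theorem Sm.not_five {A : ℤ} (hA : Sm A) : ¬ (5 : ℤ) ∣ A := by
  intro h
  have := hA.prime (p := 5) (by norm_num) (by exact_mod_cast h)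
  omega

theorem descent_step {d p q D T : ℤ} (hd : Sm d) (hD : Sm D) (hT : T ≠ 0)
    (h : d * (q * GG p q) = 5 * D * T ^ 5) (hA : ¬ (5 : ℤ) ∣ d * GX p q)
    (hAB : ∀ r : ℕ, r.Prime → (r : ℤ) ∣ d * GX p q → (r : ℤ) ∣ d * (5 * q * GG p q) → r = 3 ∨ r = 7) :
    DInv (p ^ 2 + p * q - q ^ 2) q := by
  have hp5 : Prime (5 : ℤ) := by norm_num
  obtain ⟨N, hN⟩ : ∃ N, N = p ^ 2 + p * q - q ^ 2 := ⟨_, rfl⟩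
  have hG : GG p q = N ^ 2 + 5 * N * q ^ 2 + 5 * q ^ 4 := by rw [hN]; unfold GG; ring
  have hGN : GX p q ^ 2 = N ^ 5 + (5 * q * GG p q) ^ 2 - GX p q * (5 * q * GG p q) := by
    rw [hN]; unfold GX GG; ring
  rw [← hN]
  have hN5 : ¬ (5 : ℤ) ∣ N := by
    intro h5
    apply hA
    apply Dvd.dvd.mul_left
    apply hp5.dvd_of_dvd_pow (n := 2)
    rw [hGN]
    refine dvd_sub (dvd_add (dvd_pow h5 (by norm_num)) (dvd_pow ?_ (by norm_num))) (Dvd.dvd.mul_left ?_ _)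
    · exact ⟨q * GG p q, by ring⟩
    · exact ⟨q * GG p q, by ring⟩
  have hcom : ∀ r : ℕ, r.Prime → (r : ℤ) ∣ N → (r : ℤ) ∣ q → r = 3 ∨ r = 7 := by
    intro r hr h1 h2
    have hrI := Nat.prime_iff_prime_int.1 hr
    apply hAB r hr
    · apply Dvd.dvd.mul_left
      apply hrI.dvd_of_dvd_pow (n := 2)
      rw [hGN]
      refine dvd_sub (dvd_add (dvd_pow h1 (by norm_num)) (dvd_pow ?_ (by norm_num))) (Dvd.dvd.mul_left ?_ _)
      · exact (h2.mul_left 5).mul_right _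
      · exact (h2.mul_left 5).mul_right _
    · exact ((h2.mul_left 5).mul_right _).mul_left _
  have hG5 : ¬ (5 : ℤ) ∣ GG p q := by
    intro h5
    apply hN5
    apply hp5.dvd_of_dvd_pow (n := 2)
    have := dvd_sub h5 (Dvd.intro (N * q ^ 2 + q ^ 4) rfl : (5 : ℤ) ∣ 5 * (N * q ^ 2 + q ^ 4))
    rw [hG] at this
    ring_nf at this
    exact this
  have hGc : ∀ r : ℕ, r.Prime → (r : ℤ) ∣ q → (r : ℤ) ∣ GG p q → r = 3 ∨ r = 7 := by
    intro r hr h1 h2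
    apply hcom r hr _ h1
    apply (Nat.prime_iff_prime_int.1 hr).dvd_of_dvd_pow (n := 2)
    have := dvd_sub h2 (h1.mul_right (5 * N * q + 5 * q ^ 3))
    rw [hG] at this
    ring_nf at this
    exact this
  have hq5 : (5 : ℤ) ∣ q := by
    have h1 : (5 : ℤ) ∣ d * (q * GG p q) := ⟨D * T ^ 5, by rw [h]; ring⟩
    have h2 := (hp5.dvd_or_dvd h1).resolve_left hd.not_five
    exact (hp5.dvd_or_dvd h2).resolve_right hG5
  obtain ⟨q', hq'⟩ := hq5
  have h' : d * (q' * GG p q) = D * T ^ 5 := by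
    have : 5 * (d * (q' * GG p q)) = 5 * (D * T ^ 5) := by
      calc 5 * (d * (q' * GG p q)) = d * (5 * q' * GG p q) := by ring
        _ = d * (q * GG p q) := by rw [← hq']
        _ = _ := by rw [h]; ring
    linarith
  have hne : d * (q' * GG p q) ≠ 0 := by
    rw [h']; exact mul_ne_zero hD.pos.ne' (pow_ne_zero _ hT)
  have hq0 : q' ≠ 0 := left_ne_zero_of_mul (right_ne_zero_of_mul hne)
  have hG0 : GG p q ≠ 0 := right_ne_zero_of_mul (right_ne_zero_of_mul hne)
  have hd0 : d ≠ 0 := hd.pos.ne'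
  refine ⟨by rw [hq']; omega, hN5, hcom, ?_, ?_⟩
  · rw [← hG]
    refine Z_decomp hG0 (mul_ne_zero hd0 hq0) hT (by rw [← h']; ring : GG p q * (d * q') = D * T ^ 5) ?_
    intro r hr h3 h7 hrG
    refine ⟨fun hrD => by rcases hD.prime hr hrD with h | h <;> contradiction, fun hrd => ?_⟩
    rcases (Nat.prime_iff_prime_int.1 hr).dvd_or_dvd hrd with h | h
    · rcases hd.prime hr h with h | h <;> contradiction
    · rcases hGc r hr (by rw [hq']; exact h.mul_left _) hrG with h | h <;> contradiction
  · obtain ⟨D', t, hD', ht⟩ := Z_decomp hq0 (mul_ne_zero hd0 hG0) hT (by rw [← h']; ring : q' * (d * GG p q) = D * T ^ 5) (by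
      intro r hr h3 h7 hrq
      refine ⟨fun hrD => by rcases hD.prime hr hrD with h | h <;> contradiction, fun hrd => ?_⟩
      rcases (Nat.prime_iff_prime_int.1 hr).dvd_or_dvd hrd with h | h
      · rcases hd.prime hr h with h | h <;> contradiction
      · rcases hGc r hr (by rw [hq']; exact hrq.mul_left _) h with h | h <;> contradiction)
    exact ⟨D', t, hD', by rw [hq', ht]; ring⟩

theorem descent (k : ℕ) : ∀ N y : ℤ, y.natAbs = k → DInv N y → False := by
  induction k using Nat.strong_induction_on with
  | _ k ih =>
    rintro N y hk ⟨hy0, hN5, hcom, ⟨D, v, hD, hv⟩, ⟨D', t, hD', ht⟩⟩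
    have hp5 : Prime (5 : ℤ) := by norm_num
    have hy5 : (5 : ℤ) ∣ y := ⟨D' * t ^ 5, by rw [ht]; ring⟩
    have hA5 : ¬ (5 : ℤ) ∣ N + 3 * y ^ 2 := by
      intro h5
      apply hN5
      exact (dvd_add_left ((dvd_pow hy5 (by norm_num)).mul_left 3)).1 h5
    have hAB : ∀ r : ℕ, r.Prime → (r : ℤ) ∣ N + 3 * y ^ 2 → (r : ℤ) ∣ -y ^ 2 → r = 3 ∨ r = 7 := by
      intro r hr h1 h2
      rw [dvd_neg] at h2
      exact hcom r hr ((dvd_add_left (h2.mul_left 3)).1 h1) ((Nat.prime_iff_prime_int.1 hr).dvd_of_dvd_pow h2)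
    obtain ⟨d, p, q, hd, h1, h2⟩ := E_key (A := N + 3 * y ^ 2) (B := -y ^ 2) (C := D) (w := v)
      (by rw [dvd_neg]; exact dvd_pow hy5 (by norm_num)) hA5 hD (by rw [← hv]; ring) hAB
    have ht0 : t ≠ 0 := by rintro rfl; apply hy0; rw [ht]; ring
    rw [h1] at hA5
    rw [h1, h2] at hAB
    have hT : d * (q * GG p q) = 5 * (D' * D') * (-t ^ 2) ^ 5 := by
      have : 5 * (d * (q * GG p q)) = 5 * (5 * (D' * D') * (-t ^ 2) ^ 5) := by
        calc 5 * (d * (q * GG p q)) = d * (5 * q * GG p q) := by ring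
          _ = - y ^ 2 := h2.symm
          _ = _ := by rw [ht]; ring
      linarith
    have hinv := descent_step hd (hD'.mul hD') (neg_ne_zero.2 (pow_ne_zero 2 ht0)) hT hA5 hAB
    have hlt : q.natAbs < y.natAbs := by
      by_contra hge
      push Not at hge
      have hG : 5 * q ^ 4 ≤ 16 * GG p q := by
        have : 16 * GG p q = (2 * p + q) ^ 4 + 10 * ((2 * p + q) * q) ^ 2 + 5 * q ^ 4 := by unfold GG; ring
        rw [this]
        have : 0 ≤ (2 * p + q) ^ 4 := by positivity
        have : 0 ≤ ((2 * p + q) * q) ^ 2 := by positivity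
        linarith
      have hab : |y| ≤ |q| := by
        rw [Int.abs_eq_natAbs, Int.abs_eq_natAbs]; exact_mod_cast hge
      have hy1 : 1 ≤ |y| := Int.one_le_abs hy0
      have hGp : 0 ≤ GG p q := by
        have : 0 ≤ q ^ 4 := by positivity
        linarith
      have e1 : y ^ 2 = d * (5 * |q| * GG p q) := by
        have := congrArg abs h2
        rw [abs_neg, abs_mul, abs_mul, abs_mul, abs_of_pos hd.pos, abs_of_nonneg hGp, abs_of_nonneg (sq_nonneg y)] at this
        simpa using this
      have hq4 : q ^ 4 = |q| ^ 4 := by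
        rw [Even.pow_abs (by decide)]
      have hy2 : y ^ 2 = |y| ^ 2 := (sq_abs y).symm
      rw [hq4] at hG
      rw [hy2] at e1
      generalize |q| = a at *
      generalize |y| = c at *
      have hd1 : 1 ≤ d := hd.pos
      have ha1 : 1 ≤ a := hy1.trans hab
      have s1 : 5 * a * GG p q ≤ c ^ 2 := by
        rw [e1]
        have : 0 ≤ 5 * a * GG p q := by positivity
        nlinarith
      have s2 : 25 * a ^ 5 ≤ 16 * c ^ 2 := by
        have : 5 * a * (5 * a ^ 4) ≤ 5 * a * (16 * GG p q) := mul_le_mul_of_nonneg_left hG (by linarith)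
        nlinarith
      have s3 : c ^ 2 ≤ a ^ 2 := pow_le_pow_left₀ (by linarith) hab 2
      have s4 : a ^ 2 ≤ a ^ 5 := pow_le_pow_right₀ ha1 (by norm_num)
      have s5 : 0 < a ^ 2 := by positivity
      linarith
    exact ih _ (hk ▸ hlt) _ _ rfl hinv

theorem gold_case_five {w c : ℤ} (hc : c = 1 ∨ c = 3) (hw : w ≠ 0) (a N : ℤ)
    (hcom : ∀ r : ℕ, r.Prime → (r : ℤ) ∣ a → (r : ℤ) ∣ N → r = 3 ∨ r = 7)
    (h : a * (a ^ 4 - 5 * a ^ 2 * N + 5 * N ^ 2) = c * w ^ 5) (ha5 : (5 : ℤ) ∣ a) : False := by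
  have hp5 : Prime (5 : ℤ) := by norm_num
  have hN5 : ¬ (5 : ℤ) ∣ N := by
    intro h5
    have := hcom 5 (by norm_num) (by exact_mod_cast ha5) (by exact_mod_cast h5)
    omega
  obtain ⟨a1, rfl⟩ := ha5
  have hcS := Sm_c hc
  have hw5 : (5 : ℤ) ∣ w := by
    have : (5 : ℤ) ∣ c * w ^ 5 := by rw [← h]; exact (Dvd.intro _ rfl).mul_right _
    exact hp5.dvd_of_dvd_pow ((hp5.dvd_or_dvd this).resolve_left hcS.not_five)
  obtain ⟨w1, rfl⟩ := hw5
  have hw1 : w1 ≠ 0 := by rintro rfl; exact hw (by ring)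
  obtain ⟨H, hH⟩ : ∃ H, H = N ^ 2 - 25 * a1 ^ 2 * N + 125 * a1 ^ 4 := ⟨_, rfl⟩
  have h1 : a1 * H = 125 * (c * w1 ^ 5) := by
    have : 25 * (a1 * H) = 25 * (125 * (c * w1 ^ 5)) := by rw [hH]; linear_combination h
    linarith
  have hH5 : ¬ (5 : ℤ) ∣ H := by
    intro h5
    apply hN5
    apply hp5.dvd_of_dvd_pow (n := 2)
    have := dvd_sub h5 (Dvd.intro (-5 * a1 ^ 2 * N + 25 * a1 ^ 4) rfl : (5 : ℤ) ∣ 5 * (-5 * a1 ^ 2 * N + 25 * a1 ^ 4))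
    rw [hH] at this
    ring_nf at this
    exact this
  have h125 : (125 : ℤ) ∣ a1 := by
    have hco : IsCoprime (125 : ℤ) H := by
      have : IsCoprime ((5 : ℤ) ^ 3) H := IsCoprime.pow_left ((Prime.coprime_iff_not_dvd hp5).2 hH5)
      norm_num at this
      exact this
    exact hco.dvd_of_dvd_mul_right ⟨c * w1 ^ 5, h1⟩
  obtain ⟨a2, rfl⟩ := h125
  have h2 : a2 * H = c * w1 ^ 5 := by linarith
  have hne : a2 * H ≠ 0 := by
    rw [h2]; exact mul_ne_zero hcS.pos.ne' (pow_ne_zero _ hw1)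
  have hHc : ∀ r : ℕ, r.Prime → (r : ℤ) ∣ a2 → (r : ℤ) ∣ H → r = 3 ∨ r = 7 := by
    intro r hr k1 k2
    apply hcom r hr ((k1.mul_left 125).mul_left 5)
    apply (Nat.prime_iff_prime_int.1 hr).dvd_of_dvd_pow (n := 2)
    have := dvd_add k2 (k1.mul_right (25 * 125 ^ 2 * a2 * N - 125 * 125 ^ 4 * a2 ^ 3))
    rw [hH] at this
    ring_nf at this
    exact this
  obtain ⟨DH, v, hDH, hv⟩ := Z_decomp (right_ne_zero_of_mul hne) (left_ne_zero_of_mul hne) hw1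
    (by rw [← h2]; ring : H * a2 = c * w1 ^ 5) (by
      intro r hr h3 h7 hrH
      exact ⟨fun hrD => by rcases hcS.prime hr hrD with h | h <;> contradiction,
        fun hra => by rcases hHc r hr hra hrH with h | h <;> contradiction⟩)
  obtain ⟨Da, u, hDa, hu⟩ := Z_decomp (left_ne_zero_of_mul hne) (right_ne_zero_of_mul hne) hw1 h2 (by
      intro r hr h3 h7 hra
      exact ⟨fun hrD => by rcases hcS.prime hr hrD with h | h <;> contradiction,
        fun hrH => by rcases hHc r hr hra hrH with h | h <;> contradiction⟩)
  have hu0 : u ≠ 0 := by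
    rintro rfl
    apply left_ne_zero_of_mul hne; rw [hu]; ring
  have hA5 : ¬ (5 : ℤ) ∣ N - 15 * (125 * a2) ^ 2 := by
    intro h5
    exact hN5 ((dvd_sub_left ⟨3 * (125 * a2) ^ 2, by ring⟩).1 h5)
  have hAB : ∀ r : ℕ, r.Prime → (r : ℤ) ∣ N - 15 * (125 * a2) ^ 2 → (r : ℤ) ∣ 5 * (125 * a2) ^ 2 → r = 3 ∨ r = 7 := by
    intro r hr k1 k2
    have hrI := Nat.prime_iff_prime_int.1 hr
    apply hcom r hr
    · rcases hrI.dvd_or_dvd k2 with k | k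
      · exact k.mul_right _
      · exact (hrI.dvd_of_dvd_pow k).mul_left _
    · have := dvd_add k1 (k2.mul_left 3)
      ring_nf at this
      exact this
  obtain ⟨d, p, q, hd, e1, e2⟩ := E_key (A := N - 15 * (125 * a2) ^ 2) (B := 5 * (125 * a2) ^ 2) (C := DH) (w := v)
    (Dvd.intro _ rfl) hA5 hDH (by rw [← hv, hH]; ring) hAB
  rw [e1] at hA5
  rw [e1, e2] at hAB
  have hT : d * (q * GG p q) = 5 * (Da * Da) * (5 * u ^ 2) ^ 5 := by
    have : 5 * (d * (q * GG p q)) = 5 * (5 * (Da * Da) * (5 * u ^ 2) ^ 5) := by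
      calc 5 * (d * (q * GG p q)) = d * (5 * q * GG p q) := by ring
        _ = 5 * (125 * a2) ^ 2 := e2.symm
        _ = _ := by rw [hu]; ring
    linarith
  exact descent _ _ _ rfl (descent_step hd (hDa.mul hDa) (mul_ne_zero (by norm_num) (pow_ne_zero 2 hu0)) hT hA5 hAB)


/-- residue check modulo 25 -/
def m25 (i j l s c : ℕ) : Bool :=
  !((c == 1 || c == 3) && !(i == 0) &&
    (((i : ℤ) ^ 5 - 5 * (i ^ 3 * j) + 5 * (i * j ^ 2) - c * l ^ 5) % 25 == 0) &&
    (((21 : ℤ) * s ^ 2 - i ^ 2 + 4 * j) % 5 == 0)) || (j == 0 && c == 1)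

theorem m25_all : ∀ i : ℕ, i < 5 → ∀ j : ℕ, j < 5 → ∀ l : ℕ, l < 5 → ∀ s : ℕ, s < 5 →
    ∀ c : ℕ, c < 4 → m25 i j l s c = true := by
  decide +kernel

theorem mod25_check (i : ℕ) (hi : i < 5) (j : ℕ) (hj : j < 5) (l : ℕ) (hl : l < 5) (s : ℕ) (hs : s < 5)
    (c : ℕ) (hc : c < 4) (h1 : (c == 1 || c == 3) = true) (h2 : i ≠ 0)
    (h3 : (((i : ℤ) ^ 5 - 5 * (i ^ 3 * j) + 5 * (i * j ^ 2) - c * l ^ 5) % 25 == 0) = true)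
    (h4 : (((21 : ℤ) * s ^ 2 - i ^ 2 + 4 * j) % 5 == 0) = true) : j = 0 ∧ c = 1 := by
  have h := m25_all i hi j hj l hl s hs c hc
  have h2' : (i == 0) = false := by simpa using h2
  unfold m25 at h
  rw [h1, h2', h3, h4] at h
  simpa using h

theorem mod25 {a N n w c : ℤ} (hc : c = 1 ∨ c = 3) (h21 : 21 * n ^ 2 = a ^ 2 - 4 * N)
    (h : a * (a ^ 4 - 5 * a ^ 2 * N + 5 * N ^ 2) = c * w ^ 5) (ha5 : ¬ (5 : ℤ) ∣ a) :
    (5 : ℤ) ∣ N ∧ c = 1 := by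
  have res : ∀ x : ℤ, ∃ (i : ℕ) (y : ℤ), i < 5 ∧ x = i + 5 * y := by
    intro x
    refine ⟨(x % 5).toNat, x / 5, by omega, by omega⟩
  obtain ⟨i, a', hi, ea⟩ := res a
  obtain ⟨j, N', hj, eN⟩ := res N
  obtain ⟨l, w', hl, ew⟩ := res w
  obtain ⟨s, n', hs, en⟩ := res n
  obtain ⟨c', hc4, ec⟩ : ∃ c' : ℕ, c' < 4 ∧ c = c' := ⟨c.toNat, by omega, by omega⟩
  have p5 : ∀ x y : ℤ, ∃ z, (x + 5 * y) ^ 5 = x ^ 5 + 25 * z := fun x y =>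
    ⟨x ^ 4 * y + 10 * x ^ 3 * y ^ 2 + 50 * x ^ 2 * y ^ 3 + 125 * x * y ^ 4 + 125 * y ^ 5, by ring⟩
  have e1 : (((i : ℤ) ^ 5 - 5 * (i ^ 3 * j) + 5 * (i * j ^ 2) - c' * l ^ 5) % 25 == 0) = true := by
    rw [beq_iff_eq]
    apply Int.emod_eq_zero_of_dvd
    obtain ⟨z1, hz1⟩ := p5 i a'
    obtain ⟨z2, hz2⟩ := p5 l w'
    obtain ⟨z3, hz3⟩ : ∃ z, a ^ 3 * N = i ^ 3 * j + 5 * z :=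
      ⟨i ^ 3 * N' + (3 * i ^ 2 * a' + 15 * i * a' ^ 2 + 25 * a' ^ 3) * (j + 5 * N'), by rw [ea, eN]; ring⟩
    obtain ⟨z4, hz4⟩ : ∃ z, a * N ^ 2 = i * j ^ 2 + 5 * z :=
      ⟨a' * (j + 5 * N') ^ 2 + i * (2 * j * N' + 5 * N' ^ 2), by rw [ea, eN]; ring⟩
    rw [← ea] at hz1
    rw [← ew] at hz2
    rw [ec] at h
    exact ⟨-z1 + z3 - z4 + c' * z2, by linear_combination h - hz1 + 5 * hz3 - 5 * hz4 + (c' : ℤ) * hz2⟩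
  have e2 : (((21 : ℤ) * s ^ 2 - i ^ 2 + 4 * j) % 5 == 0) = true := by
    rw [beq_iff_eq]
    apply Int.emod_eq_zero_of_dvd
    rw [ea, eN, en] at h21
    exact ⟨-21 * (2 * s * n' + 5 * n' ^ 2) + (2 * i * a' + 5 * a' ^ 2) - 4 * N', by linear_combination h21⟩
  have := mod25_check i hi j hj l hl s hs c' hc4 (by
    rcases hc with hc | hc
    · have : c' = 1 := by omega
      subst this; rfl
    · have : c' = 3 := by omega
      subst this; rfl) (by rintro rfl; exact ha5 ⟨a', by rw [ea]; simp⟩) e1 e2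
  obtain ⟨rfl, rfl⟩ := this
  exact ⟨⟨N', by rw [eN]; simp⟩, by simpa using ec⟩

theorem mod11_check : ∀ p q : ZMod 11,
    let X := p ^ 5 + 10 * p ^ 3 * q ^ 2 + 10 * p ^ 2 * q ^ 3 + 10 * p * q ^ 4 + 3 * q ^ 5
    let Y := 5 * q * (p ^ 4 + 2 * p ^ 3 * q + 4 * p ^ 2 * q ^ 2 + 3 * p * q ^ 3 + q ^ 4)
    (X - 2 * Y = 0 ∨ X - 2 * Y = 1 ∨ X - 2 * Y = -1) → Y = 0 := by
  decide +kernel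

theorem mod11_a : ∀ d x r : ZMod 11, d ≠ 0 → r ^ 10 = d ^ 5 * x → x = 0 ∨ x = 1 ∨ x = -1 := by
  have h1 : ∀ r : ZMod 11, r ^ 10 = 0 ∨ r ^ 10 = 1 := by decide +kernel
  have h2 : ∀ d : ZMod 11, d ≠ 0 → d ^ 5 = 1 ∨ d ^ 5 = -1 := by decide +kernel
  intro d x r hd h
  rcases h1 r with k | k <;> rcases h2 d hd with l | l <;> rw [k, l] at h
  · left; simpa using h.symm
  · left; simpa using h.symm
  · right; left; simpa using h.symm
  · right; right; rw [h]; ring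

theorem mod11_b : ∀ n a : ZMod 11, 21 * n ^ 2 = a ^ 2 → a = 0 := by decide +kernel

theorem gold_case_one {w n a N : ℤ} (hw : w ≠ 0)
    (hcom : ∀ r : ℕ, r.Prime → (r : ℤ) ∣ a → (r : ℤ) ∣ N → r = 3 ∨ r = 7)
    (h21 : 21 * n ^ 2 = a ^ 2 - 4 * N)
    (h : a * (a ^ 4 - 5 * a ^ 2 * N + 5 * N ^ 2) = w ^ 5) (ha5 : ¬ (5 : ℤ) ∣ a) (hN5 : (5 : ℤ) ∣ N) : False := by
  have hp5 : Prime (5 : ℤ) := by norm_num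
  have hw5 : (1 : ℤ) * w ^ 5 ≠ 0 := by rw [one_mul]; exact pow_ne_zero _ hw
  obtain ⟨H, hH⟩ : ∃ H, H = a ^ 4 - 5 * a ^ 2 * N + 5 * N ^ 2 := ⟨_, rfl⟩
  rw [← hH] at h
  have hne : a * H ≠ 0 := by rw [h]; exact pow_ne_zero _ hw
  have hH5 : ¬ (5 : ℤ) ∣ H := by
    intro h5
    apply ha5
    apply hp5.dvd_of_dvd_pow (n := 4)
    have := dvd_add h5 (Dvd.intro (a ^ 2 * N - N ^ 2) rfl : (5 : ℤ) ∣ 5 * (a ^ 2 * N - N ^ 2))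
    rw [hH] at this
    ring_nf at this
    exact this
  have hS1 : Sm 1 := ⟨0, 0, by norm_num⟩
  obtain ⟨DH, v, hDH, hv⟩ := Z_decomp (right_ne_zero_of_mul hne) (left_ne_zero_of_mul hne) hw
    (by rw [one_mul, ← h]; ring : H * a = 1 * w ^ 5) (by
      intro r hr h3 h7 hrH
      refine ⟨fun hrD => by rcases hS1.prime hr hrD with h | h <;> contradiction, fun hra => ?_⟩
      have hrI := Nat.prime_iff_prime_int.1 hr
      have h5N : (r : ℤ) ∣ 5 * N ^ 2 := by
        have := dvd_sub hrH (hra.mul_right (a ^ 3 - 5 * a * N))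
        rw [hH] at this
        ring_nf at this ⊢
        exact this
      rcases hrI.dvd_or_dvd h5N with k | k
      · have k' : r ∣ 5 := by exact_mod_cast k
        have := (Nat.prime_dvd_prime_iff_eq hr (by norm_num)).1 k'
        subst this
        exact hH5 (by exact_mod_cast hrH)
      · rcases hcom r hr hra (hrI.dvd_of_dvd_pow k) with h | h <;> contradiction)
  have hA5 : ¬ (5 : ℤ) ∣ a ^ 2 - 2 * N := by
    intro h5
    exact ha5 (hp5.dvd_of_dvd_pow ((dvd_sub_left (hN5.mul_left 2)).1 h5))
  have hAB : ∀ r : ℕ, r.Prime → (r : ℤ) ∣ a ^ 2 - 2 * N → (r : ℤ) ∣ -N → r = 3 ∨ r = 7 := by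
    intro r hr k1 k2
    rw [dvd_neg] at k2
    exact hcom r hr ((Nat.prime_iff_prime_int.1 hr).dvd_of_dvd_pow ((dvd_sub_left (k2.mul_left 2)).1 k1)) k2
  obtain ⟨d, p, q, hd, e1, e2⟩ := E_key (A := a ^ 2 - 2 * N) (B := -N) (C := DH) (w := v)
    (by rw [dvd_neg]; exact hN5) hA5 hDH (by rw [← hv, hH]; ring) hAB
  obtain ⟨ν, hν⟩ : ∃ ν, ν = p ^ 2 + p * q - q ^ 2 := ⟨_, rfl⟩
  have hHd : H = d ^ 2 * ν ^ 5 := by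
    have : H = (a ^ 2 - 2 * N) ^ 2 + (a ^ 2 - 2 * N) * (-N) - (-N) ^ 2 := by rw [hH]; ring
    rw [this, e1, e2, hν]
    unfold GX GG
    ring
  have hν0 : ν ≠ 0 := by
    rintro rfl
    apply right_ne_zero_of_mul hne; rw [hHd]; ring
  have hνw : ν ∣ w := by
    rw [← Int.pow_dvd_pow_iff (n := 5) (by norm_num)]
    exact ⟨a * d ^ 2, by rw [← h, hHd]; ring⟩
  obtain ⟨r, hr⟩ := hνw
  have hr5 : a * d ^ 2 = r ^ 5 := by
    apply mul_right_cancel₀ (pow_ne_zero 5 hν0)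
    rw [hHd, hr] at h
    linear_combination h
  have hr10 : r ^ 10 = d ^ 5 * (GX p q - 2 * (5 * q * GG p q)) := by
    have : r ^ 10 = d ^ 4 * a ^ 2 := by
      calc r ^ 10 = (r ^ 5) ^ 2 := by ring
        _ = _ := by rw [← hr5]; ring
    rw [this]
    linear_combination (d ^ 4) * e1 - 2 * d ^ 4 * e2
  have c11 : ∀ x : ℤ, (11 : ℤ) ∣ x ↔ ((x : ZMod 11) = 0) := fun x => (ZMod.intCast_zmod_eq_zero_iff_dvd x 11).symm
  have hd11 : (d : ZMod 11) ≠ 0 := by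
    intro h0
    rw [← c11] at h0
    have := hd.prime (p := 11) (by norm_num) (by exact_mod_cast h0)
    omega
  have hz := congrArg (Int.cast : ℤ → ZMod 11) hr10
  push_cast at hz
  have hx := mod11_a _ _ _ hd11 hz
  have hY : (((5 * q * GG p q : ℤ)) : ZMod 11) = 0 := by
    have := mod11_check p q (by
      unfold GX GG at hx
      push_cast at hx
      exact hx)
    unfold GG
    push_cast
    exact this
  have hN11 : (11 : ℤ) ∣ N := by
    rw [← dvd_neg, e2]
    exact ((c11 _).2 hY).mul_left _
  have ha11 : (11 : ℤ) ∣ a := by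
    rw [c11] at hN11 ⊢
    apply mod11_b (n : ZMod 11)
    have := congrArg (Int.cast : ℤ → ZMod 11) h21
    push_cast at this
    rw [this, hN11]; ring
  have := hcom 11 (by norm_num) (by exact_mod_cast ha11) (by exact_mod_cast hN11)
  omega

theorem gold_case {c : ℤ} (hc : c = 1 ∨ c = 3) (m n w : ℤ) (hmn : IsCoprime m n) (hw : w ≠ 0)
    (h : 2 * XX m n + YY m n = c * w ^ 5) : False := by
  obtain ⟨a, ha⟩ : ∃ a, a = 2 * m + n := ⟨_, rfl⟩
  obtain ⟨N, hN⟩ : ∃ N, N = m ^ 2 + m * n - 5 * n ^ 2 := ⟨_, rfl⟩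
  have h21 : 21 * n ^ 2 = a ^ 2 - 4 * N := by rw [ha, hN]; ring
  have h' : a * (a ^ 4 - 5 * a ^ 2 * N + 5 * N ^ 2) = c * w ^ 5 := by
    rw [← h, ha, hN]; unfold XX YY; ring
  have hcom : ∀ r : ℕ, r.Prime → (r : ℤ) ∣ a → (r : ℤ) ∣ N → r = 3 ∨ r = 7 := by
    intro r hr h1 h2
    have hrI := Nat.prime_iff_prime_int.1 hr
    have hn : ¬ (r : ℤ) ∣ n := by
      intro hn
      have hm : (r : ℤ) ∣ m ^ 2 := by
        have : m ^ 2 = N - n * (m - 5 * n) := by rw [hN]; ring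
        rw [this]
        exact dvd_sub h2 (hn.mul_right _)
      exact hrI.not_isUnit (hmn.isUnit_of_dvd' (hrI.dvd_of_dvd_pow hm) hn)
    have h3 : (r : ℤ) ∣ 21 * n ^ 2 := by
      rw [h21]
      exact dvd_sub (dvd_pow h1 (by norm_num)) (h2.mul_left 4)
    rcases hrI.dvd_or_dvd h3 with k | k
    · have hS : Sm 21 := ⟨1, 1, by norm_num⟩
      exact hS.prime hr k
    · exact absurd (hrI.dvd_of_dvd_pow k) hn
  by_cases ha5 : (5 : ℤ) ∣ a
  · exact gold_case_five hc hw a N hcom h' ha5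
  · obtain ⟨hN5, rfl⟩ := mod25 hc h21 h' ha5
    rw [one_mul] at h'
    exact gold_case_one hw hcom h21 h' ha5 hN5

theorem twisted_curve {c : ℤ} (hc : c = 1 ∨ c = 3) (x t : ℚ) (h : 21 * t ^ 2 = 4 * x ^ 5 + c ^ 2) : False := by
  obtain ⟨m, n, w, hmn, hw, h0 | h1 | h2⟩ := K_final hc x t h
  · exact gold_case hc m n w hmn hw h0
  · exact M_case1 hc m n w hmn h1
  · exact M_case2 hc m n w hmn h2

theorem no_rational_points_genus2_curves :
    (¬ ∃ x y : ℚ, y ^ 2 = 84 * x ^ 5 + 21) ∧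
    (¬ ∃ x y : ℚ, y ^ 2 = 28 * x ^ 5 + 15309) := by
  constructor
  · rintro ⟨x, y, h⟩
    exact twisted_curve (Or.inl rfl) x (y / 21) (by push_cast; linear_combination h / 21)
  · rintro ⟨x, y, h⟩
    exact twisted_curve (Or.inr rfl) (x / 3) (y / 189) (by push_cast; linear_combination h * 21 / 189 ^ 2)
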